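/- Let B > 0, α > 1, and C > 0. There exist δ > 0 and ε = ε(δ) > 0 such that the following holds: for each open set V ⊆ ℂ containing [-1,1] there exists N = N(B, α, C, V) ≥ 1 such that if (φ, t) is a unimodal pair that is M-times renormalizable with combinatorics bounded by B for some M > N, with critical order α̃ satisfying |α - α̃| < δ, if φ extends to a univalent map on V which is real on the real line, and |φ|_{C^3([-1,1])} ≤ C, then for all N ≤ n < M the maps φ_0^n = Z_{φ^{-1}(I_1^n)}(φ), q_j^n = Z_{I_j^n}(q_t) and φ_j^n = Z_{φ^{-1}(I_{j+1}^n)}(φ), for j = 1, ..., q_n - 1, have univalent extensions to maps defined on the ε-stadium D_ε. -/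

import Mathlib

noncomputable section

/-- The interval `[-1,1]` viewed as a subset of `ℂ`. -/
def realSeg : Set ℂ := (fun x : ℝ => (x : ℂ)) '' Set.Icc (-1 : ℝ) 1

/-- The `a`-stadium: points at distance `< a` from `[-1,1]`. -/
def stadium (a : ℝ) : Set ℂ := {z : ℂ | Metric.infDist z realSeg < a}

/-- The unimodal maps `q_t(x) = -2t|x|^α + 2t - 1` (real critical order `α`). -/
def qmapR (α t x : ℝ) : ℝ := -2 * t * |x| ^ α + 2 * t - 1

/-- A cycle of period `q` for a unimodal map `f : [-1,1] → [-1,1]`: closed intervals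
`I_1, …, I_q ⊆ [-1,1]` (here `0`-indexed, interval `k` being `I_{k+1} = [a k, b k]`) with
pairwise disjoint interiors, a repelling periodic point `p` with central interval
`I_q = [-|p|, |p|]`, such that `f` maps `I_i` diffeomorphically onto `I_{i+1}` for
`i = 1, …, q-1`, and `f(I_q) ⊆ I_1` with `f(p) ∈ ∂I_1`. -/
structure RenCycle (f : ℝ → ℝ) where
  q : ℕ
  one_lt : 1 < q
  a : ℕ → ℝ
  b : ℕ → ℝ
  lt : ∀ k < q, a k < b k
  sub : ∀ k < q, Set.Icc (a k) (b k) ⊆ Set.Icc (-1 : ℝ) 1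
  p : ℝ
  hp : p ∈ Set.Ioo (-1 : ℝ) 1
  periodic : f^[q] p = p
  repelling : 1 < |deriv (f^[q]) p|
  central_a : a (q - 1) = -|p|
  central_b : b (q - 1) = |p|
  maps_img : ∀ k, k + 1 < q → f '' Set.Icc (a k) (b k) = Set.Icc (a (k + 1)) (b (k + 1))
  maps_inj : ∀ k, k + 1 < q → Set.InjOn f (Set.Icc (a k) (b k))
  ret : f '' Set.Icc (a (q - 1)) (b (q - 1)) ⊆ Set.Icc (a 0) (b 0)
  ret_p : f p = a 0 ∨ f p = b 0
  disj : ∀ k < q, ∀ l < q, k ≠ l →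
    Set.Ioo (a k) (b k) ∩ Set.Ioo (a l) (b l) = ∅

/-- `(φ, t)` is a unimodal pair: `t ∈ [0,1]` and `φ` is an orientation-preserving `C¹`
diffeomorphism of `[-1,1]` fixing `-1` and `1`. -/
def UnimodalPair (φ : ℝ → ℝ) (t : ℝ) : Prop :=
  t ∈ Set.Icc (0 : ℝ) 1 ∧ φ (-1) = -1 ∧ φ 1 = 1 ∧
  StrictMonoOn φ (Set.Icc (-1 : ℝ) 1) ∧
  ContDiffOn ℝ 1 φ (Set.Icc (-1 : ℝ) 1) ∧
  φ '' Set.Icc (-1 : ℝ) 1 = Set.Icc (-1 : ℝ) 1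

/-- `|φ|_{C³([-1,1])} ≤ C`. -/
def C3Bound (φ : ℝ → ℝ) (C : ℝ) : Prop :=
  ∀ k ≤ 3, ∀ x ∈ Set.Icc (-1 : ℝ) 1,
    |iteratedDerivWithin k φ (Set.Icc (-1 : ℝ) 1) x| ≤ C

/-- A tower of nested renormalization cycles for `f`, witnessing that `f` is `M`-times
renormalizable with combinatorics bounded by `B`:  `T n` is the cycle of the `n`-th
renormalization (`1 ≤ n ≤ M`), each interval of `T (n+1)` is contained in an interval of
`T n`, the periods `q_n` satisfy `q_n ∣ q_{n+1}`, `q_n < q_{n+1}` and `q_{n+1}/q_n ≤ B`. -/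
def IsRenTower (f : ℝ → ℝ) (B : ℝ) (M : ℕ) (T : ℕ → RenCycle f) : Prop :=
  ∀ n, 1 ≤ n → n < M →
    (T n).q ∣ (T (n + 1)).q ∧ (T n).q < (T (n + 1)).q ∧
    ((T (n + 1)).q : ℝ) ≤ B * (T n).q ∧
    ∀ i < (T (n + 1)).q, ∃ j < (T n).q,
      Set.Icc ((T (n + 1)).a i) ((T (n + 1)).b i) ⊆ Set.Icc ((T n).a j) ((T n).b j)

/-- `A` is a (nonconstant) real affine map. -/
def IsAffine (A : ℝ → ℝ) : Prop := ∃ c d : ℝ, c ≠ 0 ∧ A = fun x => c * x + d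

/-- `G` is a univalent extension to the `ε`-stadium of the zoom `Z_src(g)`:
there are affine bijections `A : src → [-1,1]` and `B : g(src) → [-1,1]` with
`G ∘ A = B ∘ g` on `src`, and `G` is holomorphic and injective on `D_ε`. -/
def IsZoomExtOf (G : ℂ → ℂ) (g : ℝ → ℝ) (src : Set ℝ) (ε : ℝ) : Prop :=
  ∃ A B : ℝ → ℝ, IsAffine A ∧ A '' src = Set.Icc (-1 : ℝ) 1 ∧
    IsAffine B ∧ B '' (g '' src) = Set.Icc (-1 : ℝ) 1 ∧
    DifferentiableOn ℂ G (stadium ε) ∧ Set.InjOn G (stadium ε) ∧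
    ∀ y ∈ src, G ((A y : ℝ) : ℂ) = ((B (g y) : ℝ) : ℂ)

/-- The zoom `Z_src(g)` admits a univalent extension to the `ε`-stadium. -/
def UnivZoomExt (g : ℝ → ℝ) (src : Set ℝ) (ε : ℝ) : Prop :=
  ∃ G : ℂ → ℂ, IsZoomExtOf G g src ε

/-!
The zooms of `φ` extend because `φ` extends to `V`: once the intervals of the cycle are short
compared with the distance from `[-1, 1]` to the complement of `V`, the rescaled `ε`-stadium lies in
`V`. The zoom of `q_t` on an interval extends because the power map is univalent on a thin sector
around the half-line, as soon as the length of the interval is at most a fixed multiple of its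
distance to the critical point `0`. So it remains to show that the intervals of the `n`-th cycle
become short at a rate depending only on the critical exponent, `C` and `V`, and that for large `n`
their relative distance to `0` is bounded in terms of the critical exponent alone.

*Distortion.* Near a point of `[-1, 1]` the univalent extension of `φ` omits a slit contained in
`[-1, 1]`, since the points of the slit already have their preimages elsewhere on `[-1, 1]`. Mapping
the complement of the slit into the disc and applying a Harnack inequality there bounds the
derivative of `φ` below along chains of discs, starting from a point where it is `1`. Together with
the `C³` bound, `φ` decreases cross ratios by at most a factor exponential in the square of the size
of the image, while power maps do not decrease them.

*Space.* If a deeper cycle is nested inside a cycle, then `0` lies between the returns of `0` and of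
the boundary point of the central interval, so neighbourhoods of an interval that surround no other
hull of these two orbits can be pulled back along the cycle without meeting `0`. The pulled back
neighbourhoods cover each point a bounded number of times, so the accumulated distortion is bounded,
and is close to `1` if the intervals are short. The shortest hull has space around it because its
neighbours are longer; this space is transported to the first interval, through the critical point
to the central interval, and from there to all intervals. An interval with space around it is
definitely shorter than the interval of the previous cycle containing it, which gives geometric
decay with a rate depending on `V`. From some level on the distortion is therefore at most `2`, and
the same argument yields space with constants depending on the critical exponent alone.
-/

open Metric Set

/-! ### A Harnack inequality for univalent functions -/

lemma exists_eq_mul_exp_of_ne_zero {h : ℂ → ℂ} {c : ℂ} {R : ℝ} (hR : 0 < R)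
    (hd : DifferentiableOn ℂ h (ball c R)) (hne : ∀ z ∈ ball c R, h z ≠ 0) :
    ∃ l : ℂ → ℂ, DifferentiableOn ℂ l (ball c R) ∧ l c = 0 ∧
      ∀ z ∈ ball c R, h z = h c * Complex.exp (l z) := by
  have hlogDeriv : DifferentiableOn ℂ (fun z => deriv h z / h z) (ball c R) :=
    (hd.deriv isOpen_ball).div hd hne
  obtain ⟨l, hlc, hl⟩ := hlogDeriv.isExactOn_ball.with_val_at c 0
  have hder : ∀ z ∈ ball c R, HasDerivAt (fun z => h z * Complex.exp (-l z)) 0 z := by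
    intro z hz
    have hhz := (hd.differentiableAt (isOpen_ball.mem_nhds hz)).hasDerivAt
    have := hne z hz
    exact (hhz.mul (hl z hz).neg.cexp).congr_deriv (by field_simp; ring)
  refine ⟨l, fun z hz => (hl z hz).differentiableAt.differentiableWithinAt, hlc, fun z hz => ?_⟩
  have hconst := isOpen_ball.is_const_of_deriv_eq_zero (convex_ball c R).isPreconnected
    (fun w hw => (hder w hw).differentiableAt.differentiableWithinAt)
    (fun w hw => (hder w hw).deriv) hz (mem_ball_self hR)
  simp only [hlc, neg_zero, Complex.exp_zero, mul_one] at hconst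
  rw [← hconst, mul_assoc, ← Complex.exp_add, neg_add_cancel, Complex.exp_zero, mul_one]

/-- Lower bound in the Harnack inequality for a nonvanishing function of modulus at most `A` on a
disc, in terms of its modulus `μ` at the centre. The power and the factor `e` come from the
Borel–Carathéodory bound `2 * (log (A / μ) + 1)` for the logarithm on the half disc. -/
def harnackBound (A μ : ℝ) : ℝ := μ ^ 3 / (A * Real.exp 1) ^ 2

lemma harnackBound_pos {A μ : ℝ} (hA : 0 < A) (hμ : 0 < μ) : 0 < harnackBound A μ := by
  unfold harnackBound; positivity

lemma harnackBound_mono {A μ ν : ℝ} (hμ : 0 ≤ μ) (hμν : μ ≤ ν) :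
    harnackBound A μ ≤ harnackBound A ν := by
  unfold harnackBound; gcongr

lemma harnackBound_eq_mul_exp {A μ : ℝ} (hA : 0 < A) (hμ : 0 < μ) :
    harnackBound A μ = μ * Real.exp (-(2 * (Real.log (A / μ) + 1))) := by
  have hexp : Real.exp (2 * (Real.log (A / μ) + 1)) = (A * Real.exp 1 / μ) ^ 2 := by
    rw [two_mul, Real.exp_add, Real.exp_add, Real.exp_log (div_pos hA hμ)]
    ring
  rw [Real.exp_neg, hexp, harnackBound]
  field_simp

lemma harnackBound_norm_le_norm {h : ℂ → ℂ} {c z : ℂ} {R A : ℝ} (hR : 0 < R)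
    (hd : DifferentiableOn ℂ h (ball c R)) (hne : ∀ w ∈ ball c R, h w ≠ 0)
    (hA : ∀ w ∈ ball c R, ‖h w‖ ≤ A) (hz : dist z c ≤ R / 2) :
    harnackBound A ‖h c‖ ≤ ‖h z‖ := by
  have hcR : c ∈ ball c R := mem_ball_self hR
  have hzR : z ∈ ball c R := mem_ball.mpr (by linarith)
  have hμ : 0 < ‖h c‖ := norm_pos_iff.mpr (hne c hcR)
  have hA0 : 0 < A := hμ.trans_le (hA c hcR)
  obtain ⟨l, hld, hlc, hl⟩ := exists_eq_mul_exp_of_ne_zero hR hd hne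
  have hnorm : ∀ w ∈ ball c R, ‖h w‖ = ‖h c‖ * Real.exp (l w).re := fun w hw => by
    rw [hl w hw, norm_mul, Complex.norm_exp]
  set L := Real.log (A / ‖h c‖) + 1 with hL
  have hL0 : 0 < L := by
    have := Real.log_nonneg ((one_le_div hμ).mpr (hA c hcR))
    positivity
  have hre : ∀ w ∈ ball c R, (l w).re ≤ L := by
    intro w hw
    have : Real.exp (l w).re ≤ A / ‖h c‖ := by
      rw [le_div_iff₀ hμ, mul_comm, ← hnorm w hw]
      exact hA w hw
    linarith [(Real.le_log_iff_exp_le (div_pos hA0 hμ)).mpr this]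
  have hlz : ‖l z‖ ≤ 2 * L := by
    have hmaps : MapsTo (c + ·) (ball 0 R) (ball c R) := fun w hw => by
      simpa [mem_ball, dist_eq_norm] using hw
    have hBC := Complex.borelCaratheodory hL0
      (hld.comp (by fun_prop) hmaps) (fun w hw => hre _ (hmaps hw)) hR
      (show z - c ∈ ball 0 R by simpa [mem_ball, dist_eq_norm] using hzR)
    rw [dist_eq_norm] at hz
    simp only [Function.comp_apply, add_sub_cancel, add_zero, hlc, norm_zero, zero_mul, zero_div]
      at hBC
    refine hBC.trans ((div_le_iff₀ (by linarith)).mpr ?_)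
    gcongr
    linarith
  rw [hnorm z hzR, harnackBound_eq_mul_exp hA0 hμ]
  gcongr
  linarith [neg_le_of_abs_le (Complex.abs_re_le_norm (l z))]

lemma harnackBound_norm_deriv_le_norm_deriv {G : ℂ → ℂ} {c z : ℂ} {R A : ℝ} (hR : 0 < R)
    (hd : DifferentiableOn ℂ G (ball c R)) (hinj : InjOn G (ball c R))
    (hA : ∀ w ∈ ball c R, ‖deriv G w‖ ≤ A) (hz : dist z c ≤ R / 4) :
    harnackBound A ‖deriv G c‖ ≤ ‖deriv G z‖ := by
  have hshift : ∀ {h : ℂ}, ‖h‖ < R / 2 → ∀ {w}, w ∈ ball c (R / 2) → w + h ∈ ball c R := by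
    intro h hh w hw
    rw [mem_ball, dist_eq_norm] at hw ⊢
    calc ‖w + h - c‖ = ‖(w - c) + h‖ := by ring_nf
      _ ≤ ‖w - c‖ + ‖h‖ := norm_add_le _ _
      _ < R := by linarith
  have hsub : ball c (R / 2) ⊆ ball c R := ball_subset_ball (by linarith)
  -- Harnack applies to difference quotients with a fixed increment, nonvanishing by injectivity.
  have hquot : ∀ h : ℂ, h ≠ 0 → ‖h‖ < R / 2 →
      harnackBound A ‖h⁻¹ • (G (c + h) - G c)‖ ≤ ‖h⁻¹ • (G (z + h) - G z)‖ := by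
    intro h h0 hh
    refine harnackBound_norm_le_norm (h := fun w => h⁻¹ • (G (w + h) - G w)) (half_pos hR)
      (((hd.comp (by fun_prop) fun w hw => hshift hh hw).sub (hd.mono hsub)).const_smul h⁻¹)
      (fun w hw => ?_) (fun w hw => ?_) (by linarith)
    · refine smul_ne_zero (inv_ne_zero h0) (sub_ne_zero.mpr fun heq => h0 ?_)
      simpa using hinj (hshift hh hw) (hsub hw) heq
    · have := (convex_ball c R).norm_image_sub_le_of_norm_deriv_le
        (fun v hv => hd.differentiableAt (isOpen_ball.mem_nhds hv)) hA (hsub hw) (hshift hh hw)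
      rw [norm_smul, norm_inv, inv_mul_le_iff₀ (norm_pos_iff.mpr h0), mul_comm]
      simpa using this
  have hlim : ∀ w ∈ ball c R, Filter.Tendsto (fun h => ‖h⁻¹ • (G (w + h) - G w)‖)
      (nhdsWithin 0 {0}ᶜ) (nhds ‖deriv G w‖) := fun w hw =>
    (hd.differentiableAt (isOpen_ball.mem_nhds hw)).hasDerivAt.tendsto_slope_zero.norm
  refine le_of_tendsto_of_tendsto
    (((hlim c (mem_ball_self hR)).pow 3).div_const _) (hlim z (mem_ball.mpr (by linarith))) ?_
  filter_upwards [self_mem_nhdsWithin,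
    nhdsWithin_le_nhds (ball_mem_nhds (0 : ℂ) (half_pos hR))] with h h0 hh
  exact hquot h h0 (by simpa using hh)

/-! ### Univalent functions omitting a slit -/

/-- The slit `[1/2, 1]` in the complex plane. -/
def slit : Set ℂ := (fun x : ℝ => (x : ℂ)) '' Icc (1 / 2) 1

/-- A conformal map of the complement of the slit `[1/2, 1]` into the unit disc: a Möbius map sends
the slit to the negative axis, the square root maps to the right half-plane, and `ζ ↦ 1 / (ζ + 1)`
maps the half-plane into the disc. -/
def slitMap (w : ℂ) : ℂ := 1 / (((1 / 2 - w) / (1 - w)).sqrt + 1)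

lemma one_sub_ne_zero_of_notMem_slit {w : ℂ} (hw : w ∉ slit) : 1 - w ≠ 0 := by
  rintro h
  exact hw ⟨1, by norm_num, by simp [sub_eq_zero.mp h]⟩

lemma mobius_mem_slitPlane {w : ℂ} (hw : w ∉ slit) :
    (1 / 2 - w) / (1 - w) ∈ Complex.slitPlane := by
  have hw1 := one_sub_ne_zero_of_notMem_slit hw
  rw [Complex.mem_slitPlane_iff]
  by_contra! ⟨hre, him⟩
  set s := ((1 / 2 - w) / (1 - w)).re
  have hs : (1 / 2 - w) / (1 - w) = (s : ℂ) := Complex.ext rfl him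
  have hs1 : 0 < 1 - s := by linarith
  refine hw ⟨(1 / 2 - s) / (1 - s), ⟨?_, ?_⟩, ?_⟩
  · rw [le_div_iff₀ hs1]; linarith
  · rw [div_le_iff₀ hs1]; linarith
  · have : (1 - s : ℂ) ≠ 0 := by exact_mod_cast hs1.ne'
    rw [div_eq_iff hw1] at hs
    push_cast
    rw [div_eq_iff this]
    linear_combination hs

lemma sqrt_sq_eq_self (z : ℂ) : z.sqrt ^ 2 = z := by
  simp [Complex.sqrt]

lemma one_le_norm_sqrt_add_one (z : ℂ) : 1 ≤ ‖z.sqrt + 1‖ := by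
  have hre : 0 ≤ z.sqrt.re := by
    rw [Complex.sqrt, Complex.cpow_inv_two_re]
    positivity
  have := Complex.re_le_norm (z.sqrt + 1)
  rw [Complex.add_re, Complex.one_re] at this
  linarith

lemma sqrt_add_one_ne_zero (z : ℂ) : z.sqrt + 1 ≠ 0 :=
  norm_pos_iff.mp (one_pos.trans_le (one_le_norm_sqrt_add_one z))

lemma norm_slitMap_le_one (w : ℂ) : ‖slitMap w‖ ≤ 1 := by
  rw [slitMap, norm_div, norm_one]
  exact div_le_one_of_le₀ (one_le_norm_sqrt_add_one _) (norm_nonneg _)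

lemma hasDerivAt_slitMap {w : ℂ} (hw : w ∉ slit) :
    HasDerivAt slitMap
      (1 / (4 * (1 - w) ^ 2 * ((1 / 2 - w) / (1 - w)).sqrt *
        (((1 / 2 - w) / (1 - w)).sqrt + 1) ^ 2)) w := by
  have hw1 := one_sub_ne_zero_of_notMem_slit hw
  have hζ := mobius_mem_slitPlane hw
  have hmobius : HasDerivAt (fun w : ℂ => (1 / 2 - w) / (1 - w)) (-1 / (2 * (1 - w) ^ 2)) w :=
    (((hasDerivAt_id' w).const_sub (1 / 2)).div ((hasDerivAt_id' w).const_sub 1) hw1).congr_deriv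
      (by field_simp; ring)
  have hsqrt0 : ((1 / 2 - w) / (1 - w)).sqrt ≠ 0 := fun h => Complex.slitPlane_ne_zero hζ <| by
    rw [← sqrt_sq_eq_self ((1 / 2 - w) / (1 - w)), h]; ring
  have hsqrt' : ((1 / 2 - w) / (1 - w)) ^ (-1 / 2 : ℂ) = (((1 / 2 - w) / (1 - w)).sqrt)⁻¹ := by
    rw [show (-1 / 2 : ℂ) = -2⁻¹ by ring, Complex.cpow_neg, Complex.sqrt]
  have hsum0 := sqrt_add_one_ne_zero ((1 / 2 - w) / (1 - w))
  have hsqrt : HasDerivAt (fun w : ℂ => ((1 / 2 - w) / (1 - w)).sqrt)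
      ((((1 / 2 - w) / (1 - w)).sqrt)⁻¹ / 2 * (-1 / (2 * (1 - w) ^ 2))) w := by
    rw [← hsqrt']
    exact (Complex.hasDerivAt_sqrt hζ).comp w hmobius
  refine (((hsqrt.add_const 1).inv hsum0).congr_deriv ?_).congr_of_eventuallyEq
    (.of_forall fun _ => one_div _)
  generalize ((1 / 2 - w) / (1 - w)).sqrt = g at *
  field_simp
  norm_num

lemma injOn_slitMap : InjOn slitMap slitᶜ := by
  intro v hv w hw h
  have hv1 := one_sub_ne_zero_of_notMem_slit hv
  have hw1 := one_sub_ne_zero_of_notMem_slit hw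
  rw [slitMap, slitMap, div_eq_div_iff (sqrt_add_one_ne_zero _) (sqrt_add_one_ne_zero _), one_mul,
    one_mul, add_left_inj] at h
  have hmobius := congrArg (· ^ 2) h
  simp only [sqrt_sq_eq_self] at hmobius
  rw [div_eq_div_iff hw1 hv1] at hmobius
  linear_combination 2 * hmobius

lemma ofReal_notMem_slit {p : ℝ} (hp : p ≤ 1 / 4) : (p : ℂ) ∉ slit := by
  rintro ⟨u, hu, hup⟩
  rw [Complex.ofReal_inj] at hup
  linarith [hu.1]

lemma norm_deriv_slitMap_mem_Icc {p : ℝ} (hp : p ∈ Icc (-1 : ℝ) (1 / 4)) :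
    ‖deriv slitMap p‖ ∈ Icc (1 / 64 : ℝ) 1 := by
  have h1p : 3 / 4 ≤ 1 - p := by linarith [hp.2]
  have h1p' : 1 - p ≤ 2 := by linarith [hp.1]
  set g := √((1 / 2 - p) / (1 - p)) with hg
  have hsqrt : ((1 / 2 - p : ℂ) / (1 - p)).sqrt = (g : ℂ) := by
    have hpos : 0 ≤ (1 / 2 - p) / (1 - p) := div_nonneg (by linarith) (by linarith)
    rw [Complex.sqrt, hg, Real.sqrt_eq_rpow, Complex.ofReal_cpow hpos]
    push_cast
    norm_num
  have hg_ge : 1 / 2 ≤ g := Real.le_sqrt_of_sq_le <| by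
    rw [le_div_iff₀ (by linarith)]; linarith
  have hg_le : g ≤ 1 := Real.sqrt_le_one.mpr <| by
    rw [div_le_one (by linarith)]; linarith
  have hD : 0 < 4 * (1 - p) ^ 2 * g * (g + 1) ^ 2 := by positivity
  have hnorm : ‖deriv slitMap p‖ = 1 / (4 * (1 - p) ^ 2 * g * (g + 1) ^ 2) := by
    rw [(hasDerivAt_slitMap (ofReal_notMem_slit hp.2)).deriv, hsqrt,
      ← Real.norm_of_nonneg (one_div_pos.mpr hD).le, ← Complex.norm_real]
    push_cast
    rfl
  rw [hnorm]
  constructor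
  · refine one_div_le_one_div_of_le hD ?_
    calc 4 * (1 - p) ^ 2 * g * (g + 1) ^ 2 ≤ 4 * 2 ^ 2 * 1 * (1 + 1) ^ 2 := by gcongr
      _ = 64 := by norm_num
  · rw [div_le_one hD]
    calc (1 : ℝ) ≤ 4 * (3 / 4) ^ 2 * (1 / 2) * (1 / 2 + 1) ^ 2 := by norm_num
      _ ≤ _ := by gcongr

/-- Lower bound for the modulus of the derivative of a univalent function omitting the slit, at
distance at most `r / 8` from a point where this modulus is `μ`. -/
def derivStep (r μ : ℝ) : ℝ := harnackBound (4 / r) (μ / 64)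

lemma derivStep_pos {r μ : ℝ} (hr : 0 < r) (hμ : 0 < μ) : 0 < derivStep r μ :=
  harnackBound_pos (by positivity) (by positivity)

lemma derivStep_mono {r μ ν : ℝ} (hμ : 0 ≤ μ) (hμν : μ ≤ ν) : derivStep r μ ≤ derivStep r ν :=
  harnackBound_mono (by positivity) (by gcongr)

lemma iterate_derivStep_pos {r : ℝ} (hr : 0 < r) (n : ℕ) : 0 < (derivStep r)^[n] 1 := by
  induction n with
  | zero => exact one_pos
  | succ n ih => rw [Function.iterate_succ_apply']; exact derivStep_pos hr ih

lemma derivStep_norm_deriv_le_norm_deriv {F : ℂ → ℂ} {x y : ℂ} {p q r : ℝ} (hr : 0 < r)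
    (hd : DifferentiableOn ℂ F (ball x r)) (hinj : InjOn F (ball x r))
    (hslit : MapsTo F (ball x r) slitᶜ) (hyx : dist y x ≤ r / 8)
    (hp : p ∈ Icc (-1 : ℝ) (1 / 4)) (hFx : F x = p)
    (hq : q ∈ Icc (-1 : ℝ) (1 / 4)) (hFy : F y = q) :
    derivStep r ‖deriv F x‖ ≤ ‖deriv F y‖ := by
  have hsub : ball x (r / 2) ⊆ ball x r := ball_subset_ball (by linarith)
  have hFat : ∀ z ∈ ball x r, DifferentiableAt ℂ F z := fun z hz =>
    hd.differentiableAt (isOpen_ball.mem_nhds hz)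
  have hGat : ∀ z ∈ ball x r, HasDerivAt (slitMap ∘ F) (deriv slitMap (F z) * deriv F z) z :=
    fun z hz => (hasDerivAt_slitMap (hslit hz)).differentiableAt.hasDerivAt.comp z
      (hFat z hz).hasDerivAt
  have hGd : DifferentiableOn ℂ (slitMap ∘ F) (ball x r) := fun z hz =>
    (hGat z hz).differentiableAt.differentiableWithinAt
  have hGderiv : ∀ z ∈ ball x (r / 2), ‖deriv (slitMap ∘ F) z‖ ≤ 4 / r := by
    intro z hz
    have hball : ball z (r / 2) ⊆ ball x r := ball_subset_ball' (by linarith [mem_ball.mp hz])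
    have hmaps : MapsTo (slitMap ∘ F) (ball z (r / 2)) (closedBall ((slitMap ∘ F) z) 2) := by
      intro w _
      rw [mem_closedBall, dist_eq_norm, ← one_add_one_eq_two]
      exact norm_sub_le_of_le (norm_slitMap_le_one _) (norm_slitMap_le_one _)
    have hSchwarz := Complex.norm_deriv_le_div_of_mapsTo_ball (hGd.mono hball) hmaps (half_pos hr)
    refine hSchwarz.trans_eq ?_
    field_simp
    norm_num
  have hyr : y ∈ ball x r := mem_ball.mpr (by linarith)
  have hxr : x ∈ ball x r := mem_ball_self hr
  have hharnack := harnackBound_norm_deriv_le_norm_deriv (half_pos hr) (hGd.mono hsub)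
    ((injOn_slitMap.comp hinj hslit).mono hsub) hGderiv (z := y) (by linarith)
  rw [(hGat x hxr).deriv, (hGat y hyr).deriv, norm_mul, norm_mul, hFx, hFy] at hharnack
  have hxbound := (norm_deriv_slitMap_mem_Icc hp).1
  have hybound := (norm_deriv_slitMap_mem_Icc hq).2
  calc derivStep r ‖deriv F x‖
      ≤ harnackBound (4 / r) (‖deriv slitMap p‖ * ‖deriv F x‖) :=
        harnackBound_mono (by positivity) (by nlinarith [norm_nonneg (deriv F x)])
    _ ≤ ‖deriv slitMap q‖ * ‖deriv F y‖ := hharnack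
    _ ≤ ‖deriv F y‖ := mul_le_of_le_one_left (norm_nonneg _) hybound

/-! ### Lower bound for the derivative of a univalent diffeomorphism -/

/-- An increasing homeomorphism `φ` of `[-1,1]` with Lipschitz constant `C` and with a univalent
extension `Φ` to a set `V` containing the `r`-balls about `[-1,1]`, where `r` is so small that `φ`
moves points by at most `1/4` over a distance `r`. -/
structure UnivalentExtension (φ : ℝ → ℝ) (Φ : ℂ → ℂ) (V : Set ℂ) (r C : ℝ) : Prop where
  r_pos : 0 < r
  mul_le : C * r ≤ 1 / 4
  ball_subset : ∀ x ∈ Icc (-1 : ℝ) 1, ball (x : ℂ) r ⊆ V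
  differentiableOn : DifferentiableOn ℂ Φ V
  injOn : InjOn Φ V
  eq_ofReal : ∀ x ∈ Icc (-1 : ℝ) 1, Φ (x : ℂ) = (φ x : ℂ)
  map_neg_one : φ (-1) = -1
  map_one : φ 1 = 1
  strictMonoOn : StrictMonoOn φ (Icc (-1 : ℝ) 1)
  image_eq : φ '' Icc (-1 : ℝ) 1 = Icc (-1 : ℝ) 1
  lipschitz : ∀ x ∈ Icc (-1 : ℝ) 1, ∀ y ∈ Icc (-1 : ℝ) 1, |φ x - φ y| ≤ C * |x - y|

lemma dist_ofReal (x y : ℝ) : dist (x : ℂ) (y : ℂ) = |x - y| := by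
  rw [dist_eq_norm, ← Complex.ofReal_sub, Complex.norm_real, Real.norm_eq_abs]

namespace UnivalentExtension
variable {φ : ℝ → ℝ} {Φ : ℂ → ℂ} {V : Set ℂ} {r C : ℝ}

lemma map_mem_Icc (H : UnivalentExtension φ Φ V r C) {x : ℝ} (hx : x ∈ Icc (-1 : ℝ) 1) :
    φ x ∈ Icc (-1 : ℝ) 1 :=
  H.image_eq ▸ mem_image_of_mem _ hx

lemma one_le (H : UnivalentExtension φ Φ V r C) : 1 ≤ C := by
  have := H.lipschitz 1 (by simp) (-1) (by simp)
  rw [H.map_neg_one, H.map_one, sub_neg_eq_add, abs_of_pos (by norm_num)] at this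
  linarith

lemma abs_sub_le_of_abs_sub_lt (H : UnivalentExtension φ Φ V r C) {x y : ℝ}
    (hx : x ∈ Icc (-1 : ℝ) 1) (hy : y ∈ Icc (-1 : ℝ) 1) (hyx : |y - x| < r) :
    |φ y - φ x| ≤ 1 / 4 :=
  calc |φ y - φ x| ≤ C * |y - x| := H.lipschitz y hy x hx
    _ ≤ C * r := mul_le_mul_of_nonneg_left hyx.le (zero_le_one.trans H.one_le)
    _ ≤ 1 / 4 := H.mul_le

lemma differentiableOn_ball (H : UnivalentExtension φ Φ V r C) {x : ℝ}
    (hx : x ∈ Icc (-1 : ℝ) 1) : DifferentiableOn ℂ Φ (ball x r) :=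
  H.differentiableOn.mono (H.ball_subset x hx)

lemma hasDerivAt (H : UnivalentExtension φ Φ V r C) {x : ℝ} (hx : x ∈ Icc (-1 : ℝ) 1) :
    HasDerivAt Φ (deriv Φ x) x :=
  ((H.differentiableOn_ball hx).differentiableAt (ball_mem_nhds _ H.r_pos)).hasDerivAt

lemma hasDerivWithinAt_ofReal (H : UnivalentExtension φ Φ V r C) {x : ℝ}
    (hx : x ∈ Icc (-1 : ℝ) 1) :
    HasDerivWithinAt (fun y : ℝ => (φ y : ℂ)) (deriv Φ x) (Icc (-1) 1) x :=
  (H.hasDerivAt hx).comp_ofReal.hasDerivWithinAt.congr (fun y hy => (H.eq_ofReal y hy).symm)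
    (H.eq_ofReal x hx).symm

lemma hasDerivWithinAt (H : UnivalentExtension φ Φ V r C) {x : ℝ} (hx : x ∈ Icc (-1 : ℝ) 1) :
    HasDerivWithinAt φ (deriv Φ x).re (Icc (-1) 1) x := by
  simpa [Function.comp_def] using
    Complex.reCLM.hasFDerivAt.comp_hasDerivWithinAt x (H.hasDerivWithinAt_ofReal hx)

lemma im_deriv_eq_zero (H : UnivalentExtension φ Φ V r C) {x : ℝ} (hx : x ∈ Icc (-1 : ℝ) 1) :
    (deriv Φ x).im = 0 := by
  have him : HasDerivWithinAt (fun _ : ℝ => (0 : ℝ)) (deriv Φ x).im (Icc (-1) 1) x := by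
    simpa [Function.comp_def] using
      Complex.imCLM.hasFDerivAt.comp_hasDerivWithinAt x (H.hasDerivWithinAt_ofReal hx)
  exact (uniqueDiffOn_Icc (by norm_num) x hx).eq_deriv _ him (hasDerivWithinAt_const _ _ _)

lemma mapsTo_smul_compl_slit (H : UnivalentExtension φ Φ V r C) {x s : ℝ}
    (hx : x ∈ Icc (-1 : ℝ) 1) (hs : |s| = 1) (hsx : s * φ x ≤ 0) :
    MapsTo (fun z => (s : ℂ) * Φ z) (ball x r) slitᶜ := by
  rintro z hz ⟨v, hv, hvz⟩
  have hss : s * s = 1 := by rw [← abs_mul_abs_self, hs, one_mul]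
  -- The value `s * v` of `φ` is attained at a real point outside the ball.
  obtain ⟨u, hu, huv⟩ : s * v ∈ φ '' Icc (-1) 1 := by
    rw [H.image_eq, mem_Icc, ← abs_le, abs_mul, hs, one_mul, abs_le]
    exact ⟨by linarith [hv.1], hv.2⟩
  have hzu : z = u := by
    refine H.injOn (H.ball_subset x hx hz) (H.ball_subset u hu (mem_ball_self H.r_pos)) ?_
    have hssC : (s : ℂ) * s = 1 := by exact_mod_cast hss
    rw [H.eq_ofReal u hu, huv]
    push_cast
    linear_combination (-(s : ℂ)) * hvz - Φ z * hssC
  rw [hzu, mem_ball, dist_ofReal] at hz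
  have hclose : s * (φ u - φ x) ≤ 1 / 4 := by
    refine (le_abs_self _).trans ?_
    rw [abs_mul, hs, one_mul]
    exact H.abs_sub_le_of_abs_sub_lt hx hu hz
  have : s * φ u = v := by rw [huv, ← mul_assoc, hss, one_mul]
  linarith [hv.1]

lemma derivStep_le (H : UnivalentExtension φ Φ V r C) {x y : ℝ} (hx : x ∈ Icc (-1 : ℝ) 1)
    (hy : y ∈ Icc (-1 : ℝ) 1) (hyx : |y - x| ≤ r / 8) :
    derivStep r ‖deriv Φ x‖ ≤ ‖deriv Φ y‖ := by
  have hr := H.r_pos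
  obtain ⟨s, hs, hsx⟩ : ∃ s : ℝ, |s| = 1 ∧ s * φ x ≤ 0 := by
    rcases le_total (φ x) 0 with h | h
    · exact ⟨1, by simp, by linarith⟩
    · exact ⟨-1, by simp, by linarith⟩
  have hs0 : (s : ℂ) ≠ 0 := by rintro h; simp_all
  have hderiv : ∀ u ∈ Icc (-1 : ℝ) 1, ‖deriv (fun z => (s : ℂ) * Φ z) u‖ = ‖deriv Φ u‖ := by
    intro u hu
    rw [((H.hasDerivAt hu).const_mul _).deriv, norm_mul, Complex.norm_real, Real.norm_eq_abs, hs,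
      one_mul]
  have hmem : ∀ u ∈ Icc (-1 : ℝ) 1, |u - x| < r → s * φ u ∈ Icc (-1 : ℝ) (1 / 4) := by
    intro u hu hux
    have habs : |s * φ u| ≤ 1 := by
      rw [abs_mul, hs, one_mul]; exact abs_le.mpr (H.map_mem_Icc hu)
    have hclose : s * (φ u - φ x) ≤ |φ u - φ x| := by
      simpa [abs_mul, hs] using le_abs_self (s * (φ u - φ x))
    exact ⟨neg_le_of_abs_le habs, by linarith [H.abs_sub_le_of_abs_sub_lt hx hu hux]⟩
  rw [← hderiv x hx, ← hderiv y hy]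
  refine derivStep_norm_deriv_le_norm_deriv hr ((H.differentiableOn_ball hx).const_mul _)
    (fun z hz w hw h => H.injOn (H.ball_subset x hx hz) (H.ball_subset x hx hw)
      (mul_left_cancel₀ hs0 h)) (H.mapsTo_smul_compl_slit hx hs hsx) ?_
    (hmem x hx (by simpa using hr)) ?_ (hmem y hy (by linarith)) ?_
  · rwa [dist_ofReal]
  · push_cast; rw [H.eq_ofReal x hx]
  · push_cast; rw [H.eq_ofReal y hy]

lemma iterate_derivStep_le (H : UnivalentExtension φ Φ V r C) {x : ℝ} (hx : x ∈ Icc (-1 : ℝ) 1)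
    (hx1 : 1 ≤ ‖deriv Φ x‖) (n : ℕ) {y : ℝ} (hy : y ∈ Icc (-1 : ℝ) 1)
    (hxy : |y - x| ≤ n * (r / 8)) : (derivStep r)^[n] 1 ≤ ‖deriv Φ y‖ := by
  induction n generalizing y with
  | zero =>
    have : y = x := by simpa [sub_eq_zero] using hxy
    simpa [this] using hx1
  | succ n ih =>
    set z := AffineMap.lineMap x y ((n : ℝ) / (n + 1)) with hz
    have hn : (0 : ℝ) < n + 1 := by positivity
    have hzmem : z ∈ Icc (-1 : ℝ) 1 := (convex_Icc (-1 : ℝ) 1).lineMap_mem hx hy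
      ⟨by positivity, by rw [div_le_one hn]; linarith⟩
    push_cast at hxy
    have hzx : |z - x| ≤ n * (r / 8) := by
      rw [← Real.dist_eq, hz, dist_lineMap_left, Real.norm_of_nonneg (by positivity), dist_comm,
        Real.dist_eq, div_mul_eq_mul_div, div_le_iff₀ hn]
      nlinarith
    have hyz : |y - z| ≤ r / 8 := by
      have h1 : 1 - (n : ℝ) / (n + 1) = 1 / (n + 1) := by field_simp; ring
      rw [← Real.dist_eq, dist_comm, hz, dist_lineMap_right, h1,
        Real.norm_of_nonneg (by positivity), dist_comm, Real.dist_eq, one_div_mul_eq_div,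
        div_le_iff₀ hn]
      linarith
    rw [Function.iterate_succ_apply']
    exact (derivStep_mono (iterate_derivStep_pos H.r_pos n).le (ih hzmem hzx)).trans
      (H.derivStep_le hzmem hy hyz)

lemma exists_re_deriv_eq_one (H : UnivalentExtension φ Φ V r C) :
    ∃ x ∈ Icc (-1 : ℝ) 1, (deriv Φ (x : ℂ)).re = 1 := by
  obtain ⟨x, hx, hslope⟩ := exists_hasDerivAt_eq_slope φ (fun x => (deriv Φ (x : ℂ)).re)
    (by norm_num : (-1 : ℝ) < 1) (fun x hx => (H.hasDerivWithinAt hx).continuousWithinAt)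
    fun x hx => (H.hasDerivWithinAt (Ioo_subset_Icc_self hx)).hasDerivAt (Icc_mem_nhds hx.1 hx.2)
  refine ⟨x, Ioo_subset_Icc_self hx, hslope.trans ?_⟩
  rw [H.map_one, H.map_neg_one, div_self (by norm_num)]

lemma iterate_derivStep_le_norm_deriv (H : UnivalentExtension φ Φ V r C) {y : ℝ}
    (hy : y ∈ Icc (-1 : ℝ) 1) : (derivStep r)^[⌈16 / r⌉₊] 1 ≤ ‖deriv Φ y‖ := by
  obtain ⟨x, hx, hx1⟩ := H.exists_re_deriv_eq_one
  refine H.iterate_derivStep_le hx (hx1.symm.le.trans (Complex.re_le_norm _)) _ hy ?_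
  calc |y - x| ≤ 1 - -1 := abs_sub_le_of_le_of_le hy.1 hy.2 hx.1 hx.2
    _ = 16 / r * (r / 8) := by have := H.r_pos; field_simp; norm_num
    _ ≤ ⌈16 / r⌉₊ * (r / 8) := by
      have := H.r_pos
      gcongr
      exact Nat.le_ceil _

end UnivalentExtension

/-! ### Cross ratios under a diffeomorphism with bounded third derivative -/

/-- The cross ratio `|ac| |bd| / (|ab| |cd|)` of a monotone quadruple, which is small when there is
much space on both sides of `[b, c]`. -/
def crossRatio (a b c d : ℝ) : ℝ := ((c - a) * (d - b)) / ((b - a) * (d - c))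

lemma crossRatio_neg (a b c d : ℝ) : crossRatio (-a) (-b) (-c) (-d) = crossRatio a b c d := by
  unfold crossRatio
  congr 1 <;> ring

lemma crossRatio_rev (a b c d : ℝ) : crossRatio d c b a = crossRatio a b c d := by
  unfold crossRatio
  congr 1 <;> ring

lemma crossRatio_affine {k e : ℝ} (hk : k ≠ 0) (a b c d : ℝ) :
    crossRatio (k * a + e) (k * b + e) (k * c + e) (k * d + e) = crossRatio a b c d := by
  have hkk := mul_ne_zero hk hk
  unfold crossRatio
  rw [← mul_div_mul_left ((c - a) * (d - b)) _ hkk]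
  congr 1 <;> ring

lemma crossRatio_nonneg {a b c d : ℝ} (hab : a ≤ b) (hbc : b ≤ c) (hcd : c ≤ d) :
    0 ≤ crossRatio a b c d := by
  have h₁ := sub_nonneg.mpr hab
  have h₂ := sub_nonneg.mpr hcd
  have h₃ := sub_nonneg.mpr (hab.trans hbc)
  have h₄ := sub_nonneg.mpr (hbc.trans hcd)
  unfold crossRatio
  positivity

lemma crossRatio_le_mul_of_slope_mul_slope_le {g : ℝ → ℝ} {a b c d E : ℝ} (hab : a < b)
    (hbc : b < c) (hcd : c < d) (hgab : g a < g b) (hgcd : g c < g d)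
    (h : slope g a b * slope g c d ≤ slope g a c * slope g b d * E) :
    crossRatio a b c d ≤ crossRatio (g a) (g b) (g c) (g d) * E := by
  have h₁ : 0 < b - a := by linarith
  have h₂ : 0 < d - c := by linarith
  have h₃ : 0 < c - a := by linarith
  have h₄ : 0 < d - b := by linarith
  have h₅ : 0 < g b - g a := by linarith
  have h₆ : 0 < g d - g c := by linarith
  simp only [slope_def_field] at h
  rw [div_mul_div_comm, div_mul_div_comm, div_mul_eq_mul_div,
    div_le_div_iff₀ (by positivity) (by positivity)] at h
  unfold crossRatio
  rw [div_mul_eq_mul_div, div_le_div_iff₀ (by positivity) (by positivity)]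
  linarith

lemma abs_mul_sub_mul_le {C η S T k l : ℝ} (hC : 0 ≤ C) (hη : 0 ≤ η) (hS : |S - k| ≤ C * η)
    (hT : |T - l| ≤ C * η) (hTC : |T| ≤ C) (hk : |k| ≤ 3 * C) :
    |S * T - k * l| ≤ 4 * C ^ 2 * η :=
  calc |S * T - k * l| = |(S - k) * T + k * (T - l)| := by ring_nf
    _ ≤ |S - k| * |T| + |k| * |T - l| := by
      rw [← abs_mul, ← abs_mul]; exact abs_add_le _ _
    _ ≤ C * η * C + 3 * C * (C * η) := by gcongr
    _ = 4 * C ^ 2 * η := by ring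

lemma le_mul_exp_of_le_add {S P μ e : ℝ} (hμ : 0 < μ) (hP : μ ≤ P) (he : 0 ≤ e)
    (hS : S ≤ P + e) : S ≤ P * Real.exp (e / μ) :=
  calc S ≤ P + μ * (e / μ) := by rwa [mul_div_cancel₀ _ hμ.ne']
    _ ≤ P + P * (e / μ) := by gcongr
    _ = P * (e / μ + 1) := by ring
    _ ≤ P * Real.exp (e / μ) := mul_le_mul_of_nonneg_left (Real.add_one_le_exp _) (hμ.le.trans hP)

/-- The functions `φ₁`, `φ₂`, `φ₃` are the successive derivatives of `φ` on `[-1,1]`; they are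
bounded by `C`, and `φ₁` is bounded below by `m > 0`. -/
structure C3Bounds (φ φ₁ φ₂ φ₃ : ℝ → ℝ) (m C : ℝ) : Prop where
  deriv : ∀ x ∈ Icc (-1 : ℝ) 1, HasDerivWithinAt φ (φ₁ x) (Icc (-1) 1) x
  deriv₁ : ∀ x ∈ Icc (-1 : ℝ) 1, HasDerivWithinAt φ₁ (φ₂ x) (Icc (-1) 1) x
  deriv₂ : ∀ x ∈ Icc (-1 : ℝ) 1, HasDerivWithinAt φ₂ (φ₃ x) (Icc (-1) 1) x
  abs_le₁ : ∀ x ∈ Icc (-1 : ℝ) 1, |φ₁ x| ≤ C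
  abs_le₂ : ∀ x ∈ Icc (-1 : ℝ) 1, |φ₂ x| ≤ C
  abs_le₃ : ∀ x ∈ Icc (-1 : ℝ) 1, |φ₃ x| ≤ C
  le : ∀ x ∈ Icc (-1 : ℝ) 1, m ≤ φ₁ x
  pos : 0 < m

/-- A constant controlling the distortion of slopes and cross ratios under a diffeomorphism whose
derivatives are bounded as in `C3Bounds`. -/
def distortionConst (m C : ℝ) : ℝ := 10 * C ^ 2 / m ^ 4 + C / m ^ 2

lemma distortionConst_pos {m C : ℝ} (hm : 0 < m) (hC : 0 < C) : 0 < distortionConst m C := by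
  unfold distortionConst; positivity

namespace C3Bounds
variable {φ φ₁ φ₂ φ₃ : ℝ → ℝ} {m C : ℝ}

lemma C_pos (H : C3Bounds φ φ₁ φ₂ φ₃ m C) : 0 < C :=
  H.pos.trans_le <| (H.le 0 (by simp)).trans <| (le_abs_self _).trans (H.abs_le₁ 0 (by simp))

lemma exists_slope_eq (H : C3Bounds φ φ₁ φ₂ φ₃ m C) {x y : ℝ} (hx : x ∈ Icc (-1 : ℝ) 1)
    (hy : y ∈ Icc (-1 : ℝ) 1) (hxy : x < y) : ∃ z ∈ Icc x y, slope φ x y = φ₁ z := by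
  have hsub : Icc x y ⊆ Icc (-1 : ℝ) 1 := Icc_subset_Icc hx.1 hy.2
  obtain ⟨z, hz, h⟩ := exists_hasDerivAt_eq_slope φ φ₁ hxy
    (fun z hz => ((H.deriv z (hsub hz)).mono hsub).continuousWithinAt)
    (fun z hz => (H.deriv z (hsub (Ioo_subset_Icc_self hz))).hasDerivAt
      (Icc_mem_nhds (hx.1.trans_lt hz.1) (hz.2.trans_le hy.2)))
  exact ⟨z, Ioo_subset_Icc_self hz, by rw [h, slope_def_field]⟩

lemma slope_mem_Icc (H : C3Bounds φ φ₁ φ₂ φ₃ m C) {x y : ℝ} (hx : x ∈ Icc (-1 : ℝ) 1)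
    (hy : y ∈ Icc (-1 : ℝ) 1) (hxy : x < y) : slope φ x y ∈ Icc m C := by
  obtain ⟨z, hz, h⟩ := H.exists_slope_eq hx hy hxy
  have hzI : z ∈ Icc (-1 : ℝ) 1 := ⟨hx.1.trans hz.1, hz.2.trans hy.2⟩
  rw [h]
  exact ⟨H.le z hzI, le_of_abs_le (H.abs_le₁ z hzI)⟩

lemma mul_sub_le (H : C3Bounds φ φ₁ φ₂ φ₃ m C) {x y : ℝ} (hx : x ∈ Icc (-1 : ℝ) 1)
    (hy : y ∈ Icc (-1 : ℝ) 1) (hxy : x < y) : m * (y - x) ≤ φ y - φ x := by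
  rw [← le_div_iff₀ (sub_pos.mpr hxy), ← slope_def_field]
  exact (H.slope_mem_Icc hx hy hxy).1

lemma map_lt (H : C3Bounds φ φ₁ φ₂ φ₃ m C) {x y : ℝ} (hx : x ∈ Icc (-1 : ℝ) 1)
    (hy : y ∈ Icc (-1 : ℝ) 1) (hxy : x < y) : φ x < φ y := by
  have := H.mul_sub_le hx hy hxy
  have := mul_pos H.pos (sub_pos.mpr hxy)
  linarith

section Taylor
variable {a d : ℝ}

lemma abs_deriv_sub_affine_le (H : C3Bounds φ φ₁ φ₂ φ₃ m C) (ha : a ∈ Icc (-1 : ℝ) 1)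
    (hd : d ∈ Icc (-1 : ℝ) 1) {z : ℝ} (hz : z ∈ Icc a d) :
    |φ₁ z - φ₁ a - φ₂ a * (z - a)| ≤ C * (d - a) ^ 2 := by
  have hC := H.C_pos
  have had : 0 ≤ d - a := sub_nonneg.mpr (hz.1.trans hz.2)
  have hsub : Icc a d ⊆ Icc (-1 : ℝ) 1 := Icc_subset_Icc ha.1 hd.2
  have hdist : ∀ {w}, w ∈ Icc a d → ‖w - a‖ ≤ d - a := fun hw => by
    rw [Real.norm_of_nonneg (sub_nonneg.mpr hw.1)]; exact sub_le_sub_right hw.2 a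
  have h₂ : ∀ w ∈ Icc a d, ‖φ₂ w - φ₂ a‖ ≤ C * (d - a) := fun w hw =>
    ((convex_Icc _ _).norm_image_sub_le_of_norm_hasDerivWithin_le H.deriv₂ H.abs_le₃ ha
      (hsub hw)).trans (mul_le_mul_of_nonneg_left (hdist hw) hC.le)
  have hderiv : ∀ w ∈ Icc a d,
      HasDerivWithinAt (fun w => φ₁ w - φ₂ a * w) (φ₂ w - φ₂ a) (Icc a d) w := fun w hw =>
    (((H.deriv₁ w (hsub hw)).mono hsub).sub
      ((hasDerivWithinAt_id w _).const_mul (φ₂ a))).congr_deriv (by simp)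
  calc |φ₁ z - φ₁ a - φ₂ a * (z - a)| = ‖φ₁ z - φ₂ a * z - (φ₁ a - φ₂ a * a)‖ := by
        rw [Real.norm_eq_abs]; ring_nf
    _ ≤ C * (d - a) * ‖z - a‖ := (convex_Icc a d).norm_image_sub_le_of_norm_hasDerivWithin_le
        hderiv h₂ ⟨le_rfl, hz.1.trans hz.2⟩ hz
    _ ≤ C * (d - a) * (d - a) := by gcongr; exact hdist hz
    _ = C * (d - a) ^ 2 := by ring

lemma abs_slope_sub_affine_le (H : C3Bounds φ φ₁ φ₂ φ₃ m C) (ha : a ∈ Icc (-1 : ℝ) 1)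
    (hd : d ∈ Icc (-1 : ℝ) 1) {x y : ℝ} (hx : x ∈ Icc a d) (hy : y ∈ Icc a d) (hxy : x < y) :
    |slope φ x y - (φ₁ a + φ₂ a * ((x + y) / 2 - a))| ≤ C * (d - a) ^ 2 := by
  have hsub : Icc a d ⊆ Icc (-1 : ℝ) 1 := Icc_subset_Icc ha.1 hd.2
  have hyx : 0 < y - x := sub_pos.mpr hxy
  set g : ℝ → ℝ := fun w => φ w - φ₁ a * w - φ₂ a * ((w - a) ^ 2 / 2) with hg
  have hderiv : ∀ w ∈ Icc a d,
      HasDerivWithinAt g (φ₁ w - φ₁ a - φ₂ a * (w - a)) (Icc a d) w := fun w hw => by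
    have hlin := (hasDerivWithinAt_id w (Icc a d)).const_mul (φ₁ a)
    have hquad := ((((hasDerivWithinAt_id w (Icc a d)).sub_const a).pow 2).div_const 2).const_mul
      (φ₂ a)
    exact ((((H.deriv w (hsub hw)).mono hsub).sub hlin).sub hquad).congr_deriv (by simp)
  have hslope : slope φ x y - (φ₁ a + φ₂ a * ((x + y) / 2 - a)) = (g y - g x) / (y - x) := by
    rw [slope_def_field, hg]
    field_simp
    ring
  rw [hslope, abs_div, abs_of_pos hyx, div_le_iff₀ hyx, ← abs_of_pos hyx]
  exact (convex_Icc a d).norm_image_sub_le_of_norm_hasDerivWithin_le hderiv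
    (fun w hw => H.abs_deriv_sub_affine_le ha hd hw) hx hy

lemma abs_affine_le (H : C3Bounds φ φ₁ φ₂ φ₃ m C) (ha : a ∈ Icc (-1 : ℝ) 1) {z : ℝ}
    (hz : z ∈ Icc (-1 : ℝ) 1) : |φ₁ a + φ₂ a * (z - a)| ≤ 3 * C := by
  have hC := H.C_pos
  have hza : |z - a| ≤ 2 := abs_le.mpr ⟨by linarith [hz.1, ha.2], by linarith [hz.2, ha.1]⟩
  calc |φ₁ a + φ₂ a * (z - a)| ≤ |φ₁ a| + |φ₂ a| * |z - a| := by
        rw [← abs_mul]; exact abs_add_le _ _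
    _ ≤ C + C * 2 := by gcongr; exacts [H.abs_le₁ a ha, H.abs_le₂ a ha]
    _ = 3 * C := by ring

variable {b c : ℝ}

/-- The products of slopes agree up to second order because so do the products of their affine
approximations: these differ by `(φ₂ a) ^ 2 * (d - a) * (c - b) / 4`. -/
lemma slope_mul_slope_le_add (H : C3Bounds φ φ₁ φ₂ φ₃ m C) (ha : a ∈ Icc (-1 : ℝ) 1)
    (hd : d ∈ Icc (-1 : ℝ) 1) (hab : a < b) (hbc : b < c) (hcd : c < d) :
    slope φ a b * slope φ c d ≤ slope φ a c * slope φ b d + 8 * C ^ 2 * (d - a) ^ 2 := by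
  have hsub : Icc a d ⊆ Icc (-1 : ℝ) 1 := Icc_subset_Icc ha.1 hd.2
  have haI : a ∈ Icc a d := ⟨le_rfl, by linarith⟩
  have hbI : b ∈ Icc a d := ⟨by linarith, by linarith⟩
  have hcI : c ∈ Icc a d := ⟨by linarith, by linarith⟩
  have hdI : d ∈ Icc a d := ⟨by linarith, le_rfl⟩
  have hslope : ∀ {x y}, x ∈ Icc a d → y ∈ Icc a d → x < y → |slope φ x y| ≤ C :=
    fun hx hy hxy => abs_le.mpr (by
      have := H.slope_mem_Icc (hsub hx) (hsub hy) hxy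
      exact ⟨by linarith [this.1, H.pos, H.C_pos], this.2⟩)
  have hmid : ∀ {x y}, x ∈ Icc a d → y ∈ Icc a d → (x + y) / 2 ∈ Icc (-1 : ℝ) 1 := fun hx hy =>
    hsub ⟨by linarith [hx.1, hy.1], by linarith [hx.2, hy.2]⟩
  have houter := abs_mul_sub_mul_le H.C_pos.le (sq_nonneg (d - a))
    (H.abs_slope_sub_affine_le ha hd haI hbI hab) (H.abs_slope_sub_affine_le ha hd hcI hdI hcd)
    (hslope hcI hdI hcd) (H.abs_affine_le ha (hmid haI hbI))
  have hinner := abs_mul_sub_mul_le H.C_pos.le (sq_nonneg (d - a))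
    (H.abs_slope_sub_affine_le ha hd haI hcI (hab.trans hbc))
    (H.abs_slope_sub_affine_le ha hd hbI hdI (hbc.trans hcd))
    (hslope hbI hdI (hbc.trans hcd)) (H.abs_affine_le ha (hmid haI hcI))
  have haffine : (φ₁ a + φ₂ a * ((a + b) / 2 - a)) * (φ₁ a + φ₂ a * ((c + d) / 2 - a)) ≤
      (φ₁ a + φ₂ a * ((a + c) / 2 - a)) * (φ₁ a + φ₂ a * ((b + d) / 2 - a)) := by
    have : 0 ≤ φ₂ a ^ 2 * ((d - a) * (c - b)) := mul_nonneg (sq_nonneg _)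
      (mul_nonneg (by linarith) (by linarith))
    linarith
  linarith [le_of_abs_le houter, neg_le_of_abs_le hinner]

lemma crossRatio_le (H : C3Bounds φ φ₁ φ₂ φ₃ m C) (ha : a ∈ Icc (-1 : ℝ) 1)
    (hd : d ∈ Icc (-1 : ℝ) 1) (hab : a < b) (hbc : b < c) (hcd : c < d) :
    crossRatio a b c d ≤ crossRatio (φ a) (φ b) (φ c) (φ d) *
      Real.exp (distortionConst m C * (φ d - φ a) ^ 2) := by
  have hm := H.pos
  have hC := H.C_pos
  have hb : b ∈ Icc (-1 : ℝ) 1 := ⟨by linarith [ha.1], by linarith [hd.2]⟩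
  have hc : c ∈ Icc (-1 : ℝ) 1 := ⟨by linarith [hb.1], by linarith [hd.2]⟩
  have hac := (H.slope_mem_Icc ha hc (hab.trans hbc)).1
  have hbd := (H.slope_mem_Icc hb hd (hbc.trans hcd)).1
  have hexp : 8 * C ^ 2 * (d - a) ^ 2 / m ^ 2 ≤ distortionConst m C * (φ d - φ a) ^ 2 :=
    calc 8 * C ^ 2 * (d - a) ^ 2 / m ^ 2 = 8 * C ^ 2 / m ^ 4 * (m * (d - a)) ^ 2 := by
          field_simp
      _ ≤ 10 * C ^ 2 / m ^ 4 * (φ d - φ a) ^ 2 := by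
          have := H.mul_sub_le ha hd (by linarith)
          have : 0 ≤ d - a := by linarith
          gcongr
          norm_num
      _ ≤ distortionConst m C * (φ d - φ a) ^ 2 := by
          gcongr
          exact le_add_of_nonneg_right (by positivity)
  refine crossRatio_le_mul_of_slope_mul_slope_le hab hbc hcd (H.map_lt ha hb hab)
    (H.map_lt hc hd hcd) ?_
  refine (le_mul_exp_of_le_add (pow_pos hm 2) ?_ (by positivity)
    (H.slope_mul_slope_le_add ha hd hab hbc hcd)).trans ?_
  · rw [pow_two]
    exact mul_le_mul hac hbd hm.le (hm.le.trans hac)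
  · gcongr
    exact mul_nonneg (hm.le.trans hac) (hm.le.trans hbd)

end Taylor

lemma slope_le (H : C3Bounds φ φ₁ φ₂ φ₃ m C) {p q x y u v : ℝ} (hp : p ∈ Icc (-1 : ℝ) 1)
    (hq : q ∈ Icc (-1 : ℝ) 1) (hx : p ≤ x) (hxy : x < y) (hy : y ≤ q) (hu : p ≤ u) (huv : u < v)
    (hv : v ≤ q) :
    slope φ x y ≤ slope φ u v * Real.exp (distortionConst m C * (φ q - φ p)) := by
  have hm := H.pos
  have hC := H.C_pos
  have hsub : Icc p q ⊆ Icc (-1 : ℝ) 1 := Icc_subset_Icc hp.1 hq.2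
  have hpq : p < q := by linarith
  obtain ⟨z, hz, hzslope⟩ := H.exists_slope_eq (hsub ⟨hx, by linarith⟩)
    (hsub ⟨by linarith, hy⟩) hxy
  obtain ⟨w, hw, hwslope⟩ := H.exists_slope_eq (hsub ⟨hu, by linarith⟩)
    (hsub ⟨by linarith, hv⟩) huv
  have hzI : z ∈ Icc p q := ⟨hx.trans hz.1, hz.2.trans hy⟩
  have hwI : w ∈ Icc p q := ⟨hu.trans hw.1, hw.2.trans hv⟩
  have hvar : φ₁ z ≤ φ₁ w + C * (q - p) := by
    have hmvt : |φ₁ z - φ₁ w| ≤ C * |z - w| :=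
      (convex_Icc _ _).norm_image_sub_le_of_norm_hasDerivWithin_le H.deriv₁ H.abs_le₂
        (hsub hwI) (hsub hzI)
    have hzw : |z - w| ≤ q - p := abs_sub_le_of_le_of_le hzI.1 hzI.2 hwI.1 hwI.2
    have := mul_le_mul_of_nonneg_left hzw hC.le
    linarith [le_abs_self (φ₁ z - φ₁ w)]
  have hexp : C * (q - p) / m ≤ distortionConst m C * (φ q - φ p) :=
    calc C * (q - p) / m = C / m ^ 2 * (m * (q - p)) := by field_simp
      _ ≤ C / m ^ 2 * (φ q - φ p) := by gcongr; exact H.mul_sub_le hp hq hpq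
      _ ≤ distortionConst m C * (φ q - φ p) := by
          have := H.map_lt hp hq hpq
          gcongr
          exact le_add_of_nonneg_left (by positivity)
  have hw' := H.le w (hsub hwI)
  rw [hzslope, hwslope]
  refine (le_mul_exp_of_le_add hm hw' (mul_nonneg hC.le (by linarith)) hvar).trans ?_
  gcongr
  exact hm.le.trans hw'

end C3Bounds

namespace UnivalentExtension
variable {φ : ℝ → ℝ} {Φ : ℂ → ℂ} {V : Set ℂ} {r C : ℝ}

lemma contDiffOn (H : UnivalentExtension φ Φ V r C) (n : WithTop ℕ∞) :
    ContDiffOn ℝ n φ (Icc (-1) 1) := by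
  intro x hx
  have hΦ : ContDiffAt ℂ n Φ x :=
    ((H.differentiableOn_ball hx).analyticAt (ball_mem_nhds _ H.r_pos)).contDiffAt
  have hre : ContDiffAt ℝ n (fun y : ℝ => (Φ y).re) x :=
    Complex.reCLM.contDiff.contDiffAt.comp x <|
      (hΦ.restrict_scalars ℝ).comp (f := fun y : ℝ => (y : ℂ)) x
        Complex.ofRealCLM.contDiff.contDiffAt
  refine hre.contDiffWithinAt.congr (fun y hy => ?_) ?_
  · rw [H.eq_ofReal y hy, Complex.ofReal_re]
  · rw [H.eq_ofReal x hx, Complex.ofReal_re]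

lemma c3Bounds (H : UnivalentExtension φ Φ V r C) (hC : C3Bound φ C) :
    C3Bounds φ (iteratedDerivWithin 1 φ (Icc (-1) 1)) (iteratedDerivWithin 2 φ (Icc (-1) 1))
      (iteratedDerivWithin 3 φ (Icc (-1) 1)) ((derivStep r)^[⌈16 / r⌉₊] 1) C := by
  have hunique : UniqueDiffOn ℝ (Icc (-1 : ℝ) 1) := uniqueDiffOn_Icc (by norm_num)
  have hderiv : ∀ k : ℕ, ∀ x ∈ Icc (-1 : ℝ) 1,
      HasDerivWithinAt (iteratedDerivWithin k φ (Icc (-1) 1))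
        (iteratedDerivWithin (k + 1) φ (Icc (-1) 1) x) (Icc (-1) 1) x := by
    intro k x hx
    rw [iteratedDerivWithin_succ]
    exact ((H.contDiffOn (k + 1 : ℕ)).differentiableOn_iteratedDerivWithin
      (by exact_mod_cast k.lt_succ_self) hunique x hx).hasDerivWithinAt
  have hderiv0 : ∀ x ∈ Icc (-1 : ℝ) 1,
      HasDerivWithinAt φ (iteratedDerivWithin 1 φ (Icc (-1) 1) x) (Icc (-1) 1) x :=
    fun x hx => by simpa using hderiv 0 x hx
  refine ⟨hderiv0, hderiv 1, hderiv 2, hC 1 (by norm_num), hC 2 (by norm_num),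
    hC 3 (by norm_num), fun x hx => ?_, iterate_derivStep_pos H.r_pos _⟩
  have hre : 0 ≤ (deriv Φ x).re := by
    rw [← (H.hasDerivWithinAt hx).derivWithin (hunique x hx)]
    exact H.strictMonoOn.monotoneOn.derivWithin_nonneg
  rw [(hunique x hx).eq_deriv _ (hderiv0 x hx) (H.hasDerivWithinAt hx), ← abs_of_nonneg hre,
    Complex.abs_re_eq_norm.mpr (H.im_deriv_eq_zero hx)]
  exact H.iterate_derivStep_le_norm_deriv hx

end UnivalentExtension

/-! ### Cross ratios under power maps -/

lemma sinh_mul_mul_cosh_le {α v : ℝ} (hα : 1 ≤ α) (hv : 0 ≤ v) :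
    Real.sinh (α * v) * Real.cosh v ≤ α * Real.cosh (α * v) * Real.sinh v := by
  set g : ℝ → ℝ := fun v =>
    α * Real.cosh (α * v) * Real.sinh v - Real.sinh (α * v) * Real.cosh v with hg
  have hderiv : ∀ x, HasDerivAt g ((α ^ 2 - 1) * (Real.sinh (α * x) * Real.sinh x)) x := by
    intro x
    have hlin : HasDerivAt (fun v : ℝ => α * v) α x := by
      simpa using (hasDerivAt_id x).const_mul α
    exact (((hlin.cosh.const_mul α).mul (Real.hasDerivAt_sinh x)).sub
      (hlin.sinh.mul (Real.hasDerivAt_cosh x))).congr_deriv (by ring)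
  have hmono : MonotoneOn g (Ici 0) := by
    refine monotoneOn_of_deriv_nonneg (convex_Ici 0)
      (fun x _ => (hderiv x).continuousAt.continuousWithinAt)
      (fun x _ => (hderiv x).differentiableAt.differentiableWithinAt) fun x hx => ?_
    rw [interior_Ici] at hx
    have hx0 : 0 ≤ x := le_of_lt hx
    have hsinh : 0 ≤ Real.sinh x := Real.sinh_nonneg_iff.mpr hx0
    have hsinh' : 0 ≤ Real.sinh (α * x) := Real.sinh_nonneg_iff.mpr (by positivity)
    have : 0 ≤ α ^ 2 - 1 := by nlinarith
    rw [(hderiv x).deriv]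
    positivity
  simpa [hg] using hmono self_mem_Ici hv hv

lemma sinh_div_sinh_le {α v w : ℝ} (hα : 1 ≤ α) (hv : 0 < v) (hvw : v ≤ w) :
    Real.sinh w / Real.sinh v ≤ Real.sinh (α * w) / Real.sinh (α * v) := by
  have hderiv : ∀ x ∈ Ioi (0 : ℝ), HasDerivAt (fun v => Real.sinh (α * v) / Real.sinh v)
      ((α * Real.cosh (α * x) * Real.sinh x - Real.sinh (α * x) * Real.cosh x) /
        Real.sinh x ^ 2) x := by
    intro x hx
    have hlin : HasDerivAt (fun v : ℝ => α * v) α x := by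
      simpa using (hasDerivAt_id x).const_mul α
    exact (hlin.sinh.div (Real.hasDerivAt_sinh x) (Real.sinh_pos_iff.mpr hx).ne').congr_deriv
      (by ring)
  have hmono : MonotoneOn (fun v => Real.sinh (α * v) / Real.sinh v) (Ioi 0) := by
    refine monotoneOn_of_deriv_nonneg (convex_Ioi 0)
      (fun x hx => (hderiv x hx).continuousAt.continuousWithinAt) ?_ ?_ <;> rw [interior_Ioi]
    · exact fun x hx => (hderiv x hx).differentiableAt.differentiableWithinAt
    · intro x hx
      rw [(hderiv x hx).deriv]
      exact div_nonneg (sub_nonneg.mpr (sinh_mul_mul_cosh_le hα (le_of_lt hx))) (sq_nonneg _)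
  have h := hmono (mem_Ioi.mpr hv) (mem_Ioi.mpr (hv.trans_le hvw)) hvw
  have hsv : 0 < Real.sinh v := Real.sinh_pos_iff.mpr hv
  have hsw : 0 < Real.sinh w := Real.sinh_pos_iff.mpr (hv.trans_le hvw)
  have hsαv : 0 < Real.sinh (α * v) := Real.sinh_pos_iff.mpr (by positivity)
  rw [div_le_div_iff₀ hsv hsw] at h
  rw [div_le_div_iff₀ hsv hsαv]
  linarith

lemma exp_sub_exp (x y : ℝ) :
    Real.exp y - Real.exp x = 2 * Real.exp ((x + y) / 2) * Real.sinh ((y - x) / 2) := by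
  have hy : Real.exp y = Real.exp ((x + y) / 2) * Real.exp ((y - x) / 2) := by
    rw [← Real.exp_add]; ring_nf
  have hx : Real.exp x = Real.exp ((x + y) / 2) * Real.exp (-((y - x) / 2)) := by
    rw [← Real.exp_add]; ring_nf
  rw [Real.sinh_eq, hx, hy]
  ring

lemma crossRatio_exp (a b c d : ℝ) :
    crossRatio (Real.exp a) (Real.exp b) (Real.exp c) (Real.exp d) =
      (Real.sinh ((c - a) / 2) / Real.sinh ((b - a) / 2)) *
      (Real.sinh ((d - b) / 2) / Real.sinh ((d - c) / 2)) := by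
  have hexp : Real.exp ((a + c) / 2) * Real.exp ((b + d) / 2) =
      Real.exp ((a + b) / 2) * Real.exp ((c + d) / 2) := by
    rw [← Real.exp_add, ← Real.exp_add]; ring_nf
  have hpos : 4 * (Real.exp ((a + b) / 2) * Real.exp ((c + d) / 2)) ≠ 0 := by positivity
  rw [crossRatio, exp_sub_exp a c, exp_sub_exp b d, exp_sub_exp a b, exp_sub_exp c d,
    div_mul_div_comm, ← mul_div_mul_left _ (Real.sinh _ * _) hpos]
  congr 1
  · linear_combination 4 * Real.sinh ((c - a) / 2) * Real.sinh ((d - b) / 2) * hexp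
  · ring

lemma crossRatio_exp_le {α a b c d : ℝ} (hα : 1 ≤ α) (hab : a < b) (hbc : b < c) (hcd : c < d) :
    crossRatio (Real.exp a) (Real.exp b) (Real.exp c) (Real.exp d) ≤
      crossRatio (Real.exp (α * a)) (Real.exp (α * b)) (Real.exp (α * c)) (Real.exp (α * d)) := by
  have hhalf : ∀ x y, (α * x - α * y) / 2 = α * ((x - y) / 2) := fun x y => by ring
  have hleft := sinh_div_sinh_le (v := (b - a) / 2) (w := (c - a) / 2) hα (by linarith)
    (by linarith)
  have hright := sinh_div_sinh_le (v := (d - c) / 2) (w := (d - b) / 2) hα (by linarith)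
    (by linarith)
  have hnonneg : ∀ {x y : ℝ}, 0 < x → 0 < y → 0 ≤ Real.sinh x / Real.sinh y := fun hx hy =>
    div_nonneg (Real.sinh_nonneg_iff.mpr hx.le) (Real.sinh_nonneg_iff.mpr hy.le)
  rw [crossRatio_exp, crossRatio_exp, hhalf c a, hhalf b a, hhalf d b, hhalf d c]
  exact mul_le_mul hleft hright (hnonneg (by linarith) (by linarith))
    ((hnonneg (by linarith) (by linarith)).trans hleft)

lemma crossRatio_rpow_le_of_pos {α a b c d : ℝ} (hα : 1 ≤ α) (ha : 0 < a) (hab : a < b)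
    (hbc : b < c) (hcd : c < d) :
    crossRatio a b c d ≤ crossRatio (a ^ α) (b ^ α) (c ^ α) (d ^ α) := by
  have hb := ha.trans hab
  have hc := hb.trans hbc
  have hd := hc.trans hcd
  have hpow : ∀ {x : ℝ}, 0 < x → x ^ α = Real.exp (α * Real.log x) := fun hx => by
    rw [Real.rpow_def_of_pos hx, mul_comm]
  have h := crossRatio_exp_le hα (Real.log_lt_log ha hab) (Real.log_lt_log hb hbc)
    (Real.log_lt_log hc hcd)
  rwa [Real.exp_log ha, Real.exp_log hb, Real.exp_log hc, Real.exp_log hd, ← hpow ha, ← hpow hb,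
    ← hpow hc, ← hpow hd] at h

lemma crossRatio_rpow_le {α a b c d : ℝ} (hα : 1 ≤ α) (ha : 0 ≤ a) (hab : a < b) (hbc : b < c)
    (hcd : c < d) :
    crossRatio a b c d ≤ crossRatio (a ^ α) (b ^ α) (c ^ α) (d ^ α) := by
  rcases ha.eq_or_lt with rfl | ha
  · have hcont : ContinuousAt (fun x => crossRatio x b c d) 0 := by
      unfold crossRatio
      have : (b - 0) * (d - c) ≠ 0 := (mul_pos (by linarith) (by linarith)).ne'
      fun_prop (disch := assumption)
    have hcont' : ContinuousAt (fun x => crossRatio (x ^ α) (b ^ α) (c ^ α) (d ^ α)) 0 := by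
      have hbα : (0 : ℝ) ^ α < b ^ α := by gcongr
      have hcα : c ^ α < d ^ α := Real.rpow_lt_rpow (hab.trans hbc).le hcd (by linarith)
      have hpow : ContinuousAt (fun x : ℝ => x ^ α) 0 :=
        Real.continuousAt_rpow_const _ _ (.inr (by linarith))
      unfold crossRatio
      have : (b ^ α - 0 ^ α) * (d ^ α - c ^ α) ≠ 0 :=
        (mul_pos (by linarith) (by linarith)).ne'
      fun_prop (disch := assumption)
    refine le_of_tendsto_of_tendsto (hcont.tendsto.mono_left nhdsWithin_le_nhds)
      (hcont'.tendsto.mono_left (nhdsWithin_le_nhds (s := Ioi 0))) ?_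
    filter_upwards [Ioo_mem_nhdsGT hab] with x hx
    exact crossRatio_rpow_le_of_pos hα hx.1 hx.2 hbc hcd
  · exact crossRatio_rpow_le_of_pos hα ha hab hbc hcd

/-! ### Unimodal maps with controlled distortion -/

/-- An even unimodal map of critical order `α`, decreasing on `[0, 1]`, whose distortion is
controlled by `K`: the fields `crossRatio_le`, `slope_le` and `power_le` bound, up to a factor
`exp (K ⬝)`, the shrinking of cross ratios, the failure of concavity and the distance to the power
map `x ^ α`. Only these properties of `φ ∘ q_t` enter the real a priori bounds. -/
structure UnimodalMap (f : ℝ → ℝ) (α K : ℝ) : Prop where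
  one_lt : 1 < α
  nonneg : 0 ≤ K
  even : ∀ x, f (-x) = f x
  strictAntiOn : StrictAntiOn f (Icc 0 1)
  continuousOn : ContinuousOn f (Icc 0 1)
  map_one : f 1 = -1
  map_zero_le : f 0 ≤ 1
  crossRatio_le : ∀ a b c d, 0 ≤ a → a < b → b < c → c < d → d ≤ 1 →
    crossRatio a b c d ≤
      crossRatio (f a) (f b) (f c) (f d) * Real.exp (K * (f a - f d) ^ 2)
  slope_le : ∀ a b c, 0 ≤ a → a < b → b < c → c ≤ 1 →
    (c - b) * (f a - f b) ≤ Real.exp (K * (f a - f c)) * ((b - a) * (f b - f c))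
  power_le : ∀ x y, 0 < x → x < y → y ≤ 1 →
    (f x - f y) * x ^ α ≤ Real.exp (K * (f 0 - f y)) * ((f 0 - f x) * (y ^ α - x ^ α))

lemma qmapR_of_nonneg {α t x : ℝ} (hx : 0 ≤ x) :
    qmapR α t x = -2 * t * x ^ α + (2 * t - 1) := by
  rw [qmapR, abs_of_nonneg hx, add_sub_assoc]

lemma qmapR_neg (α t x : ℝ) : qmapR α t (-x) = qmapR α t x := by
  simp only [qmapR, abs_neg]

lemma qmapR_mem_Icc {α t x : ℝ} (hα : 0 < α) (ht : t ∈ Icc (0 : ℝ) 1)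
    (hx : x ∈ Icc (-1 : ℝ) 1) : qmapR α t x ∈ Icc (-1 : ℝ) 1 := by
  have hle : |x| ^ α ≤ 1 := Real.rpow_le_one (abs_nonneg x) (abs_le.mpr hx) hα.le
  have hnonneg : 0 ≤ |x| ^ α := Real.rpow_nonneg (abs_nonneg x) _
  obtain ⟨ht₀, ht₁⟩ := ht
  unfold qmapR
  constructor <;> nlinarith

lemma qmapR_lt {α t x y : ℝ} (hα : 0 < α) (ht : 0 < t) (hx : 0 ≤ x) (hxy : x < y) :
    qmapR α t y < qmapR α t x := by
  have hpow := Real.rpow_lt_rpow hx hxy hα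
  rw [qmapR_of_nonneg hx, qmapR_of_nonneg (hx.trans hxy.le)]
  nlinarith

lemma continuous_qmapR {α t : ℝ} (hα : 0 < α) : Continuous (qmapR α t) := by
  have : Continuous fun x : ℝ => |x| ^ α :=
    continuous_abs.rpow_const fun _ => Or.inr hα.le
  unfold qmapR
  fun_prop

namespace C3Bounds
variable {φ φ₁ φ₂ φ₃ : ℝ → ℝ} {m C α t : ℝ}

lemma crossRatio_le_comp_qmapR (H : C3Bounds φ φ₁ φ₂ φ₃ m C) (hα : 1 < α) (ht : t ∈ Ioc (0 : ℝ) 1)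
    {a b c d : ℝ} (ha : 0 ≤ a) (hab : a < b) (hbc : b < c) (hcd : c < d) (hd : d ≤ 1) :
    crossRatio a b c d ≤
      crossRatio (φ (qmapR α t a)) (φ (qmapR α t b)) (φ (qmapR α t c)) (φ (qmapR α t d)) *
        Real.exp (distortionConst m C * (φ (qmapR α t a) - φ (qmapR α t d)) ^ 2) := by
  have hα₀ : 0 < α := by linarith
  have ht' : t ∈ Icc (0 : ℝ) 1 := ⟨ht.1.le, ht.2⟩
  have hb : 0 ≤ b := ha.trans hab.le
  have hc : 0 ≤ c := hb.trans hbc.le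
  calc crossRatio a b c d ≤ crossRatio (a ^ α) (b ^ α) (c ^ α) (d ^ α) :=
        crossRatio_rpow_le hα.le ha hab hbc hcd
    _ = crossRatio (qmapR α t d) (qmapR α t c) (qmapR α t b) (qmapR α t a) := by
        rw [crossRatio_rev, qmapR_of_nonneg ha, qmapR_of_nonneg hb, qmapR_of_nonneg hc,
          qmapR_of_nonneg (hc.trans hcd.le), crossRatio_affine (by linarith [ht.1])]
    _ ≤ _ := by
        rw [← crossRatio_rev (φ _)]
        exact H.crossRatio_le (qmapR_mem_Icc hα₀ ht' ⟨by linarith, hd⟩)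
          (qmapR_mem_Icc hα₀ ht' ⟨by linarith, by linarith⟩) (qmapR_lt hα₀ ht.1 hc hcd)
          (qmapR_lt hα₀ ht.1 hb hbc) (qmapR_lt hα₀ ht.1 ha hab)

lemma mul_le_comp_qmapR (H : C3Bounds φ φ₁ φ₂ φ₃ m C) (hα : 0 < α) (ht : t ∈ Ioc (0 : ℝ) 1)
    {p q x y u v : ℝ} (hp : 0 ≤ p) (hq : q ≤ 1) (hpx : p ≤ x) (hxy : x < y) (hyq : y ≤ q)
    (hpu : p ≤ u) (huv : u < v) (hvq : v ≤ q) :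
    (φ (qmapR α t x) - φ (qmapR α t y)) * (v ^ α - u ^ α) ≤
      Real.exp (distortionConst m C * (φ (qmapR α t p) - φ (qmapR α t q))) *
        ((φ (qmapR α t u) - φ (qmapR α t v)) * (y ^ α - x ^ α)) := by
  have ht' : t ∈ Icc (0 : ℝ) 1 := ⟨ht.1.le, ht.2⟩
  have hanti : AntitoneOn (qmapR α t) (Ici 0) := fun z hz w _ hzw =>
    hzw.eq_or_lt.elim (fun h => h ▸ le_rfl) fun h => (qmapR_lt hα ht.1 hz h).le
  have hmem : ∀ z ∈ Icc p q, z ∈ Ici (0 : ℝ) := fun z hz => hp.trans hz.1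
  have hsub : ∀ {z w : ℝ}, 0 ≤ z → 0 ≤ w →
      qmapR α t z - qmapR α t w = 2 * t * (w ^ α - z ^ α) := fun hz hw => by
    rw [qmapR_of_nonneg hz, qmapR_of_nonneg hw]; ring
  have hle : ∀ z ∈ Icc p q, z ∈ Icc (-1 : ℝ) 1 := fun z hz =>
    ⟨by linarith [hz.1], hz.2.trans hq⟩
  have hpI : p ∈ Icc p q := ⟨le_rfl, by linarith⟩
  have hqI : q ∈ Icc p q := ⟨by linarith, le_rfl⟩
  have hxI : x ∈ Icc p q := ⟨hpx, by linarith⟩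
  have hyI : y ∈ Icc p q := ⟨by linarith, hyq⟩
  have huI : u ∈ Icc p q := ⟨hpu, by linarith⟩
  have hvI : v ∈ Icc p q := ⟨by linarith, hvq⟩
  have hslope := H.slope_le (qmapR_mem_Icc hα ht' (hle q hqI)) (qmapR_mem_Icc hα ht' (hle p hpI))
    (hanti (hmem y hyI) (hmem q hqI) hyq) (qmapR_lt hα ht.1 (hmem x hxI) hxy)
    (hanti (hmem p hpI) (hmem x hxI) hpx) (hanti (hmem v hvI) (hmem q hqI) hvq)
    (qmapR_lt hα ht.1 (hmem u huI) huv) (hanti (hmem p hpI) (hmem u huI) hpu)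
  have hxyα : 0 < y ^ α - x ^ α := sub_pos.mpr (Real.rpow_lt_rpow (hmem x hxI) hxy hα)
  have huvα : 0 < v ^ α - u ^ α := sub_pos.mpr (Real.rpow_lt_rpow (hmem u huI) huv hα)
  have ht₀ := ht.1
  rw [slope_def_field, slope_def_field, hsub (hmem x hxI) (hmem y hyI),
    hsub (hmem u huI) (hmem v hvI), div_mul_eq_mul_div,
    div_le_div_iff₀ (by positivity) (by positivity)] at hslope
  refine le_of_mul_le_mul_left ?_ (show 0 < 2 * t by positivity)
  linarith

lemma sub_mul_le_comp_qmapR (H : C3Bounds φ φ₁ φ₂ φ₃ m C) (hα : 1 < α) (ht : t ∈ Ioc (0 : ℝ) 1)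
    {a b c : ℝ} (ha : 0 ≤ a) (hab : a < b) (hbc : b < c) (hc : c ≤ 1) :
    (c - b) * (φ (qmapR α t a) - φ (qmapR α t b)) ≤
      Real.exp (distortionConst m C * (φ (qmapR α t a) - φ (qmapR α t c))) *
        ((b - a) * (φ (qmapR α t b) - φ (qmapR α t c))) := by
  have hα₀ : 0 < α := by linarith
  have hb : 0 ≤ b := ha.trans hab.le
  have hmem : ∀ {x : ℝ}, x ∈ Icc (0 : ℝ) 1 → qmapR α t x ∈ Icc (-1 : ℝ) 1 := fun hx =>
    qmapR_mem_Icc hα₀ ⟨ht.1.le, ht.2⟩ ⟨by linarith [hx.1], hx.2⟩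
  have hconvex : (c - b) * (b ^ α - a ^ α) ≤ (b - a) * (c ^ α - b ^ α) := by
    have := (convexOn_rpow hα.le).slope_mono_adjacent (mem_Ici.mpr ha)
      (mem_Ici.mpr (hb.trans hbc.le)) hab hbc
    rw [div_le_div_iff₀ (by linarith) (by linarith)] at this
    linarith
  have hpow : 0 < c ^ α - b ^ α := sub_pos.mpr (Real.rpow_lt_rpow hb hbc hα₀)
  have hmul := H.mul_le_comp_qmapR hα₀ ht ha hc le_rfl hab hbc.le hab.le hbc le_rfl
  have hφ : 0 ≤ φ (qmapR α t b) - φ (qmapR α t c) :=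
    (sub_pos.mpr (H.map_lt (hmem ⟨hb.trans hbc.le, hc⟩) (hmem ⟨hb, hbc.le.trans hc⟩)
      (qmapR_lt hα₀ ht.1 hb hbc))).le
  refine le_of_mul_le_mul_right ?_ hpow
  set E := Real.exp (distortionConst m C * (φ (qmapR α t a) - φ (qmapR α t c)))
  calc (c - b) * (φ (qmapR α t a) - φ (qmapR α t b)) * (c ^ α - b ^ α)
      = (c - b) * ((φ (qmapR α t a) - φ (qmapR α t b)) * (c ^ α - b ^ α)) := by ring
    _ ≤ (c - b) * (E * ((φ (qmapR α t b) - φ (qmapR α t c)) * (b ^ α - a ^ α))) :=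
        mul_le_mul_of_nonneg_left hmul (by linarith)
    _ = E * (φ (qmapR α t b) - φ (qmapR α t c)) * ((c - b) * (b ^ α - a ^ α)) := by ring
    _ ≤ E * (φ (qmapR α t b) - φ (qmapR α t c)) * ((b - a) * (c ^ α - b ^ α)) :=
        mul_le_mul_of_nonneg_left hconvex (mul_nonneg (Real.exp_pos _).le hφ)
    _ = E * ((b - a) * (φ (qmapR α t b) - φ (qmapR α t c))) * (c ^ α - b ^ α) := by ring

theorem unimodalMap (H : C3Bounds φ φ₁ φ₂ φ₃ m C) (hα : 1 < α) (ht : t ∈ Ioc (0 : ℝ) 1)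
    (hneg : φ (-1) = -1) (hone : φ 1 = 1) :
    UnimodalMap (fun x => φ (qmapR α t x)) α (distortionConst m C) := by
  have hα₀ : 0 < α := by linarith
  have hmem : ∀ {x : ℝ}, x ∈ Icc (0 : ℝ) 1 → qmapR α t x ∈ Icc (-1 : ℝ) 1 := fun hx =>
    qmapR_mem_Icc hα₀ ⟨ht.1.le, ht.2⟩ ⟨by linarith [hx.1], hx.2⟩
  have hφ : ContinuousOn φ (Icc (-1) 1) := fun x hx => (H.deriv x hx).continuousWithinAt
  have hanti : StrictAntiOn (fun x => φ (qmapR α t x)) (Icc 0 1) := fun x hx y hy hxy =>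
    H.map_lt (hmem hy) (hmem hx) (qmapR_lt hα₀ ht.1 hx.1 hxy)
  refine
    { one_lt := hα
      nonneg := (distortionConst_pos H.pos H.C_pos).le
      even := fun x => by simp only [qmapR_neg]
      strictAntiOn := hanti
      continuousOn := hφ.comp (continuous_qmapR hα₀).continuousOn fun x hx => hmem hx
      map_one := by simp [qmapR, hneg]
      map_zero_le := ?_
      crossRatio_le := fun a b c d => H.crossRatio_le_comp_qmapR hα ht
      slope_le := fun a b c => H.sub_mul_le_comp_qmapR hα ht
      power_le := fun x y hx hxy hy => ?_ }
  · have hle : qmapR α t 0 ≤ 1 := (hmem ⟨le_rfl, zero_le_one⟩).2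
    rcases hle.eq_or_lt with h | h
    · simp only [h, hone, le_refl]
    · exact hone ▸ (H.map_lt (hmem ⟨le_rfl, zero_le_one⟩) (by norm_num) h).le
  · simpa [Real.zero_rpow hα₀.ne'] using
      H.mul_le_comp_qmapR hα₀ ht le_rfl hy hx.le hxy le_rfl le_rfl hx hxy.le

end C3Bounds

namespace UnimodalMap
variable {f : ℝ → ℝ} {α K : ℝ}

lemma map_abs (U : UnimodalMap f α K) (x : ℝ) : f |x| = f x := by
  rcases abs_choice x with h | h <;> rw [h]
  exact U.even x

lemma strictMonoOn (U : UnimodalMap f α K) : StrictMonoOn f (Icc (-1) 0) := by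
  intro x hx y hy hxy
  rw [← U.even x, ← U.even y]
  exact U.strictAntiOn ⟨by linarith [hy.2], by linarith [hy.1]⟩
    ⟨by linarith [hx.2], by linarith [hx.1]⟩ (by linarith)

lemma map_le_map_zero (U : UnimodalMap f α K) {x : ℝ} (hx : x ∈ Icc (-1 : ℝ) 1) :
    f x ≤ f 0 := by
  rw [← U.map_abs x]
  exact U.strictAntiOn.antitoneOn ⟨le_rfl, zero_le_one⟩ ⟨abs_nonneg x, abs_le.mpr hx⟩
    (abs_nonneg x)

lemma map_lt_of_abs_lt (U : UnimodalMap f α K) {x y : ℝ} (hxy : |x| < y) (hy : y ≤ 1) :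
    f y < f x := by
  rw [← U.map_abs x]
  exact U.strictAntiOn ⟨abs_nonneg x, hxy.le.trans hy⟩ ⟨(abs_nonneg x).trans hxy.le, hy⟩ hxy

lemma exists_map_eq (U : UnimodalMap f α K) {v : ℝ} (hv : v ∈ Icc (-1) (f 0)) :
    ∃ u ∈ Icc (0 : ℝ) 1, f u = v := by
  rw [← U.map_one] at hv
  exact intermediate_value_Icc' zero_le_one U.continuousOn hv

end UnimodalMap

/-- A lap of a unimodal map: one of the two intervals into which the critical point cuts
`[-1,1]`. -/
def IsLap (J : Set ℝ) : Prop := J = Icc (-1) 0 ∨ J = Icc 0 1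

namespace IsLap
variable {J : Set ℝ}

lemma subset_Icc (hJ : IsLap J) : J ⊆ Icc (-1) 1 := by
  rcases hJ with rfl | rfl
  · exact Icc_subset_Icc_right zero_le_one
  · exact Icc_subset_Icc_left (by norm_num)

lemma ordConnected (hJ : IsLap J) : J.OrdConnected := by
  rcases hJ with rfl | rfl <;> exact ordConnected_Icc

lemma zero_notMem_uIoo (hJ : IsLap J) {a b : ℝ} (ha : a ∈ J) (hb : b ∈ J) :
    (0 : ℝ) ∉ uIoo a b := by
  rcases hJ with rfl | rfl
  · exact fun h => (uIoo_subset_Ioo ha hb h).2.false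
  · exact fun h => (uIoo_subset_Ioo ha hb h).1.false

end IsLap

namespace UnimodalMap
variable {f : ℝ → ℝ} {α K : ℝ} {J : Set ℝ}

lemma strictMonoOn_or_strictAntiOn (U : UnimodalMap f α K) (hJ : IsLap J) :
    StrictMonoOn f J ∨ StrictAntiOn f J := by
  rcases hJ with rfl | rfl
  · exact .inl U.strictMonoOn
  · exact .inr U.strictAntiOn

lemma injOn (U : UnimodalMap f α K) (hJ : IsLap J) : InjOn f J :=
  (U.strictMonoOn_or_strictAntiOn hJ).elim StrictMonoOn.injOn StrictAntiOn.injOn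

lemma map_mem_uIoo (U : UnimodalMap f α K) (hJ : IsLap J) {a b z : ℝ} (ha : a ∈ J) (hb : b ∈ J)
    (hz : z ∈ uIoo a b) : f z ∈ uIoo (f a) (f b) := by
  wlog hab : a ≤ b generalizing a b
  · rw [uIoo_comm] at hz ⊢
    exact this hb ha hz (le_of_not_ge hab)
  rw [uIoo_of_le hab] at hz
  have hzJ : z ∈ J := hJ.ordConnected.out ha hb ⟨hz.1.le, hz.2.le⟩
  rcases U.strictMonoOn_or_strictAntiOn hJ with h | h
  · exact mem_uIoo_of_lt (h ha hzJ hz.1) (h hzJ hb hz.2)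
  · exact mem_uIoo_of_gt (h hzJ hb hz.2) (h ha hzJ hz.1)

lemma exists_mem_lap_map_eq (U : UnimodalMap f α K) (hJ : IsLap J) {v : ℝ}
    (hv : v ∈ Icc (-1) (f 0)) : ∃ u ∈ J, f u = v := by
  obtain ⟨u, hu, rfl⟩ := U.exists_map_eq hv
  rcases hJ with rfl | rfl
  · exact ⟨-u, ⟨neg_le_neg hu.2, neg_nonpos.mpr hu.1⟩, U.even u⟩
  · exact ⟨u, hu, rfl⟩

lemma exists_comp_eq (U : UnimodalMap f α K) (hJ : IsLap J) {ι : Type*} [LinearOrder ι]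
    {m : ι → ℝ} (hm : StrictMono m ∨ StrictAnti m) (hmem : ∀ l, m l ∈ Icc (-1) (f 0)) :
    ∃ w : ι → ℝ, (∀ l, w l ∈ J) ∧ (StrictMono w ∨ StrictAnti w) ∧ f ∘ w = m := by
  choose w hwJ hfw using fun l => U.exists_mem_lap_map_eq hJ (hmem l)
  refine ⟨w, hwJ, ?_, funext hfw⟩
  obtain rfl : f ∘ w = m := funext hfw
  rcases U.strictMonoOn_or_strictAntiOn hJ with h | h <;> rcases hm with hm | hm
  · exact .inl fun l l' hl => (h.lt_iff_lt (hwJ l) (hwJ l')).mp (hm hl)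
  · exact .inr fun l l' hl => (h.lt_iff_lt (hwJ l') (hwJ l)).mp (hm hl)
  · exact .inr fun l l' hl => (h.lt_iff_gt (hwJ l) (hwJ l')).mp (hm hl)
  · exact .inl fun l l' hl => (h.lt_iff_gt (hwJ l') (hwJ l)).mp (hm hl)

lemma crossRatio_le_of_isLap (U : UnimodalMap f α K) (hJ : IsLap J) {a b c d : ℝ} (ha : a ∈ J)
    (hd : d ∈ J) (hab : a < b) (hbc : b < c) (hcd : c < d) :
    crossRatio a b c d ≤ crossRatio (f a) (f b) (f c) (f d) * Real.exp (K * (f a - f d) ^ 2) := by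
  rcases hJ with rfl | rfl
  · have := U.crossRatio_le (-d) (-c) (-b) (-a) (by linarith [hd.2]) (by linarith) (by linarith)
      (by linarith) (by linarith [ha.1])
    simpa only [U.even, crossRatio_neg, crossRatio_rev, sub_sq_comm] using this
  · exact U.crossRatio_le a b c d ha.1 hab hbc hcd hd.2

lemma crossRatio_comp_le (U : UnimodalMap f α K) (hJ : IsLap J) {ι : Type*} [Preorder ι]
    {m : ι → ℝ} (hm : StrictMono m ∨ StrictAnti m) (hmJ : ∀ l, m l ∈ J) {i j k l : ι}
    (hij : i < j) (hjk : j < k) (hkl : k < l) :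
    crossRatio (m i) (m j) (m k) (m l) ≤
      crossRatio (f (m i)) (f (m j)) (f (m k)) (f (m l)) *
        Real.exp (K * (f (m i) - f (m l)) ^ 2) := by
  rcases hm with hm | hm
  · exact U.crossRatio_le_of_isLap hJ (hmJ i) (hmJ l) (hm hij) (hm hjk) (hm hkl)
  · have := U.crossRatio_le_of_isLap hJ (hmJ l) (hmJ i) (hm hkl) (hm hjk) (hm hij)
    rwa [crossRatio_rev, crossRatio_rev (f (m i)), sub_sq_comm] at this

end UnimodalMap

/-! ### Combinatorics of a renormalization cycle -/

lemma abs_lt_abs_of_strictMonoOn_of_notMem {F : ℝ → ℝ} {P : ℝ}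
    (hF : StrictMonoOn F (Icc 0 P)) (habs : |F 0| ≤ |F P|) (h0 : (0 : ℝ) ∉ uIcc (F 0) (F P))
    {z : ℝ} (hz : z ∈ Ioc 0 P) : |F 0| < |F z| := by
  have hP : 0 < P := hz.1.trans_le hz.2
  have hlt : F 0 < F P := hF ⟨le_rfl, hP.le⟩ ⟨hP.le, le_rfl⟩ hP
  have hpos : 0 < F 0 := by
    by_contra! hneg
    rcases le_or_gt 0 (F P) with h | h
    · exact h0 (mem_uIcc.mpr (.inl ⟨hneg, h⟩))
    · rw [abs_of_nonpos hneg, abs_of_neg h] at habs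
      linarith
  have hFz : F 0 < F z := hF ⟨le_rfl, hP.le⟩ ⟨hz.1.le, hz.2⟩ hz.1
  rwa [abs_of_pos hpos, abs_of_pos (hpos.trans hFz)]

lemma abs_lt_abs_of_strictMonoOn_or_strictAntiOn_of_notMem {F : ℝ → ℝ} {P : ℝ}
    (hF : StrictMonoOn F (Icc 0 P) ∨ StrictAntiOn F (Icc 0 P)) (habs : |F 0| ≤ |F P|)
    (h0 : (0 : ℝ) ∉ uIcc (F 0) (F P)) {z : ℝ} (hz : z ∈ Ioc 0 P) : |F 0| < |F z| := by
  rcases hF with hF | hF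
  · exact abs_lt_abs_of_strictMonoOn_of_notMem hF habs h0 hz
  · have h0' : (0 : ℝ) ∉ uIcc (-F 0) (-F P) := fun h => h0 <| by
      rcases mem_uIcc.mp h with ⟨h₁, h₂⟩ | ⟨h₁, h₂⟩
      · exact mem_uIcc.mpr (.inr ⟨by linarith, by linarith⟩)
      · exact mem_uIcc.mpr (.inl ⟨by linarith, by linarith⟩)
    simpa only [abs_neg] using abs_lt_abs_of_strictMonoOn_of_notMem (F := fun x => -F x) hF.neg
      (by simpa only [abs_neg] using habs) h0' hz

namespace RenCycle
variable {f : ℝ → ℝ} {α K : ℝ}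

/-- The radius of the central interval. -/
def radius (c : RenCycle f) : ℝ := |c.p|

/-- The orbit of the critical point, indexed so that `c.crit k` lies in the interval `k` of the
cycle; the cycle is an argument only for the sake of dot notation. -/
def crit (_c : RenCycle f) (k : ℕ) : ℝ := f^[k + 1] 0

/-- The orbit of the right endpoint of the central interval, indexed so that `c.bdry k` lies in the
interval `k` of the cycle. -/
def bdry (c : RenCycle f) (k : ℕ) : ℝ := f^[k + 1] c.radius

/-- The convex hull of the two orbits marking the interval `k` of the cycle. -/
def hull (c : RenCycle f) (k : ℕ) : Set ℝ := uIcc (c.crit k) (c.bdry k)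

variable (c : RenCycle f)

lemma q_pos : 0 < c.q := zero_lt_one.trans c.one_lt

lemma q_pred_lt : c.q - 1 < c.q := Nat.sub_lt c.q_pos one_pos

lemma q_pred_add_one : c.q - 1 + 1 = c.q := Nat.sub_add_cancel c.one_lt.le

lemma a_last : c.a (c.q - 1) = -c.radius := c.central_a

lemma b_last : c.b (c.q - 1) = c.radius := c.central_b

lemma radius_pos : 0 < c.radius := by
  have := c.lt (c.q - 1) c.q_pred_lt
  rw [c.a_last, c.b_last] at this
  linarith

lemma radius_lt_one : c.radius < 1 := abs_lt.mpr c.hp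

lemma crit_zero : c.crit 0 = f 0 := rfl

lemma crit_succ (k : ℕ) : c.crit (k + 1) = f (c.crit k) :=
  Function.iterate_succ_apply' f (k + 1) 0

lemma bdry_succ (k : ℕ) : c.bdry (k + 1) = f (c.bdry k) :=
  Function.iterate_succ_apply' f (k + 1) c.radius

lemma image_iterate {k : ℕ} (hk : k < c.q) :
    f^[k] '' Icc (c.a 0) (c.b 0) = Icc (c.a k) (c.b k) := by
  induction k with
  | zero => exact image_id _
  | succ k ih => rw [Function.iterate_succ', image_comp, ih (by omega), c.maps_img k hk]

lemma iterate_mem_of_mem_first {z : ℝ} (hz : z ∈ Icc (c.a 0) (c.b 0)) {k : ℕ} (hk : k < c.q) :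
    f^[k] z ∈ Icc (c.a k) (c.b k) :=
  c.image_iterate hk ▸ mem_image_of_mem _ hz

lemma mapsTo_first : MapsTo f (Icc (-c.radius) c.radius) (Icc (c.a 0) (c.b 0)) := fun z hz =>
  c.ret (mem_image_of_mem f (by rwa [c.a_last, c.b_last]))

lemma iterate_mem {z : ℝ} (hz : z ∈ Icc (-c.radius) c.radius) {k : ℕ} (hk : k < c.q) :
    f^[k + 1] z ∈ Icc (c.a k) (c.b k) :=
  c.iterate_mem_of_mem_first (c.mapsTo_first hz) hk

lemma iterate_iterate_period_mem {z : ℝ} (hz : z ∈ Icc (-c.radius) c.radius) (s : ℕ) :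
    (f^[c.q])^[s] z ∈ Icc (-c.radius) c.radius := by
  induction s with
  | zero => exact hz
  | succ s ih =>
    have := c.iterate_mem ih c.q_pred_lt
    rwa [c.a_last, c.b_last, c.q_pred_add_one, ← Function.iterate_succ_apply' f^[c.q]] at this

lemma iterate_mem_mod {z : ℝ} (hz : z ∈ Icc (-c.radius) c.radius) (i : ℕ) :
    f^[i + 1] z ∈ Icc (c.a (i % c.q)) (c.b (i % c.q)) := by
  have h := c.iterate_mem (c.iterate_iterate_period_mem hz (i / c.q)) (Nat.mod_lt i c.q_pos)
  rwa [← Function.iterate_mul, ← Function.iterate_add_apply,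
    show i % c.q + 1 + c.q * (i / c.q) = i + 1 by linarith [Nat.div_add_mod i c.q]] at h

lemma zero_mem_central : (0 : ℝ) ∈ Icc (-c.radius) c.radius :=
  ⟨neg_nonpos.mpr c.radius_pos.le, c.radius_pos.le⟩

lemma radius_mem_central : c.radius ∈ Icc (-c.radius) c.radius :=
  ⟨neg_le_self c.radius_pos.le, le_rfl⟩

lemma crit_mem {i : ℕ} (hi : i < c.q) : c.crit i ∈ Icc (c.a i) (c.b i) :=
  c.iterate_mem c.zero_mem_central hi

lemma bdry_mem {i : ℕ} (hi : i < c.q) : c.bdry i ∈ Icc (c.a i) (c.b i) :=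
  c.iterate_mem c.radius_mem_central hi

lemma abs_crit_last_le : |c.crit (c.q - 1)| ≤ c.radius := by
  have := c.crit_mem c.q_pred_lt
  rw [c.a_last, c.b_last] at this
  exact abs_le.mpr this

lemma neg_one_le_a {i : ℕ} (hi : i < c.q) : -1 ≤ c.a i :=
  (c.sub i hi ⟨le_rfl, (c.lt i hi).le⟩).1

lemma b_le_one {i : ℕ} (hi : i < c.q) : c.b i ≤ 1 :=
  (c.sub i hi ⟨(c.lt i hi).le, le_rfl⟩).2

lemma b_le_a_or_b_le_a {k l : ℕ} (hk : k < c.q) (hl : l < c.q) (hkl : k ≠ l) :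
    c.b k ≤ c.a l ∨ c.b l ≤ c.a k := by
  by_contra! h
  have hlt : max (c.a k) (c.a l) < min (c.b k) (c.b l) :=
    max_lt (lt_min (c.lt k hk) h.2) (lt_min h.1 (c.lt l hl))
  have hdisj := c.disj k hk l hl hkl
  rw [Ioo_inter_Ioo] at hdisj
  exact (nonempty_Ioo.mpr hlt).ne_empty hdisj

lemma zero_le_a_or_b_le_zero (U : UnimodalMap f α K) {k : ℕ} (hk : k + 1 < c.q) :
    0 ≤ c.a k ∨ c.b k ≤ 0 := by
  by_contra! ⟨ha, hb⟩
  set d := min (-c.a k) (c.b k)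
  have hd : 0 < d := lt_min (by linarith) hb
  have hda : d ≤ -c.a k := min_le_left _ _
  have hdb : d ≤ c.b k := min_le_right _ _
  have := c.maps_inj k hk (⟨by linarith, by linarith⟩ : -d ∈ Icc (c.a k) (c.b k))
    (⟨by linarith, hdb⟩ : d ∈ Icc (c.a k) (c.b k)) (U.even d)
  linarith

lemma exists_isLap (U : UnimodalMap f α K) {k : ℕ} (hk : k + 1 < c.q) :
    ∃ J, IsLap J ∧ Icc (c.a k) (c.b k) ⊆ J := by
  rcases c.zero_le_a_or_b_le_zero U hk with h | h
  · exact ⟨_, .inr rfl, Icc_subset_Icc h (c.b_le_one (by omega))⟩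
  · exact ⟨_, .inl rfl, Icc_subset_Icc (c.neg_one_le_a (by omega)) h⟩

lemma strictMonoOn_or_strictAntiOn (U : UnimodalMap f α K) {k : ℕ} (hk : k + 1 < c.q) :
    StrictMonoOn f (Icc (c.a k) (c.b k)) ∨ StrictAntiOn f (Icc (c.a k) (c.b k)) := by
  obtain ⟨J, hJ, hsub⟩ := c.exists_isLap U hk
  exact (U.strictMonoOn_or_strictAntiOn hJ).imp (fun h => h.mono hsub) (fun h => h.mono hsub)

lemma iterate_strictMonoOn_or_strictAntiOn (U : UnimodalMap f α K) {k : ℕ} (hk : k < c.q) :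
    StrictMonoOn f^[k] (Icc (c.a 0) (c.b 0)) ∨ StrictAntiOn f^[k] (Icc (c.a 0) (c.b 0)) := by
  induction k with
  | zero => exact .inl (strictMono_id.strictMonoOn _)
  | succ k ih =>
    have hmaps : MapsTo f^[k] (Icc (c.a 0) (c.b 0)) (Icc (c.a k) (c.b k)) := fun z hz =>
      c.iterate_mem_of_mem_first hz (by omega)
    rw [Function.iterate_succ']
    rcases c.strictMonoOn_or_strictAntiOn U hk with h | h <;> rcases ih (by omega) with h' | h'
    · exact .inl (h.comp h' hmaps)
    · exact .inr (h.comp_strictAntiOn h' hmaps)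
    · exact .inr (h.comp_strictMonoOn h' hmaps)
    · exact .inl (h.comp h' hmaps)

lemma iterate_succ_strictMonoOn_or_strictAntiOn (U : UnimodalMap f α K) {k : ℕ} (hk : k < c.q) :
    StrictMonoOn f^[k + 1] (Icc 0 c.radius) ∨ StrictAntiOn f^[k + 1] (Icc 0 c.radius) := by
  have hmaps : MapsTo f (Icc 0 c.radius) (Icc (c.a 0) (c.b 0)) :=
    c.mapsTo_first.mono_left (Icc_subset_Icc_left (neg_nonpos.mpr c.radius_pos.le))
  have hanti : StrictAntiOn f (Icc 0 c.radius) :=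
    U.strictAntiOn.mono (Icc_subset_Icc le_rfl c.radius_lt_one.le)
  exact (c.iterate_strictMonoOn_or_strictAntiOn U hk).symm.imp
    (fun h => h.comp hanti hmaps) (fun h => h.comp_strictAntiOn hanti hmaps)

lemma crit_ne_bdry (U : UnimodalMap f α K) {k : ℕ} (hk : k < c.q) : c.crit k ≠ c.bdry k := by
  have h₀ : (0 : ℝ) ∈ Icc 0 c.radius := ⟨le_rfl, c.radius_pos.le⟩
  have h₁ : c.radius ∈ Icc 0 c.radius := ⟨c.radius_pos.le, le_rfl⟩
  rcases c.iterate_succ_strictMonoOn_or_strictAntiOn U hk with h | h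
  · exact fun heq => c.radius_pos.ne (h.injOn h₀ h₁ heq)
  · exact fun heq => c.radius_pos.ne (h.injOn h₀ h₁ heq)

lemma map_radius_lt_map_zero (U : UnimodalMap f α K) : f c.radius < f 0 :=
  U.map_lt_of_abs_lt (by simpa using c.radius_pos) c.radius_lt_one.le

lemma b_le_map_zero (U : UnimodalMap f α K) {k : ℕ} (hk : k + 1 < c.q) : c.b (k + 1) ≤ f 0 := by
  have hb : c.b (k + 1) ∈ f '' Icc (c.a k) (c.b k) := by
    rw [c.maps_img k hk]; exact ⟨(c.lt _ hk).le, le_rfl⟩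
  obtain ⟨z, hz, hzb⟩ := hb
  rw [← hzb]
  exact U.map_le_map_zero (c.sub k (by omega) hz)

lemma le_map_radius (U : UnimodalMap f α K) {k : ℕ} (hk : k + 1 < c.q) {z : ℝ}
    (hz : z ∈ Icc (c.a (k + 1)) (c.b (k + 1))) : z ≤ f c.radius := by
  have hfirst : c.b (k + 1) ≤ c.a 0 := by
    refine (c.b_le_a_or_b_le_a hk c.q_pos (by omega)).resolve_right fun h => ?_
    have hcrit := (c.crit_mem c.q_pos).2
    rw [c.crit_zero] at hcrit
    linarith [c.b_le_map_zero U hk, c.lt (k + 1) hk]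
  exact hz.2.trans (hfirst.trans (c.bdry_mem c.q_pos).1)

lemma iterate_period_abs (U : UnimodalMap f α K) (z : ℝ) : f^[c.q] |z| = f^[c.q] z := by
  rw [← c.q_pred_add_one, Function.iterate_succ_apply, Function.iterate_succ_apply, U.map_abs]

lemma iterate_period_radius (U : UnimodalMap f α K) : f^[c.q] c.radius = c.p :=
  (c.iterate_period_abs U c.p).trans c.periodic

/-- `c'` is a cycle of larger period, a multiple of that of `c`, nested inside `c`. -/
structure Nested (c c' : RenCycle f) : Prop where
  dvd : c.q ∣ c'.q
  lt : c.q < c'.q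
  exists_subset : ∀ i < c'.q, ∃ j < c.q, Icc (c'.a i) (c'.b i) ⊆ Icc (c.a j) (c.b j)

namespace Nested
variable {c} {c' : RenCycle f}

lemma radius_le (D : c.Nested c') (U : UnimodalMap f α K) : c'.radius ≤ c.radius := by
  obtain ⟨j, hj, hsub⟩ := D.exists_subset (c'.q - 1) c'.q_pred_lt
  rw [c'.a_last, c'.b_last] at hsub
  have hpos := c'.radius_pos
  have hneg := hsub (⟨le_rfl, by linarith⟩ : -c'.radius ∈ Icc (-c'.radius) c'.radius)
  have hradius := hsub c'.radius_mem_central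
  rcases (show j + 1 < c.q ∨ j = c.q - 1 by omega) with hjq | rfl
  · rcases c.zero_le_a_or_b_le_zero U hjq with h | h
    · linarith [hneg.1]
    · linarith [hradius.2]
  · exact c.b_last ▸ hradius.2

lemma radius_le_abs_crit (D : c.Nested c') : c'.radius ≤ |c.crit (c.q - 1)| := by
  have hlt := D.lt
  have hq := c.q_pos
  have hmem : c.crit (c.q - 1) ∈ Icc (c'.a (c.q - 1)) (c'.b (c.q - 1)) :=
    c'.crit_mem (i := c.q - 1) (by omega)
  rw [le_abs']
  rcases c'.b_le_a_or_b_le_a (k := c.q - 1) (l := c'.q - 1) (by omega) (by omega) (by omega)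
    with h | h
  · exact .inl (hmem.2.trans (c'.a_last ▸ h))
  · exact .inr ((c'.b_last ▸ h).trans hmem.1)

/-- Otherwise `|f^q|` would exceed its critical value off the critical point, so that the periodic
orbit of the endpoint of the deeper central interval could never return to that interval. -/
lemma zero_mem_hull (D : c.Nested c') (U : UnimodalMap f α K) :
    (0 : ℝ) ∈ c.hull (c.q - 1) := by
  by_contra hzero
  set F := f^[c.q] with hF
  have hcrit : c.crit (c.q - 1) = F 0 := by unfold crit; rw [c.q_pred_add_one]
  have hbdry : c.bdry (c.q - 1) = F c.radius := by unfold bdry; rw [c.q_pred_add_one]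
  have hradius : |F c.radius| = c.radius := by rw [hF, c.iterate_period_radius U]; rfl
  have hmono := c.iterate_succ_strictMonoOn_or_strictAntiOn U c.q_pred_lt
  rw [c.q_pred_add_one] at hmono
  have hle : |F 0| ≤ |F c.radius| := by
    rw [hradius, ← hcrit]; exact c.abs_crit_last_le
  rw [hull, hcrit, hbdry] at hzero
  have hexpand : ∀ z ∈ Icc (-c.radius) c.radius, z ≠ 0 → |F 0| < |F z| := fun z hz hz0 =>
    (abs_lt_abs_of_strictMonoOn_or_strictAntiOn_of_notMem hmono hle hzero
      ⟨abs_pos.mpr hz0, abs_le.mpr hz⟩).trans_eq (congrArg abs (c.iterate_period_abs U z))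
  have hne : ∀ z ∈ Icc (-c.radius) c.radius, F z ≠ 0 := fun z hz => by
    rcases eq_or_ne z 0 with rfl | hz0
    · intro h
      rw [h] at hzero
      exact hzero left_mem_uIcc
    · exact abs_pos.mp ((abs_nonneg _).trans_lt (hexpand z hz hz0))
  obtain ⟨s, hs⟩ := D.dvd
  obtain ⟨s, rfl⟩ : ∃ s', s = s' + 1 + 1 := ⟨s - 2, by
    have := D.lt
    rcases s with _ | _ | s
    · omega
    · omega
    · rfl⟩
  have hper : |F^[s + 1 + 1] c'.radius| = c'.radius := by
    have := c'.iterate_period_radius U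
    rw [hs, Function.iterate_mul] at this
    rw [hF, this]; rfl
  have hmem := c.iterate_iterate_period_mem (z := c'.radius)
    ⟨by linarith [c.radius_pos, c'.radius_pos], D.radius_le U⟩
  have hreturn := hexpand _ (hmem (s + 1))
    (by rw [Function.iterate_succ_apply']; exact hne _ (hmem s))
  rw [← Function.iterate_succ_apply' F, hper, ← hcrit] at hreturn
  exact absurd D.radius_le_abs_crit (not_le.mpr hreturn)

end Nested

end RenCycle

/-! ### Pulling back frames along a cycle -/

/-- All entries of the tuple lie in a single lap. -/
def OneSided {ι : Type*} (m : ι → ℝ) : Prop := ∃ J, IsLap J ∧ ∀ l, m l ∈ J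

lemma mem_uIcc_zero_five {m : Fin 6 → ℝ} (hm : StrictMono m ∨ StrictAnti m) (l : Fin 6) :
    m l ∈ uIcc (m 0) (m 5) := by
  have h₀ : 0 ≤ l := Fin.zero_le l
  have h₅ : l ≤ 5 := Fin.le_last l
  rcases hm with h | h
  · exact Set.mem_uIcc.mpr (.inl ⟨h.monotone h₀, h.monotone h₅⟩)
  · exact Set.mem_uIcc.mpr (.inr ⟨h.antitone h₅, h.antitone h₀⟩)

namespace RenCycle
variable {f : ℝ → ℝ} {α K : ℝ}

/-- `s` and `e` are points of the first interval enclosing the hull that marks it. Their orbits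
then enclose the hulls marking the later intervals. -/
structure Spans (c : RenCycle f) (s e : ℝ) : Prop where
  left_mem : s ∈ Icc (c.a 0) (c.b 0)
  right_mem : e ∈ Icc (c.a 0) (c.b 0)
  hull_subset : c.hull 0 ⊆ uIcc s e

lemma spans_hull (c : RenCycle f) : c.Spans (f 0) (f c.radius) :=
  ⟨c.crit_mem c.q_pos, c.bdry_mem c.q_pos, Subset.rfl⟩

lemma spans_Icc (c : RenCycle f) : c.Spans (c.a 0) (c.b 0) where
  left_mem := ⟨le_rfl, (c.lt 0 c.q_pos).le⟩
  right_mem := ⟨(c.lt 0 c.q_pos).le, le_rfl⟩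
  hull_subset := (uIcc_subset_Icc (c.crit_mem c.q_pos) (c.bdry_mem c.q_pos)).trans Icc_subset_uIcc

lemma Spans.hull_subset_uIcc {c : RenCycle f} {s e : ℝ} (S : c.Spans s e) (U : UnimodalMap f α K)
    {k : ℕ} (hk : k < c.q) : c.hull k ⊆ uIcc (f^[k] s) (f^[k] e) := by
  have hsub : uIcc s e ⊆ Icc (c.a 0) (c.b 0) := uIcc_subset_Icc S.left_mem S.right_mem
  have hmaps : MapsTo f^[k] (uIcc s e) (uIcc (f^[k] s) (f^[k] e)) := by
    rcases c.iterate_strictMonoOn_or_strictAntiOn U hk with h | h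
    · exact (h.mono hsub).monotoneOn.mapsTo_uIcc
    · exact (h.mono hsub).antitoneOn.mapsTo_uIcc
  exact uIcc_subset_uIcc (hmaps (S.hull_subset left_mem_uIcc))
    (hmaps (S.hull_subset right_mem_uIcc))

/-- A monotone sextuple `m` in `[-1,1]` around the interval `j` of the cycle: its middle entries
are the images of `s` and `e`, and its hull swallows the mark of no other interval. -/
structure Frame (c : RenCycle f) (s e : ℝ) (j : ℕ) (m : Fin 6 → ℝ) : Prop where
  mono : StrictMono m ∨ StrictAnti m
  mem : ∀ l, m l ∈ Icc (-1 : ℝ) 1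
  left_eq : m 2 = f^[j] s
  right_eq : m 3 = f^[j] e
  avoid : ∀ k < c.q, k ≠ j → ¬ c.hull k ⊆ uIoo (m 0) (m 5)

namespace Frame
variable {c : RenCycle f} {s e : ℝ} {j : ℕ} {m : Fin 6 → ℝ}

lemma inf_lt_inf (T : c.Frame s e j m) : m 0 ⊓ m 5 < m 2 ⊓ m 3 := by
  rcases T.mono with h | h
  · exact lt_inf_iff.mpr ⟨inf_lt_of_left_lt (h (by decide)), inf_lt_of_left_lt (h (by decide))⟩
  · exact lt_inf_iff.mpr ⟨inf_lt_of_right_lt (h (by decide)), inf_lt_of_right_lt (h (by decide))⟩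

lemma sup_lt_sup (T : c.Frame s e j m) : m 2 ⊔ m 3 < m 0 ⊔ m 5 := by
  rcases T.mono with h | h
  · exact sup_lt_iff.mpr ⟨lt_sup_of_lt_right (h (by decide)), lt_sup_of_lt_right (h (by decide))⟩
  · exact sup_lt_iff.mpr ⟨lt_sup_of_lt_left (h (by decide)), lt_sup_of_lt_left (h (by decide))⟩

lemma mem_uIcc (T : c.Frame s e j m) (l : Fin 6) : m l ∈ uIcc (m 0) (m 5) :=
  mem_uIcc_zero_five T.mono l

lemma abs_sub_le (T : c.Frame s e j m) (k l : Fin 6) : |m k - m l| ≤ |m 0 - m 5| := by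
  have := abs_sub_le_of_uIcc_subset_uIcc (uIcc_subset_uIcc (T.mem_uIcc l) (T.mem_uIcc k))
  rwa [abs_sub_comm (m 0)]

/-- A frame reaching beyond the critical value would swallow the mark of the first interval. -/
lemma le_map_zero (T : c.Frame s e (j + 1) m) (U : UnimodalMap f α K)
    (hs : s ∈ Icc (c.a 0) (c.b 0)) (hj : j + 1 < c.q) (l : Fin 6) : m l ≤ f 0 := by
  by_contra! hl
  have hm : m 2 ≤ f c.radius := by
    rw [T.left_eq]; exact c.le_map_radius U hj (c.iterate_mem_of_mem_first hs hj)
  have hlow : m 0 ⊓ m 5 < f c.radius := (T.inf_lt_inf.trans_le inf_le_left).trans_le hm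
  have hlt := c.map_radius_lt_map_zero U
  have hhigh : f 0 < m 0 ⊔ m 5 := hl.trans_le (T.mem_uIcc l).2
  exact T.avoid 0 c.q_pos (by omega)
    (ordConnected_Ioo.uIcc_subset ⟨hlow.trans hlt, hhigh⟩ ⟨hlow, hlt.trans hhigh⟩)

lemma exists_comp_eq (T : c.Frame s e (j + 1) m) (U : UnimodalMap f α K)
    (h0 : 0 ∈ c.hull (c.q - 1)) (S : c.Spans s e) (hj : j + 1 < c.q) :
    ∃ m', c.Frame s e j m' ∧ OneSided m' ∧ f ∘ m' = m := by
  obtain ⟨J, hJ, hsub⟩ := c.exists_isLap U hj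
  obtain ⟨m', hm'J, hm', rfl⟩ := U.exists_comp_eq hJ T.mono fun l =>
    ⟨(T.mem l).1, T.le_map_zero U S.left_mem hj l⟩
  have hinj {l : Fin 6} {z : ℝ} (hz : z ∈ Icc (c.a 0) (c.b 0)) (h : f (m' l) = f^[j + 1] z) :
      m' l = f^[j] z := by
    rw [Function.iterate_succ_apply'] at h
    exact U.injOn hJ (hm'J l) (hsub (c.iterate_mem_of_mem_first hz (by omega))) h
  refine ⟨m', ⟨hm', fun l => hJ.subset_Icc (hm'J l), hinj S.left_mem T.left_eq,
    hinj S.right_mem T.right_eq, fun k hk hkj hhull => ?_⟩, ⟨J, hJ, hm'J⟩, rfl⟩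
  rcases (show k + 1 < c.q ∨ k = c.q - 1 by omega) with hkq | rfl
  · refine T.avoid (k + 1) hkq (by omega) (ordConnected_Ioo.uIcc_subset ?_ ?_)
    · rw [c.crit_succ]
      exact U.map_mem_uIoo hJ (hm'J 0) (hm'J 5) (hhull left_mem_uIcc)
    · rw [c.bdry_succ]
      exact U.map_mem_uIoo hJ (hm'J 0) (hm'J 5) (hhull right_mem_uIcc)
  · exact hJ.zero_notMem_uIoo (hm'J 0) (hm'J 5) (hhull h0)

end Frame

/-- The forward orbit of the sextuple `m` consists of frames around the first `j + 1` intervals,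
and `f` is monotone on the hulls of all of them but the last. -/
structure Chain (c : RenCycle f) (s e : ℝ) (j : ℕ) (m : Fin 6 → ℝ) : Prop where
  frame : ∀ i ≤ j, c.Frame s e i (f^[i] ∘ m)
  oneSided : ∀ i < j, OneSided (f^[i] ∘ m)

lemma Frame.exists_chain {c : RenCycle f} {s e : ℝ} {j : ℕ} {m : Fin 6 → ℝ}
    (T : c.Frame s e j m) (U : UnimodalMap f α K) (h0 : 0 ∈ c.hull (c.q - 1)) (S : c.Spans s e)
    (hj : j < c.q) : ∃ m₀, c.Chain s e j m₀ ∧ f^[j] ∘ m₀ = m := by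
  induction j generalizing m with
  | zero =>
    refine ⟨m, ⟨fun i hi => ?_, fun i hi => absurd hi (by omega)⟩, rfl⟩
    obtain rfl : i = 0 := by omega
    exact T
  | succ j ih =>
    obtain ⟨m', T', hm', rfl⟩ := T.exists_comp_eq U h0 S hj
    obtain ⟨m₀, Ch, rfl⟩ := ih T' (by omega)
    have hsucc : f^[j + 1] ∘ m₀ = f ∘ f^[j] ∘ m₀ := by rw [Function.iterate_succ']; rfl
    refine ⟨m₀, ⟨fun i hi => ?_, fun i hi => ?_⟩, hsucc⟩
    · rcases hi.lt_or_eq with hi | rfl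
      · exact Ch.frame i (by omega)
      · exact hsucc ▸ T
    · rcases (show i < j ∨ i = j by omega) with hi | rfl
      · exact Ch.oneSided i hi
      · exact hm'

end RenCycle

/-! ### Total length of overlapping intervals -/

section SumLength
variable {ι : Type*} {t : Finset ι} {A B : ℝ}

open MeasureTheory in
lemma sum_sub_le_of_pairwiseDisjoint {u v : ι → ℝ} (hAB : A ≤ B) (hu : ∀ i ∈ t, A ≤ u i)
    (huv : ∀ i ∈ t, u i ≤ v i) (hv : ∀ i ∈ t, v i ≤ B)
    (hd : (t : Set ι).PairwiseDisjoint fun i => Ioo (u i) (v i)) :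
    ∑ i ∈ t, (v i - u i) ≤ B - A := by
  have hsub : ⋃ i ∈ t, Ioo (u i) (v i) ⊆ Icc A B := iUnion₂_subset fun i hi =>
    Ioo_subset_Icc_self.trans (Icc_subset_Icc (hu i hi) (hv i hi))
  calc ∑ i ∈ t, (v i - u i) = ∑ i ∈ t, volume.real (Ioo (u i) (v i)) :=
        Finset.sum_congr rfl fun i hi => (Real.volume_real_Ioo_of_le (huv i hi)).symm
    _ = volume.real (⋃ i ∈ t, Ioo (u i) (v i)) :=
        (measureReal_biUnion_finset hd (fun _ _ => measurableSet_Ioo)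
          fun _ _ => measure_Ioo_lt_top.ne).symm
    _ ≤ volume.real (Icc A B) := measureReal_mono hsub measure_Icc_lt_top.ne
    _ = B - A := Real.volume_real_Icc_of_le hAB

/-- The left parts, the middle parts and the right parts are three disjoint families. -/
lemma sum_sub_le_of_not_swallow {l s e r : ι → ℝ} (hAB : A ≤ B) (hl : ∀ i ∈ t, A ≤ l i)
    (hls : ∀ i ∈ t, l i < s i) (hse : ∀ i ∈ t, s i ≤ e i) (her : ∀ i ∈ t, e i < r i)
    (hr : ∀ i ∈ t, r i ≤ B) (hd : ∀ i ∈ t, ∀ k ∈ t, i ≠ k → e i ≤ s k ∨ e k ≤ s i)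
    (hno : ∀ i ∈ t, ∀ k ∈ t, i ≠ k → ¬ (l k < s i ∧ e i < r k)) :
    ∑ i ∈ t, (r i - l i) ≤ 3 * (B - A) := by
  have hleft : ∑ i ∈ t, (s i - l i) ≤ B - A := by
    refine sum_sub_le_of_pairwiseDisjoint hAB hl (fun i hi => (hls i hi).le)
      (fun i hi => ((hse i hi).trans (her i hi).le).trans (hr i hi)) fun i hi k hk hik => ?_
    refine disjoint_left.mpr fun z hzi hzk => ?_
    rcases hd i hi k hk hik with h | h
    · exact hno i hi k hk hik
        ⟨hzk.1.trans hzi.2, (h.trans (hse k hk)).trans_lt (her k hk)⟩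
    · exact hno k hk i hi hik.symm
        ⟨hzi.1.trans hzk.2, (h.trans (hse i hi)).trans_lt (her i hi)⟩
  have hmiddle : ∑ i ∈ t, (e i - s i) ≤ B - A := by
    refine sum_sub_le_of_pairwiseDisjoint hAB (fun i hi => (hl i hi).trans (hls i hi).le) hse
      (fun i hi => (her i hi).le.trans (hr i hi)) fun i hi k hk hik => ?_
    refine disjoint_left.mpr fun z hzi hzk => ?_
    rcases hd i hi k hk hik with h | h
    · exact (hzi.2.trans_le h).not_gt hzk.1
    · exact (hzk.2.trans_le h).not_gt hzi.1
  have hright : ∑ i ∈ t, (r i - e i) ≤ B - A := by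
    refine sum_sub_le_of_pairwiseDisjoint hAB
      (fun i hi => (hl i hi).trans ((hls i hi).le.trans (hse i hi)))
      (fun i hi => (her i hi).le) hr fun i hi k hk hik => ?_
    refine disjoint_left.mpr fun z hzi hzk => ?_
    rcases hd i hi k hk hik with h | h
    · exact hno k hk i hi hik.symm
        ⟨(hls i hi).trans_le ((hse i hi).trans h), hzk.1.trans hzi.2⟩
    · exact hno i hi k hk hik
        ⟨(hls k hk).trans_le ((hse k hk).trans h), hzi.1.trans hzk.2⟩
  calc ∑ i ∈ t, (r i - l i) = ∑ i ∈ t, ((s i - l i) + (e i - s i) + (r i - e i)) :=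
        Finset.sum_congr rfl fun i _ => by ring
    _ ≤ 3 * (B - A) := by
        rw [Finset.sum_add_distrib, Finset.sum_add_distrib]
        linarith

end SumLength

/-! ### The real Koebe principle along a cycle -/

lemma sub_le_mul_of_crossRatio_le {a b c d Y : ℝ} (hab : a < b) (hbc : b < c) (hcd : c < d)
    (hY : crossRatio a b c d ≤ Y) : c - b ≤ Y * (d - c) := by
  have hu : 0 < b - a := sub_pos.mpr hab
  have hv : 0 < c - b := sub_pos.mpr hbc
  have hw : 0 < d - c := sub_pos.mpr hcd
  rw [crossRatio, div_le_iff₀ (by positivity)] at hY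
  refine le_of_mul_le_mul_left ?_ hu
  calc (b - a) * (c - b) ≤ (c - a) * (d - b) := by
        refine mul_le_mul ?_ ?_ hv.le ?_ <;> linarith
    _ ≤ (b - a) * (Y * (d - c)) := hY.trans_eq (by ring)

section Gaps
variable {ι : Type*} [Preorder ι] {m : ι → ℝ} {i j k l : ι} {Y : ℝ}

lemma abs_sub_le_mul_right_of_crossRatio_le (hm : StrictMono m ∨ StrictAnti m) (hij : i < j)
    (hjk : j < k) (hkl : k < l) (hY : crossRatio (m i) (m j) (m k) (m l) ≤ Y) :
    |m k - m j| ≤ Y * |m l - m k| := by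
  rcases hm with hm | hm
  · rw [abs_of_pos (sub_pos.mpr (hm hjk)), abs_of_pos (sub_pos.mpr (hm hkl))]
    exact sub_le_mul_of_crossRatio_le (hm hij) (hm hjk) (hm hkl) hY
  · rw [abs_of_neg (sub_neg.mpr (hm hjk)), abs_of_neg (sub_neg.mpr (hm hkl))]
    have := sub_le_mul_of_crossRatio_le (neg_lt_neg (hm hij)) (neg_lt_neg (hm hjk))
      (neg_lt_neg (hm hkl)) ((crossRatio_neg _ _ _ _).trans_le hY)
    simpa only [neg_sub, sub_neg_eq_add, neg_add_eq_sub] using this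

lemma abs_sub_le_mul_left_of_crossRatio_le (hm : StrictMono m ∨ StrictAnti m) (hij : i < j)
    (hjk : j < k) (hkl : k < l) (hY : crossRatio (m i) (m j) (m k) (m l) ≤ Y) :
    |m k - m j| ≤ Y * |m j - m i| := by
  have hdual : StrictMono (m ∘ OrderDual.ofDual) ∨ StrictAnti (m ∘ OrderDual.ofDual) :=
    hm.symm.imp StrictAnti.dual_left StrictMono.dual_left
  have := abs_sub_le_mul_right_of_crossRatio_le hdual (i := .toDual l) (j := .toDual k)
    (k := .toDual j) (l := .toDual i) hkl hjk hij ((crossRatio_rev _ _ _ _).trans_le hY)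
  rw [abs_sub_comm (m k), abs_sub_comm (m j) (m i)]
  exact this

lemma crossRatio_comp_nonneg (hm : StrictMono m ∨ StrictAnti m) (hij : i < j) (hjk : j < k)
    (hkl : k < l) : 0 ≤ crossRatio (m i) (m j) (m k) (m l) := by
  rcases hm with hm | hm
  · exact crossRatio_nonneg (hm hij).le (hm hjk).le (hm hkl).le
  · rw [← crossRatio_rev]
    exact crossRatio_nonneg (hm hkl).le (hm hjk).le (hm hij).le

end Gaps

lemma le_mul_exp_sum_of_le_mul_exp {u v : ℕ → ℝ} {j : ℕ}
    (h : ∀ i < j, u i ≤ u (i + 1) * Real.exp (v (i + 1))) {i : ℕ} (hi : i ≤ j) :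
    u i ≤ u j * Real.exp (∑ k ∈ Finset.Ioc i j, v k) := by
  induction j, hi using Nat.le_induction with
  | base => simp
  | succ j hij ih =>
    calc u i ≤ u j * Real.exp (∑ k ∈ Finset.Ioc i j, v k) := ih fun i hi => h i (by omega)
      _ ≤ u (j + 1) * Real.exp (v (j + 1)) * Real.exp (∑ k ∈ Finset.Ioc i j, v k) := by
          gcongr
          exact h j (by omega)
      _ = u (j + 1) * Real.exp (∑ k ∈ Finset.Ioc i (j + 1), v k) := by
          rw [Finset.sum_Ioc_succ_top hij, Real.exp_add]
          ring

/-- A bound for the accumulated distortion of cross ratios along a cycle whose intervals have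
length at most `η`, for a map distorting each quadruple by at most `exp (K * |image|²)`; it tends
to `1` as `η` tends to `0`. The images have total length at most `6` and each of them has length
at most `2`, whence `12`; the crude bound so obtained gives the second term of the minimum. -/
def cycleDistortion (K η : ℝ) : ℝ :=
  Real.exp (K * min 12 (6 * ((8 * Real.exp (12 * K) + 1) * η)))

namespace RenCycle
variable {f : ℝ → ℝ} {α K η : ℝ} {c : RenCycle f} {s e : ℝ} {j : ℕ} {m : Fin 6 → ℝ}

namespace Chain

lemma sum_abs_sub_le (Ch : c.Chain s e j m) (U : UnimodalMap f α K) (S : c.Spans s e)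
    (hj : j < c.q) : ∑ i ∈ Finset.range (j + 1), |f^[i] (m 0) - f^[i] (m 5)| ≤ 6 := by
  have hF : ∀ i ∈ Finset.range (j + 1), c.Frame s e i (f^[i] ∘ m) := fun i hi =>
    Ch.frame i (by simpa [Nat.lt_succ_iff] using hi)
  have hq : ∀ i ∈ Finset.range (j + 1), i < c.q := fun i hi =>
    (Finset.mem_range_succ_iff.mp hi).trans_lt hj
  set L : Fin 6 → Fin 6 → ℕ → ℝ := fun k l i => f^[i] (m k) ⊓ f^[i] (m l)
  set R : Fin 6 → Fin 6 → ℕ → ℝ := fun k l i => f^[i] (m k) ⊔ f^[i] (m l)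
  have hmiddle : ∀ i ∈ Finset.range (j + 1), c.a i ≤ L 2 3 i ∧ R 2 3 i ≤ c.b i := fun i hi => by
    have hs := c.iterate_mem_of_mem_first S.left_mem (hq i hi)
    have he := c.iterate_mem_of_mem_first S.right_mem (hq i hi)
    rw [← (hF i hi).left_eq] at hs
    rw [← (hF i hi).right_eq] at he
    exact ⟨le_inf hs.1 he.1, sup_le hs.2 he.2⟩
  have hsum : ∑ i ∈ Finset.range (j + 1), (R 0 5 i - L 0 5 i) ≤ 3 * (1 - -1) := by
    refine sum_sub_le_of_not_swallow (s := L 2 3) (e := R 2 3) (by norm_num)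
      (fun i hi => le_inf ((hF i hi).mem 0).1 ((hF i hi).mem 5).1)
      (fun i hi => (hF i hi).inf_lt_inf) (fun i _ => inf_le_sup) (fun i hi => (hF i hi).sup_lt_sup)
      (fun i hi => sup_le ((hF i hi).mem 0).2 ((hF i hi).mem 5).2) ?_ ?_
    · intro i hi k hk hik
      exact (c.b_le_a_or_b_le_a (hq i hi) (hq k hk) hik).imp
        (fun h => ((hmiddle i hi).2.trans h).trans (hmiddle k hk).1)
        (fun h => ((hmiddle k hk).2.trans h).trans (hmiddle i hi).1)
    · rintro i hi k hk hik ⟨hlow, hhigh⟩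
      refine (hF k hk).avoid i (hq i hi) hik ((S.hull_subset_uIcc U (hq i hi)).trans ?_)
      rw [← (hF i hi).left_eq, ← (hF i hi).right_eq]
      exact Icc_subset_Ioo hlow hhigh
  calc ∑ i ∈ Finset.range (j + 1), |f^[i] (m 0) - f^[i] (m 5)|
      = ∑ i ∈ Finset.range (j + 1), (R 0 5 i - L 0 5 i) :=
        Finset.sum_congr rfl fun i _ => (max_sub_min_eq_abs' _ _).symm
    _ ≤ 6 := by linarith

lemma sum_sq_le (Ch : c.Chain s e j m) (U : UnimodalMap f α K) (S : c.Spans s e)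
    (hj : j < c.q) {k l : Fin 6} {w : ℝ} (hw : ∀ i ≤ j, |f^[i] (m k) - f^[i] (m l)| ≤ w) (i : ℕ) :
    ∑ n ∈ Finset.Ioc i j, (f^[n] (m k) - f^[n] (m l)) ^ 2 ≤ w * 6 := by
  have hw0 : 0 ≤ w := (abs_nonneg _).trans (hw 0 (by omega))
  calc ∑ n ∈ Finset.Ioc i j, (f^[n] (m k) - f^[n] (m l)) ^ 2
      ≤ ∑ n ∈ Finset.Ioc i j, w * |f^[n] (m 0) - f^[n] (m 5)| := by
        refine Finset.sum_le_sum fun n hn => ?_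
        have hnj : n ≤ j := (Finset.mem_Ioc.mp hn).2
        rw [← sq_abs, sq]
        exact mul_le_mul (hw n hnj) ((Ch.frame n hnj).abs_sub_le k l) (abs_nonneg _) hw0
    _ ≤ ∑ n ∈ Finset.range (j + 1), w * |f^[n] (m 0) - f^[n] (m 5)| := by
        refine Finset.sum_le_sum_of_subset_of_nonneg (fun n hn => ?_) fun _ _ _ => by positivity
        exact Finset.mem_range_succ_iff.mpr (Finset.mem_Ioc.mp hn).2
    _ ≤ w * 6 := by
        rw [← Finset.mul_sum]
        exact mul_le_mul_of_nonneg_left (Ch.sum_abs_sub_le U S hj) hw0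

variable {k₁ k₂ k₃ k₄ : Fin 6}

lemma crossRatio_le_mul_exp (Ch : c.Chain s e j m) (U : UnimodalMap f α K) (S : c.Spans s e)
    (hj : j < c.q) (h₁₂ : k₁ < k₂) (h₂₃ : k₂ < k₃) (h₃₄ : k₃ < k₄) {w : ℝ}
    (hw : ∀ i ≤ j, |f^[i] (m k₁) - f^[i] (m k₄)| ≤ w) {i : ℕ} (hi : i ≤ j) :
    crossRatio (f^[i] (m k₁)) (f^[i] (m k₂)) (f^[i] (m k₃)) (f^[i] (m k₄)) ≤
      crossRatio (f^[j] (m k₁)) (f^[j] (m k₂)) (f^[j] (m k₃)) (f^[j] (m k₄)) *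
        Real.exp (K * (w * 6)) := by
  refine (le_mul_exp_sum_of_le_mul_exp
    (u := fun i => crossRatio (f^[i] (m k₁)) (f^[i] (m k₂)) (f^[i] (m k₃)) (f^[i] (m k₄)))
    (v := fun i => K * (f^[i] (m k₁) - f^[i] (m k₄)) ^ 2) (fun i hi => ?_) hi).trans ?_
  · obtain ⟨J, hJ, hmJ⟩ := Ch.oneSided i hi
    simpa only [Function.iterate_succ_apply', Function.comp_apply] using
      U.crossRatio_comp_le hJ (Ch.frame i hi.le).mono hmJ h₁₂ h₂₃ h₃₄
  · have hnonneg := crossRatio_comp_nonneg (Ch.frame j le_rfl).mono h₁₂ h₂₃ h₃₄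
    rw [← Finset.mul_sum]
    exact mul_le_mul_of_nonneg_left (Real.exp_le_exp.mpr
      (mul_le_mul_of_nonneg_left (Ch.sum_sq_le U S hj hw i) U.nonneg)) hnonneg

lemma abs_sub_le_two (Ch : c.Chain s e j m) (k l : Fin 6) {i : ℕ} (hi : i ≤ j) :
    |f^[i] (m k) - f^[i] (m l)| ≤ 2 := by
  have := abs_sub_le_of_uIcc_subset_uIcc ((uIcc_subset_Icc ((Ch.frame i hi).mem l)
    ((Ch.frame i hi).mem k)).trans Icc_subset_uIcc)
  norm_num at this
  exact this

lemma crossRatio_le_four_mul_exp (Ch : c.Chain s e j m) (U : UnimodalMap f α K)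
    (S : c.Spans s e) (hj : j < c.q) (h₁₂ : k₁ < k₂) (h₂₃ : k₂ < k₃) (h₃₄ : k₃ < k₄)
    (h₄ : crossRatio (f^[j] (m k₁)) (f^[j] (m k₂)) (f^[j] (m k₃)) (f^[j] (m k₄)) ≤ 4)
    {i : ℕ} (hi : i ≤ j) :
    crossRatio (f^[i] (m k₁)) (f^[i] (m k₂)) (f^[i] (m k₃)) (f^[i] (m k₄)) ≤
      4 * Real.exp (12 * K) :=
  calc _ ≤ _ * Real.exp (K * (2 * 6)) := Ch.crossRatio_le_mul_exp U S hj h₁₂ h₂₃ h₃₄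
        (fun _ hi => Ch.abs_sub_le_two k₁ k₄ hi) hi
    _ ≤ 4 * Real.exp (12 * K) := by
        rw [show K * (2 * 6) = 12 * K by ring]
        gcongr

lemma abs_sub_le_mul (Ch : c.Chain s e j m) (U : UnimodalMap f α K) (S : c.Spans s e)
    (hj : j < c.q) (hη : ∀ i < c.q, c.b i - c.a i ≤ η)
    (h₀₃ : crossRatio (f^[j] (m 0)) (f^[j] (m 1)) (f^[j] (m 2)) (f^[j] (m 3)) ≤ 4)
    (h₂₅ : crossRatio (f^[j] (m 2)) (f^[j] (m 3)) (f^[j] (m 4)) (f^[j] (m 5)) ≤ 4)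
    {i : ℕ} (hi : i ≤ j) :
    |f^[i] (m 1) - f^[i] (m 4)| ≤ (8 * Real.exp (12 * K) + 1) * η := by
  have T := Ch.frame i hi
  have hleft : |f^[i] (m 2) - f^[i] (m 1)| ≤ 4 * Real.exp (12 * K) * |f^[i] (m 3) - f^[i] (m 2)| :=
    abs_sub_le_mul_right_of_crossRatio_le (m := f^[i] ∘ m) (i := 0) (j := 1) (k := 2) (l := 3)
      T.mono (by decide) (by decide) (by decide)
      (Ch.crossRatio_le_four_mul_exp U S hj (by decide) (by decide) (by decide) h₀₃ hi)
  have hright : |f^[i] (m 4) - f^[i] (m 3)| ≤ 4 * Real.exp (12 * K) * |f^[i] (m 3) - f^[i] (m 2)| :=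
    abs_sub_le_mul_left_of_crossRatio_le (m := f^[i] ∘ m) (i := 2) (j := 3) (k := 4) (l := 5)
      T.mono (by decide) (by decide) (by decide)
      (Ch.crossRatio_le_four_mul_exp U S hj (by decide) (by decide) (by decide) h₂₅ hi)
  have hmiddle : |f^[i] (m 3) - f^[i] (m 2)| ≤ η := by
    have hiq : i < c.q := by omega
    have h₂ := c.iterate_mem_of_mem_first S.left_mem hiq
    have h₃ := c.iterate_mem_of_mem_first S.right_mem hiq
    rw [← T.left_eq] at h₂
    rw [← T.right_eq] at h₃
    refine (abs_sub_le_of_le_of_le h₃.1 h₃.2 h₂.1 h₂.2).trans (hη i hiq)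
  calc |f^[i] (m 1) - f^[i] (m 4)|
      ≤ |f^[i] (m 2) - f^[i] (m 1)| + |f^[i] (m 3) - f^[i] (m 2)| +
          |f^[i] (m 4) - f^[i] (m 3)| := by
        rw [abs_sub_comm, show f^[i] (m 4) - f^[i] (m 1) = (f^[i] (m 2) - f^[i] (m 1)) +
          (f^[i] (m 3) - f^[i] (m 2)) + (f^[i] (m 4) - f^[i] (m 3)) by ring]
        exact abs_add_three _ _ _
    _ ≤ (8 * Real.exp (12 * K) + 1) * |f^[i] (m 3) - f^[i] (m 2)| := by linarith
    _ ≤ (8 * Real.exp (12 * K) + 1) * η := by gcongr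

lemma crossRatio_le_cycleDistortion_mul (Ch : c.Chain s e j m) (U : UnimodalMap f α K)
    (S : c.Spans s e) (hj : j < c.q) (hη : ∀ i < c.q, c.b i - c.a i ≤ η)
    (h₀₃ : crossRatio (f^[j] (m 0)) (f^[j] (m 1)) (f^[j] (m 2)) (f^[j] (m 3)) ≤ 4)
    (h₂₅ : crossRatio (f^[j] (m 2)) (f^[j] (m 3)) (f^[j] (m 4)) (f^[j] (m 5)) ≤ 4)
    {i : ℕ} (hi : i ≤ j) :
    crossRatio (f^[i] (m 1)) (f^[i] (m 2)) (f^[i] (m 3)) (f^[i] (m 4)) ≤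
      cycleDistortion K η *
        crossRatio (f^[j] (m 1)) (f^[j] (m 2)) (f^[j] (m 3)) (f^[j] (m 4)) := by
  refine (Ch.crossRatio_le_mul_exp U S hj (by decide) (by decide) (by decide) (fun i hi => le_min
    (Ch.abs_sub_le_two 1 4 hi) (Ch.abs_sub_le_mul U S hj hη h₀₃ h₂₅ hi)) hi).trans_eq ?_
  rw [min_mul_of_nonneg _ _ (by norm_num : (0 : ℝ) ≤ 6), mul_comm _ (6 : ℝ), cycleDistortion]
  norm_num [mul_comm]

end Chain

theorem Frame.koebe (T : c.Frame s e j m) (U : UnimodalMap f α K) (h0 : 0 ∈ c.hull (c.q - 1))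
    (S : c.Spans s e) (hj : j < c.q) (hη : ∀ i < c.q, c.b i - c.a i ≤ η)
    (h₀₃ : crossRatio (m 0) (m 1) (m 2) (m 3) ≤ 4) (h₂₅ : crossRatio (m 2) (m 3) (m 4) (m 5) ≤ 4)
    {E Y : ℝ} (hE : cycleDistortion K η ≤ E) (hY : crossRatio (m 1) (m 2) (m 3) (m 4) ≤ Y)
    {i : ℕ} (hi : i ≤ j) :
    ∃ m', c.Frame s e i m' ∧ |m' 3 - m' 2| ≤ E * Y * |m' 2 - m' 1| ∧
      |m' 3 - m' 2| ≤ E * Y * |m' 4 - m' 3| ∧ (i < j → OneSided m') := by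
  obtain ⟨m₀, Ch, rfl⟩ := T.exists_chain U h0 S hj
  have hE0 : 0 ≤ E := (Real.exp_pos _).le.trans hE
  have hcross : crossRatio (f^[i] (m₀ 1)) (f^[i] (m₀ 2)) (f^[i] (m₀ 3)) (f^[i] (m₀ 4)) ≤ E * Y :=
    (Ch.crossRatio_le_cycleDistortion_mul U S hj hη h₀₃ h₂₅ hi).trans <| mul_le_mul hE hY
      (crossRatio_comp_nonneg (m := f^[j] ∘ m₀) (i := 1) (j := 2) (k := 3) (l := 4) T.mono
        (by decide) (by decide) (by decide)) hE0
  exact ⟨f^[i] ∘ m₀, Ch.frame i hi,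
    abs_sub_le_mul_left_of_crossRatio_le (Ch.frame i hi).mono (by decide) (by decide) (by decide)
      hcross,
    abs_sub_le_mul_right_of_crossRatio_le (Ch.frame i hi).mono (by decide) (by decide) (by decide)
      hcross, Ch.oneSided i⟩

end RenCycle

/-! ### Space around the intervals of a cycle -/

lemma strictMono_or_strictAnti_mul_add {ι : Type*} [Preorder ι] {w : ι → ℝ} (hw : StrictMono w)
    {d : ℝ} (hd : d ≠ 0) (x : ℝ) :
    StrictMono (fun l => d * w l + x) ∨ StrictAnti (fun l => d * w l + x) := by
  rcases hd.lt_or_gt with h | h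
  · exact .inr fun _ _ hlt => add_lt_add_left (mul_lt_mul_of_neg_left (hw hlt) h) x
  · exact .inl fun _ _ hlt => add_lt_add_left (mul_lt_mul_of_pos_left (hw hlt) h) x

lemma strictMono_vec_six {a b c d e g : ℝ} (h₁ : a < b) (h₂ : b < c) (h₃ : c < d) (h₄ : d < e)
    (h₅ : e < g) : StrictMono ![a, b, c, d, e, g] := by
  rw [Fin.strictMono_iff_lt_succ]
  intro i
  fin_cases i
  exacts [h₁, h₂, h₃, h₄, h₅]

namespace RenCycle
variable {f : ℝ → ℝ} {α K η E τ : ℝ} {c : RenCycle f}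

/-- The length of the hull marking the interval `k` of the cycle. -/
def width (c : RenCycle f) (k : ℕ) : ℝ := |c.crit k - c.bdry k|

lemma hull_subset_Icc {k : ℕ} (hk : k < c.q) : c.hull k ⊆ Icc (c.a k) (c.b k) :=
  uIcc_subset_Icc (c.crit_mem hk) (c.bdry_mem hk)

lemma hull_succ_subset_Iic (U : UnimodalMap f α K) {k : ℕ} (hk : k + 1 < c.q) :
    c.hull (k + 1) ⊆ Iic (f c.radius) := fun _ hz =>
  c.le_map_radius U hk (hull_subset_Icc hk hz)

lemma width_le_of_hull_subset {k : ℕ} {u v : ℝ} (h : c.hull k ⊆ Icc u v) : c.width k ≤ v - u :=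
  have hx := h left_mem_uIcc
  have hy := h right_mem_uIcc
  abs_sub_le_of_le_of_le hx.1 hx.2 hy.1 hy.2

lemma width_lt_of_hull_subset_Ioc {k : ℕ} {u v : ℝ} (h : c.hull k ⊆ Ioc u v) :
    c.width k < v - u := by
  have hx := h left_mem_uIcc
  have hy := h right_mem_uIcc
  exact abs_lt.mpr ⟨by linarith [hx.1, hy.2], by linarith [hx.2, hy.1]⟩

lemma width_lt_of_hull_subset_Ico {k : ℕ} {u v : ℝ} (h : c.hull k ⊆ Ico u v) :
    c.width k < v - u := by
  have hx := h left_mem_uIcc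
  have hy := h right_mem_uIcc
  exact abs_lt.mpr ⟨by linarith [hx.1, hy.2], by linarith [hx.2, hy.1]⟩

lemma width_le {k : ℕ} (hk : k < c.q) : c.width k ≤ c.b k - c.a k :=
  width_le_of_hull_subset (hull_subset_Icc hk)

lemma width_zero (U : UnimodalMap f α K) : c.width 0 = f 0 - f c.radius :=
  abs_of_pos (sub_pos.mpr (c.map_radius_lt_map_zero U))

lemma width_le_two {k : ℕ} (hk : k < c.q) : c.width k ≤ 2 := by
  linarith [c.width_le hk, c.neg_one_le_a hk, c.b_le_one hk]

lemma exp_mul_width_le_cycleDistortion (hK : 0 ≤ K) (hη : ∀ i < c.q, c.b i - c.a i ≤ η) {k : ℕ}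
    (hk : k < c.q) {w : ℝ} (hw : w ≤ 2 * c.width k) : Real.exp (K * w) ≤ cycleDistortion K η := by
  have hη0 : 0 ≤ η := (sub_nonneg.mpr (c.lt k hk).le).trans (hη k hk)
  have hwη : w ≤ 2 * η := hw.trans (by linarith [c.width_le hk, hη k hk])
  refine Real.exp_le_exp.mpr (mul_le_mul_of_nonneg_left (le_min ?_ ?_) hK)
  · linarith [c.width_le_two hk]
  · have : 0 ≤ Real.exp (12 * K) * η := by positivity
    linarith

lemma one_le_of_cycleDistortion_le (hK : 0 ≤ K) (hη : ∀ i < c.q, c.b i - c.a i ≤ η)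
    (hE : cycleDistortion K η ≤ E) : 1 ≤ E := by
  have := exp_mul_width_le_cycleDistortion hK hη c.q_pos (w := 0)
    (mul_nonneg zero_le_two (abs_nonneg _))
  rw [mul_zero, Real.exp_zero] at this
  exact this.trans hE

lemma exists_forall_width_le (c : RenCycle f) : ∃ j < c.q, ∀ k < c.q, c.width j ≤ c.width k := by
  simpa only [Finset.mem_range] using
    Finset.exists_min_image (Finset.range c.q) c.width ⟨0, Finset.mem_range.mpr c.q_pos⟩

/-- Definite space below the first interval: some `l` at distance at least `(f 0 - f c.radius) / Y`
below `f c.radius` is such that no other hull lies to the right of `l`. -/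
def SpaceBelowFirst (c : RenCycle f) (Y : ℝ) : Prop :=
  ∃ l, -1 ≤ l ∧ l < f c.radius ∧ f 0 - f c.radius ≤ Y * (f c.radius - l) ∧
    ∀ k, k + 1 < c.q → ¬ c.hull (k + 1) ⊆ Ioi l

lemma SpaceBelowFirst.mono {Y Y' : ℝ} (h : c.SpaceBelowFirst Y) (hY : Y ≤ Y') :
    c.SpaceBelowFirst Y' := by
  obtain ⟨l, hl, hlt, hle, hno⟩ := h
  exact ⟨l, hl, hlt, hle.trans (mul_le_mul_of_nonneg_right hY (sub_nonneg.mpr hlt.le)), hno⟩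

lemma spaceBelowFirst_of_shortest_zero (U : UnimodalMap f α K)
    (hmin : ∀ k < c.q, c.width 0 ≤ c.width k) : c.SpaceBelowFirst 1 := by
  have hlt := c.map_radius_lt_map_zero U
  rw [width_zero U] at hmin
  refine ⟨f c.radius - (f 0 - f c.radius), ?_, by linarith, by linarith, fun k hk hsub => ?_⟩
  · have hsub : c.hull 1 ⊆ Icc (-1) (f c.radius) := fun z hz =>
      ⟨(c.sub 1 c.one_lt (hull_subset_Icc c.one_lt hz)).1, hull_succ_subset_Iic U c.one_lt hz⟩
    linarith [width_le_of_hull_subset hsub, hmin 1 c.one_lt]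
  · linarith [width_lt_of_hull_subset_Ioc fun z hz => ⟨hsub hz, hull_succ_subset_Iic U hk hz⟩,
      hmin (k + 1) hk]

/-- No other hull fits into the space of size `c.width j` on either side of the shortest hull. -/
lemma frame_of_shortest (U : UnimodalMap f α K) {j : ℕ} (hj : j < c.q)
    (hmin : ∀ k < c.q, c.width j ≤ c.width k) (hlow : -1 ≤ c.a j - c.width j)
    (hhigh : c.b j + c.width j ≤ 1) :
    c.Frame (f 0) (f c.radius) j
      fun l => (c.bdry j - c.crit j) * ![-1, -1 / 2, 0, 1, 3 / 2, 2] l + c.crit j := by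
  set d := c.bdry j - c.crit j
  have hd0 : d ≠ 0 := sub_ne_zero.mpr (c.crit_ne_bdry U hj).symm
  have hwidth : c.width j = |d| := abs_sub_comm _ _
  have hx := c.crit_mem hj
  have hy := c.bdry_mem hj
  rw [show c.bdry j = d + c.crit j by ring] at hy
  have hmem₀ : -d + c.crit j ∈ Icc (c.a j - c.width j) (c.b j + c.width j) := by
    rw [hwidth]
    exact ⟨by linarith [le_abs_self d, hx.1], by linarith [neg_le_abs d, hx.2]⟩
  have hmem₅ : 2 * d + c.crit j ∈ Icc (c.a j - c.width j) (c.b j + c.width j) := by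
    rw [hwidth]
    exact ⟨by linarith [neg_le_abs d, hy.1], by linarith [le_abs_self d, hy.2]⟩
  have hmono := strictMono_or_strictAnti_mul_add (w := ![-1, -1 / 2, 0, 1, 3 / 2, 2])
    (strictMono_vec_six (by norm_num) (by norm_num) (by norm_num) (by norm_num) (by norm_num))
    hd0 (c.crit j)
  have h₀ : d * ![-1, -1 / 2, 0, 1, 3 / 2, 2] (0 : Fin 6) + c.crit j = -d + c.crit j := by simp
  have h₅ : d * ![-1, -1 / 2, 0, 1, 3 / 2, 2] (5 : Fin 6) + c.crit j = 2 * d + c.crit j := by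
    simp [mul_comm]
  refine ⟨hmono, fun l => ?_, ?_, ?_, fun k hk hkj hsub => (hmin k hk).not_gt ?_⟩
  · have := mem_uIcc_zero_five hmono l
    rw [h₀, h₅] at this
    exact Icc_subset_Icc hlow hhigh (uIcc_subset_Icc hmem₀ hmem₅ this)
  · simp [crit, Function.iterate_succ_apply]
  · simp [d, bdry, Function.iterate_succ_apply]
  · rw [h₀, h₅] at hsub
    have hIoo : c.hull k ⊆ Ioo (c.a j - c.width j) (c.b j + c.width j) :=
      hsub.trans (Ioo_subset_Ioo (le_inf hmem₀.1 hmem₅.1) (sup_le hmem₀.2 hmem₅.2))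
    rcases c.b_le_a_or_b_le_a hk hj hkj with h | h
    · exact (width_lt_of_hull_subset_Ioc fun z hz =>
        ⟨(hIoo hz).1, (hull_subset_Icc hk hz).2.trans h⟩).trans_eq (sub_sub_cancel _ _)
    · exact (width_lt_of_hull_subset_Ico fun z hz =>
        ⟨h.trans (hull_subset_Icc hk hz).1, (hIoo hz).2⟩).trans_eq (add_sub_cancel_left _ _)

lemma spaceBelowFirst_of_shortest_of_exists_left (U : UnimodalMap f α K)
    (h0 : 0 ∈ c.hull (c.q - 1)) (hη : ∀ i < c.q, c.b i - c.a i ≤ η) (hE : cycleDistortion K η ≤ E)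
    {j : ℕ} (hj : j + 1 < c.q) (hmin : ∀ k < c.q, c.width (j + 1) ≤ c.width k) {i : ℕ}
    (hi : i < c.q) (hleft : c.b i ≤ c.a (j + 1)) : c.SpaceBelowFirst (E * 9) := by
  have hlt := c.map_radius_lt_map_zero U
  have hd : c.bdry (j + 1) - c.crit (j + 1) ≠ 0 := sub_ne_zero.mpr (c.crit_ne_bdry U hj).symm
  have hlow : -1 ≤ c.a (j + 1) - c.width (j + 1) := by
    linarith [hmin i hi, c.width_le hi, c.neg_one_le_a hi]
  have hhigh : c.b (j + 1) + c.width (j + 1) ≤ 1 := by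
    linarith [hmin 0 c.q_pos, width_zero (c := c) U,
      c.le_map_radius U hj (right_mem_Icc.mpr (c.lt _ hj).le), U.map_zero_le]
  obtain ⟨m', T, -, hgap, -⟩ := (frame_of_shortest U hj hmin hlow hhigh).koebe U h0 c.spans_hull hj
    hη ((crossRatio_affine hd (-1) (-1 / 2) 0 1).trans_le (by norm_num [crossRatio]))
    ((crossRatio_affine hd 0 1 (3 / 2) 2).trans_le (by norm_num [crossRatio])) hE (Y := 9)
    ((crossRatio_affine hd (-1 / 2) 0 1 (3 / 2)).trans_le (by norm_num [crossRatio]))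
    (Nat.zero_le _)
  have h₂ : m' 2 = f 0 := T.left_eq
  have h₃ : m' 3 = f c.radius := T.right_eq
  have hanti : StrictAnti m' := T.mono.resolve_left fun h => by
    have : m' 2 < m' 3 := h (by decide)
    linarith
  have h₄₃ : m' 4 < m' 3 := hanti (by decide)
  have h₅₄ : m' 5 < m' 4 := hanti (by decide)
  rw [abs_sub_comm, abs_of_pos (by linarith), abs_sub_comm (m' 4), abs_of_pos (by linarith), h₂,
    h₃] at hgap
  refine ⟨m' 4, (T.mem 4).1, h₃ ▸ h₄₃, hgap, fun k hk hsub => T.avoid (k + 1) hk (by omega) ?_⟩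
  rw [uIoo_of_gt (hanti (by decide))]
  have h₂₀ : m' 2 < m' 0 := hanti (by decide)
  exact fun z hz => ⟨h₅₄.trans (hsub hz),
    ((hull_succ_subset_Iic U hk hz).trans_lt hlt).trans (h₂ ▸ h₂₀)⟩

/-- Otherwise `f` is increasing on the left of `0` and moves the interval `j` to the left, so that
the later orbit stays on the left of `0`. -/
lemma zero_le_a_of_b_succ_le_a (U : UnimodalMap f α K) (h0 : 0 ∈ c.hull (c.q - 1)) {j : ℕ}
    (hj : j + 1 < c.q) (hle : c.b (j + 1) ≤ c.a j) : 0 ≤ c.a j := by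
  refine (c.zero_le_a_or_b_le_zero U hj).resolve_right fun hneg => ?_
  have hj' : j < c.q := by omega
  have ha : c.a j < 0 := (c.lt j hj').trans_le hneg
  have hfa : f (c.a j) ≤ c.a j := by
    have : f (c.a j) ∈ Icc (c.a (j + 1)) (c.b (j + 1)) := by
      rw [← c.maps_img j hj]
      exact mem_image_of_mem f (left_mem_Icc.mpr (c.lt j hj').le)
    exact this.2.trans hle
  have hmaps : MapsTo f (Icc (-1) (c.a j)) (Iic (c.a j)) := fun z hz =>
    (U.strictMonoOn.monotoneOn ⟨hz.1, hz.2.trans ha.le⟩ ⟨c.neg_one_le_a hj', ha.le⟩ hz.2).trans hfa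
  have horbit : ∀ k, j + 1 ≤ k → k < c.q → c.crit k ≤ c.a j ∧ c.bdry k ≤ c.a j := by
    refine fun k hk => Nat.le_induction (fun h => ?_) (fun k _ ih h => ?_) k hk
    · exact ⟨(c.crit_mem h).2.trans hle, (c.bdry_mem h).2.trans hle⟩
    · have hkq : k < c.q := by omega
      obtain ⟨hx, hy⟩ := ih hkq
      rw [c.crit_succ, c.bdry_succ]
      exact ⟨hmaps ⟨(c.neg_one_le_a hkq).trans (c.crit_mem hkq).1, hx⟩,
        hmaps ⟨(c.neg_one_le_a hkq).trans (c.bdry_mem hkq).1, hy⟩⟩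
  obtain ⟨hx, hy⟩ := horbit (c.q - 1) (by omega) c.q_pred_lt
  exact (h0.2.trans (sup_le hx hy)).not_gt ha

/-- To the right of `0` the map is decreasing, so that the image of the rightmost interval, the one
of index `0`, is further left than that of any other one. -/
lemma eq_zero_of_forall_b_succ_le_a (U : UnimodalMap f α K) {j : ℕ} (hj : j + 1 < c.q)
    (hleft : ∀ i < c.q, i ≠ j + 1 → c.b (j + 1) ≤ c.a i) (ha : 0 ≤ c.a j) : j = 0 := by
  by_contra hj0
  obtain ⟨i, rfl⟩ := Nat.exists_eq_succ_of_ne_zero hj0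
  have hi : i + 1 < c.q := by omega
  have hmap : ∀ z ∈ Icc (c.a (i + 1)) (c.b (i + 1)), c.crit 1 ≤ f z := fun z hz => by
    have hzle : z ≤ f 0 := (c.le_map_radius U hi hz).trans (c.map_radius_lt_map_zero U).le
    rw [c.crit_succ, c.crit_zero]
    exact U.strictAntiOn.antitoneOn ⟨ha.trans hz.1, hzle.trans U.map_zero_le⟩
      ⟨(ha.trans hz.1).trans hzle, U.map_zero_le⟩ hzle
  have hx := hmap _ (c.crit_mem hi)
  have hy := hmap _ (c.bdry_mem hi)
  rw [← c.crit_succ] at hx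
  rw [← c.bdry_succ] at hy
  have hb := hleft 1 c.one_lt (by omega)
  have h₁ := (c.crit_mem c.one_lt).1
  have hx' := (c.crit_mem hj).2
  have hy' := (c.bdry_mem hj).2
  exact c.crit_ne_bdry U hj (by linarith)

lemma not_hull_succ_subset_Ioi_of_shortest_one (U : UnimodalMap f α K)
    (h0 : 0 ∈ c.hull (c.q - 1)) (hmin : ∀ k < c.q, c.width 1 ≤ c.width k) {l : ℝ}
    (hl : l ∈ Icc 0 1) (hfl : f l = c.bdry 1 + c.width 1) {k : ℕ} (hk : k + 1 < c.q) :
    ¬ c.hull (k + 1) ⊆ Ioi l := by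
  intro hsub
  have hsub' : c.hull (k + 1) ⊆ Ioc l (f c.radius) := fun z hz =>
    ⟨hsub hz, hull_succ_subset_Iic U hk hz⟩
  have hle := c.map_radius_lt_map_zero U |>.le.trans U.map_zero_le
  have hmaps : MapsTo f (Ioc l (f c.radius)) (Ico (c.bdry 1) (c.bdry 1 + c.width 1)) := by
    intro z hz
    have hz01 : z ∈ Icc (0 : ℝ) 1 := ⟨hl.1.trans hz.1.le, hz.2.trans hle⟩
    exact ⟨U.strictAntiOn.antitoneOn hz01 ⟨hz01.1.trans hz.2, hle⟩ hz.2,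
      hfl ▸ U.strictAntiOn hl hz01 hz.1⟩
  rcases (show k + 1 + 1 < c.q ∨ k + 1 = c.q - 1 by omega) with hkq | hkq
  · refine (hmin (k + 2) hkq).not_gt ((width_lt_of_hull_subset_Ico (u := c.bdry 1)
      (v := c.bdry 1 + c.width 1) (ordConnected_Ico.uIcc_subset ?_ ?_)).trans_eq ?_)
    · exact c.crit_succ (k + 1) ▸ hmaps (hsub' left_mem_uIcc)
    · exact c.bdry_succ (k + 1) ▸ hmaps (hsub' right_mem_uIcc)
    · ring
  · exact (hsub (hkq ▸ h0 : (0 : ℝ) ∈ c.hull (k + 1))).not_ge hl.1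

lemma spaceBelowFirst_of_shortest_one (U : UnimodalMap f α K) (h0 : 0 ∈ c.hull (c.q - 1))
    (hη : ∀ i < c.q, c.b i - c.a i ≤ η) (hE : cycleDistortion K η ≤ E)
    (hmin : ∀ k < c.q, c.width 1 ≤ c.width k) (ha : 0 ≤ c.a 0) : c.SpaceBelowFirst E := by
  have hlt := c.map_radius_lt_map_zero U
  have hradius : f c.radius ∈ Icc 0 1 :=
    ⟨ha.trans (c.bdry_mem c.q_pos).1, hlt.le.trans U.map_zero_le⟩
  have hx : c.crit 1 = f (f 0) := rfl
  have hy : c.bdry 1 = f (f c.radius) := rfl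
  have hxy : c.crit 1 < c.bdry 1 :=
    U.strictAntiOn hradius ⟨hradius.1.trans hlt.le, U.map_zero_le⟩ hlt
  have hwidth : c.width 1 = c.bdry 1 - c.crit 1 := by
    rw [width, abs_sub_comm, abs_of_pos (sub_pos.mpr hxy)]
  have hy_le : c.bdry 1 ≤ f c.radius := hull_succ_subset_Iic U c.one_lt right_mem_uIcc
  have hy_ge : -1 ≤ c.bdry 1 := (c.neg_one_le_a c.one_lt).trans (c.bdry_mem c.one_lt).1
  obtain ⟨l, hl, hfl⟩ := U.exists_map_eq (v := 2 * c.bdry 1 - c.crit 1)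
    ⟨by linarith, by linarith [hmin 0 c.q_pos, width_zero (c := c) U]⟩
  have hl_lt : l < f c.radius := by
    rw [← U.strictAntiOn.lt_iff_gt hradius hl, hfl, ← hy]
    linarith
  refine ⟨l, by linarith [hl.1], hl_lt, ?_,
    fun k => not_hull_succ_subset_Ioi_of_shortest_one U h0 hmin hl (by rw [hfl, hwidth]; ring)⟩
  have hslope := U.slope_le l (f c.radius) (f 0) hl.1 hl_lt hlt U.map_zero_le
  have hexp : Real.exp (K * (f l - f (f 0))) ≤ E :=
    (exp_mul_width_le_cycleDistortion U.nonneg hη c.one_lt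
      (by rw [hfl, ← hx, hwidth]; linarith)).trans hE
  refine le_of_mul_le_mul_right ?_ (sub_pos.mpr hxy)
  calc (f 0 - f c.radius) * (c.bdry 1 - c.crit 1)
      = (f 0 - f c.radius) * (f l - f (f c.radius)) := by rw [hfl, ← hy]; ring
    _ ≤ Real.exp (K * (f l - f (f 0))) *
        ((f c.radius - l) * (f (f c.radius) - f (f 0))) := hslope
    _ ≤ E * ((f c.radius - l) * (c.bdry 1 - c.crit 1)) :=
        mul_le_mul_of_nonneg_right hexp
          (mul_nonneg (sub_nonneg.mpr hl_lt.le) (sub_nonneg.mpr hxy.le))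
    _ = E * (f c.radius - l) * (c.bdry 1 - c.crit 1) := by ring

/-- The shortest hull has definite space around it for trivial reasons, unless the interval it
marks is the leftmost one, which is then the second interval of the cycle. -/
theorem spaceBelowFirst (U : UnimodalMap f α K) (h0 : 0 ∈ c.hull (c.q - 1))
    (hη : ∀ i < c.q, c.b i - c.a i ≤ η) (hE : cycleDistortion K η ≤ E) :
    c.SpaceBelowFirst (E * 9) := by
  have hE1 : 1 ≤ E := one_le_of_cycleDistortion_le U.nonneg hη hE
  obtain ⟨j, hj, hmin⟩ := c.exists_forall_width_le
  rcases j with _ | j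
  · exact (spaceBelowFirst_of_shortest_zero U hmin).mono (by linarith)
  by_cases hleft : ∃ i < c.q, i ≠ j + 1 ∧ c.b i ≤ c.a (j + 1)
  · obtain ⟨i, hi, -, hle⟩ := hleft
    exact spaceBelowFirst_of_shortest_of_exists_left U h0 hη hE hj hmin hi hle
  · have hright : ∀ i < c.q, i ≠ j + 1 → c.b (j + 1) ≤ c.a i := fun i hi hij =>
      (c.b_le_a_or_b_le_a hi hj hij).resolve_left fun h => hleft ⟨i, hi, hij, h⟩
    have ha : 0 ≤ c.a j :=
      zero_le_a_of_b_succ_le_a U h0 hj (hright j (by omega) (by omega))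
    obtain rfl := eq_zero_of_forall_b_succ_le_a U hj hright ha
    exact (spaceBelowFirst_of_shortest_one U h0 hη hE hmin ha).mono (by linarith)

lemma radius_rpow_le (U : UnimodalMap f α K) (hη : ∀ i < c.q, c.b i - c.a i ≤ η)
    (hE : cycleDistortion K η ≤ E) {y : ℝ} (hry : c.radius < y) (hy : y ≤ 1)
    (hfy : f 0 - f c.radius = 9 * E * (f c.radius - f y)) :
    c.radius ^ α ≤ 9 * E ^ 2 * (y ^ α - c.radius ^ α) := by
  have hE1 : 1 ≤ E := one_le_of_cycleDistortion_le U.nonneg hη hE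
  have hlt := c.map_radius_lt_map_zero U
  have hr := c.radius_pos
  have hexp : Real.exp (K * (f 0 - f y)) ≤ E := by
    refine (exp_mul_width_le_cycleDistortion U.nonneg hη c.q_pos ?_).trans hE
    rw [width_zero U]
    nlinarith
  have hpow : 0 ≤ y ^ α - c.radius ^ α :=
    sub_nonneg.mpr (Real.rpow_le_rpow hr.le hry.le (zero_lt_one.trans U.one_lt).le)
  refine le_of_mul_le_mul_left ?_ (sub_pos.mpr hlt)
  calc (f 0 - f c.radius) * c.radius ^ α
      = 9 * E * ((f c.radius - f y) * c.radius ^ α) := by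
        rw [← mul_assoc, ← hfy]
    _ ≤ 9 * E * (Real.exp (K * (f 0 - f y)) *
          ((f 0 - f c.radius) * (y ^ α - c.radius ^ α))) :=
        mul_le_mul_of_nonneg_left (U.power_le c.radius y hr hry hy) (by positivity)
    _ ≤ 9 * E * (E * ((f 0 - f c.radius) * (y ^ α - c.radius ^ α))) := by
        have := mul_nonneg (sub_pos.mpr hlt).le hpow
        gcongr
    _ = _ := by ring

/-- The space below the first interval, pulled back through the critical point. -/
lemma exists_space_central (U : UnimodalMap f α K) (h0 : 0 ∈ c.hull (c.q - 1))
    (hη : ∀ i < c.q, c.b i - c.a i ≤ η) (hE : cycleDistortion K η ≤ E) :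
    ∃ y ∈ Ioc c.radius 1, c.radius ^ α * (1 + 1 / (9 * E ^ 2)) ≤ y ^ α ∧
      ∀ k, k + 1 < c.q → ¬ c.hull k ⊆ Ioo (-y) y := by
  obtain ⟨l, hl, -, hspace, hno⟩ := spaceBelowFirst U h0 hη hE
  have hE1 : 1 ≤ E := one_le_of_cycleDistortion_le U.nonneg hη hE
  have hlt := c.map_radius_lt_map_zero U
  have hr := c.radius_pos
  set w := (f 0 - f c.radius) / (9 * E) with hw
  have hw0 : 0 < w := div_pos (sub_pos.mpr hlt) (by positivity)
  have hwl : w ≤ f c.radius - l := by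
    rw [hw, div_le_iff₀ (by positivity)]
    linarith
  obtain ⟨y, hy, hfy⟩ := U.exists_map_eq (v := f c.radius - w) ⟨by linarith, by linarith⟩
  have hry : c.radius < y := by
    rw [← U.strictAntiOn.lt_iff_gt hy ⟨hr.le, c.radius_lt_one.le⟩, hfy]
    linarith
  have hle := radius_rpow_le U hη hE hry hy.2 (by rw [hfy, sub_sub_cancel, hw]; field_simp)
  refine ⟨y, ⟨hry, hy.2⟩, ?_, fun k hk hsub => hno k hk (ordConnected_Ioi.uIcc_subset ?_ ?_)⟩
  · rw [mul_add, mul_one, mul_one_div, ← le_sub_iff_add_le']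
    exact (div_le_iff₀' (by positivity)).mpr hle
  · rw [c.crit_succ]
    have := U.map_lt_of_abs_lt (abs_lt.mpr (hsub left_mem_uIcc)) hy.2
    exact lt_of_le_of_lt (by linarith) this
  · rw [c.bdry_succ]
    have := U.map_lt_of_abs_lt (abs_lt.mpr (hsub right_mem_uIcc)) hy.2
    exact lt_of_le_of_lt (by linarith) this

lemma space_central (U : UnimodalMap f α K) (h0 : 0 ∈ c.hull (c.q - 1))
    (hη : ∀ i < c.q, c.b i - c.a i ≤ η) (hE : cycleDistortion K η ≤ E) (hτ : 0 ≤ τ)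
    (hτE : (1 + τ) ^ α ≤ 1 + 1 / (9 * E ^ 2)) :
    (1 + τ) * c.radius ≤ 1 ∧ ∀ k, k + 1 < c.q →
      ¬ c.hull k ⊆ Ioo (-((1 + τ) * c.radius)) ((1 + τ) * c.radius) := by
  obtain ⟨y, hy, hpow, hno⟩ := exists_space_central U h0 hη hE
  have hr := c.radius_pos
  have hle : (1 + τ) * c.radius ≤ y := by
    rw [← Real.rpow_le_rpow_iff (by positivity) (hr.trans hy.1).le (zero_lt_one.trans U.one_lt),
      Real.mul_rpow (by positivity) hr.le, mul_comm]
    exact (mul_le_mul_of_nonneg_left hτE (by positivity)).trans hpow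
  exact ⟨hle.trans hy.2, fun k hk hsub =>
    hno k hk (hsub.trans (Ioo_subset_Ioo (neg_le_neg hle) hle))⟩

lemma frame_central (U : UnimodalMap f α K) (h0 : 0 ∈ c.hull (c.q - 1))
    (hη : ∀ i < c.q, c.b i - c.a i ≤ η) (hE : cycleDistortion K η ≤ E) (hτ : 0 < τ)
    (hτE : (1 + τ) ^ α ≤ 1 + 1 / (9 * E ^ 2)) {σ : ℝ} (hσ : |σ| = c.radius)
    (ha : f^[c.q - 1] (c.a 0) = -σ) (hb : f^[c.q - 1] (c.b 0) = σ) :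
    c.Frame (c.a 0) (c.b 0) (c.q - 1)
      fun l => σ * ![-(1 + τ), -(1 + τ / 2), -1, 1, 1 + τ / 2, 1 + τ] l + 0 := by
  obtain ⟨hle, hno⟩ := space_central U h0 hη hE hτ.le hτE
  have hσ0 : σ ≠ 0 := abs_pos.mp (hσ ▸ c.radius_pos)
  have hmono := strictMono_or_strictAnti_mul_add
    (w := ![-(1 + τ), -(1 + τ / 2), -1, 1, 1 + τ / 2, 1 + τ])
    (strictMono_vec_six (by linarith) (by linarith) (by norm_num) (by linarith) (by linarith)) hσ0 0
  set m : Fin 6 → ℝ := fun l => σ * ![-(1 + τ), -(1 + τ / 2), -1, 1, 1 + τ / 2, 1 + τ] l + 0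
  have habs : |(1 + τ) * σ| = (1 + τ) * c.radius := by
    rw [abs_mul, hσ, abs_of_pos (by linarith)]
  have h₀ : m 0 = -((1 + τ) * σ) := by simp [m]; ring
  have h₅ : m 5 = (1 + τ) * σ := by simp [m, mul_comm]
  have hmem₅ := abs_le.mp habs.le
  refine ⟨hmono, fun l => ?_, ?_, ?_, fun k hk hkq hsub => hno k (by omega) (hsub.trans ?_)⟩
  · have := mem_uIcc_zero_five hmono l
    rw [h₀, h₅] at this
    exact uIcc_subset_Icc ⟨by linarith, by linarith⟩ ⟨by linarith, by linarith⟩ this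
  · simp [m, ha]
  · simp [m, hb]
  · rw [h₀, h₅]
    exact Ioo_subset_Ioo (le_inf (by linarith) hmem₅.1) (sup_le (by linarith) hmem₅.2)

lemma iterate_endpoints (U : UnimodalMap f α K) {k : ℕ} (hk : k < c.q) :
    f^[k] (c.a 0) = c.a k ∧ f^[k] (c.b 0) = c.b k ∨
      f^[k] (c.a 0) = c.b k ∧ f^[k] (c.b 0) = c.a k := by
  have h₀ := (c.lt 0 c.q_pos).le
  have hk' := (c.lt k hk).le
  have himage := c.image_iterate hk
  refine (c.iterate_strictMonoOn_or_strictAntiOn U hk).imp (fun h => ?_) fun h => ?_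
  · exact ⟨(himage ▸ h.monotoneOn.map_isLeast (isLeast_Icc h₀)).unique (isLeast_Icc hk'),
      (himage ▸ h.monotoneOn.map_isGreatest (isGreatest_Icc h₀)).unique (isGreatest_Icc hk')⟩
  · exact ⟨(himage ▸ h.antitoneOn.map_isLeast (isLeast_Icc h₀)).unique (isGreatest_Icc hk'),
      (himage ▸ h.antitoneOn.map_isGreatest (isGreatest_Icc h₀)).unique (isLeast_Icc hk')⟩

/-- An interval `(u, v)` around the interval `i` of the cycle extending it on either side by at
least `1 / X` of its length, on which `f` is monotone unless the interval is the central one, and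
swallowing no other hull. -/
structure Collar (c : RenCycle f) (X : ℝ) (i : ℕ) (u v : ℝ) : Prop where
  le_left : c.b i - c.a i ≤ X * (c.a i - u)
  le_right : c.b i - c.a i ≤ X * (v - c.b i)
  avoid : ∀ k < c.q, k ≠ i → ¬ c.hull k ⊆ Ioo u v
  zero_le_or_le_zero : i + 1 < c.q → 0 ≤ u ∨ v ≤ 0

lemma Frame.exists_collar {i : ℕ} {m : Fin 6 → ℝ} (T : c.Frame (c.a 0) (c.b 0) i m)
    (U : UnimodalMap f α K) (hi : i < c.q) {X : ℝ} (hleft : |m 3 - m 2| ≤ X * |m 2 - m 1|)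
    (hright : |m 3 - m 2| ≤ X * |m 4 - m 3|) (hside : i + 1 < c.q → OneSided m) :
    ∃ u v, c.Collar X i u v := by
  have hab := c.lt i hi
  have hside' : i + 1 < c.q → (∀ l, 0 ≤ m l) ∨ ∀ l, m l ≤ 0 := fun hiq => by
    obtain ⟨J, rfl | rfl, hJ⟩ := hside hiq
    · exact .inr fun l => (hJ l).2
    · exact .inl fun l => (hJ l).1
  have hends := T.left_eq ▸ T.right_eq ▸ c.iterate_endpoints U hi
  rcases T.mono with h | h
  · have h₀₁ : m 0 < m 1 := h (by decide)
    have h₁₂ : m 1 < m 2 := h (by decide)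
    have h₂₃ : m 2 < m 3 := h (by decide)
    have h₃₄ : m 3 < m 4 := h (by decide)
    have h₄₅ : m 4 < m 5 := h (by decide)
    obtain ⟨h₂, h₃⟩ := hends.resolve_right fun h' => by linarith
    rw [abs_of_pos (by linarith), abs_of_pos (by linarith), h₂, h₃] at hleft hright
    refine ⟨m 1, m 4, hleft, hright, fun k hk hki hsub => ?_,
      fun hiq => (hside' hiq).imp (fun h => h 1) fun h => h 4⟩
    refine T.avoid k hk hki ?_
    rw [uIoo_of_lt (h (by decide))]
    exact hsub.trans (Ioo_subset_Ioo h₀₁.le h₄₅.le)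
  · have h₀₁ : m 1 < m 0 := h (by decide)
    have h₁₂ : m 2 < m 1 := h (by decide)
    have h₂₃ : m 3 < m 2 := h (by decide)
    have h₃₄ : m 4 < m 3 := h (by decide)
    have h₄₅ : m 5 < m 4 := h (by decide)
    obtain ⟨h₂, h₃⟩ := hends.resolve_left fun h' => by linarith
    rw [abs_of_neg (by linarith), abs_of_neg (by linarith), neg_sub, neg_sub, h₂, h₃]
      at hleft hright
    refine ⟨m 4, m 1, hright, hleft, fun k hk hki hsub => ?_,
      fun hiq => (hside' hiq).imp (fun h => h 4) fun h => h 1⟩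
    refine T.avoid k hk hki ?_
    rw [uIoo_of_gt (h (by decide))]
    exact hsub.trans (Ioo_subset_Ioo h₄₅.le h₀₁.le)

/-- The constant of the collars: the central interval, with the space `τ` around it, has cross
ratio `(1 + 4 / τ) ^ 2`, and `E` bounds the distortion of cross ratios along the cycle. -/
def spaceConst (E τ : ℝ) : ℝ := E * (1 + 4 / τ) ^ 2

lemma exists_iterate_pred_endpoints (U : UnimodalMap f α K) :
    ∃ σ, |σ| = c.radius ∧ f^[c.q - 1] (c.a 0) = -σ ∧ f^[c.q - 1] (c.b 0) = σ := by
  have hr := c.radius_pos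
  rcases c.iterate_endpoints U c.q_pred_lt with ⟨ha, hb⟩ | ⟨ha, hb⟩
  · exact ⟨c.radius, abs_of_pos hr, ha.trans c.a_last, hb.trans c.b_last⟩
  · exact ⟨-c.radius, by rw [abs_neg, abs_of_pos hr], by rw [ha, c.b_last, neg_neg],
      hb.trans c.a_last⟩

theorem exists_collar (U : UnimodalMap f α K) (h0 : 0 ∈ c.hull (c.q - 1))
    (hη : ∀ i < c.q, c.b i - c.a i ≤ η) (hE : cycleDistortion K η ≤ E) (hτ : τ ∈ Ioc 0 1)
    (hτE : (1 + τ) ^ α ≤ 1 + 1 / (9 * E ^ 2)) {i : ℕ} (hi : i < c.q) :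
    ∃ u v, c.Collar (spaceConst E τ) i u v := by
  obtain ⟨hτ0, hτ1⟩ := hτ
  obtain ⟨σ, hσ, ha, hb⟩ := exists_iterate_pred_endpoints (c := c) U
  have hσ0 : σ ≠ 0 := abs_pos.mp (hσ ▸ c.radius_pos)
  have h₀₃ : crossRatio (-(1 + τ)) (-(1 + τ / 2)) (-1) 1 ≤ 4 := by
    rw [crossRatio, div_le_iff₀ (by nlinarith)]
    nlinarith
  have h₂₅ : crossRatio (-1) 1 (1 + τ / 2) (1 + τ) ≤ 4 := by
    rw [crossRatio, div_le_iff₀ (by nlinarith)]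
    nlinarith
  have h₁₄ : crossRatio (-(1 + τ / 2)) (-1) 1 (1 + τ / 2) = (1 + 4 / τ) ^ 2 := by
    rw [crossRatio, show -1 - -(1 + τ / 2) = τ / 2 by ring, show 1 + τ / 2 - 1 = τ / 2 by ring]
    field_simp
    ring
  obtain ⟨m, T, hleft, hright, hside⟩ := (frame_central U h0 hη hE hτ0 hτE hσ ha hb).koebe U h0
    c.spans_Icc c.q_pred_lt hη ((crossRatio_affine hσ0 ..).trans_le h₀₃)
    ((crossRatio_affine hσ0 ..).trans_le h₂₅) hE ((crossRatio_affine hσ0 ..).trans h₁₄).le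
    (Nat.le_pred_of_lt hi)
  exact T.exists_collar U hi hleft hright fun hiq => hside (by omega)

end RenCycle

/-! ### Geometric decay and distance to the critical point -/

namespace RenCycle
variable {f : ℝ → ℝ} {α K X u v : ℝ} {c c' : RenCycle f} {i : ℕ}

lemma Collar.le_mul_left_or_le_mul_right (h : c.Collar X i u v) (hX : 0 ≤ X) (hi : i + 1 < c.q) :
    c.b i - c.a i ≤ X * c.a i ∨ c.b i - c.a i ≤ X * -c.b i := by
  refine (h.zero_le_or_le_zero hi).imp (fun hu => h.le_left.trans ?_) fun hv => h.le_right.trans ?_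
  · exact mul_le_mul_of_nonneg_left (by linarith) hX
  · exact mul_le_mul_of_nonneg_left (by linarith) hX

namespace Nested

lemma hull_subset_mod (D : c.Nested c') (U : UnimodalMap f α K) (n : ℕ) :
    c'.hull n ⊆ Icc (c.a (n % c.q)) (c.b (n % c.q)) :=
  uIcc_subset_Icc (c.iterate_mem_mod c.zero_mem_central n)
    (c.iterate_mem_mod ⟨by linarith [c.radius_pos, c'.radius_pos], D.radius_le U⟩ n)

lemma subset_mod (D : c.Nested c') (U : UnimodalMap f α K) (hi : i < c'.q) :
    Icc (c'.a i) (c'.b i) ⊆ Icc (c.a (i % c.q)) (c.b (i % c.q)) := by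
  obtain ⟨j, hj, hsub⟩ := D.exists_subset i hi
  suffices i % c.q = j by rwa [this]
  by_contra hne
  have hx := hsub (c'.crit_mem hi)
  have hy := hsub (c'.bdry_mem hi)
  have hx' := D.hull_subset_mod U i left_mem_uIcc
  have hy' := D.hull_subset_mod U i right_mem_uIcc
  apply c'.crit_ne_bdry U hi
  rcases c.b_le_a_or_b_le_a (Nat.mod_lt i c.q_pos) hj hne with h | h
  · linarith [hx'.2, hy'.2, hx.1, hy.1]
  · linarith [hx'.1, hy'.1, hx.2, hy.2]

lemma exists_ne_mod_eq (D : c.Nested c') (hi : i < c'.q) :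
    ∃ k < c'.q, k ≠ i ∧ k % c.q = i % c.q := by
  have hq := c.q_pos
  have hsum : c.q + c.q ≤ c'.q := Nat.add_le_of_le_sub' D.lt.le
    (Nat.le_of_dvd (Nat.sub_pos_of_lt D.lt) (Nat.dvd_sub D.dvd dvd_rfl))
  by_cases h : i + c.q < c'.q
  · exact ⟨i + c.q, h, by omega, Nat.add_mod_right i c.q⟩
  · exact ⟨i - c.q, by omega, by omega, (Nat.mod_eq_sub_mod (by omega)).symm⟩

/-- Each interval of `c` holds two intervals of `c'`, and the collar of one of them, not swallowing
the other one, does not reach beyond both ends of the interval of `c`. -/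
lemma mul_length_le (D : c.Nested c') (U : UnimodalMap f α K) (hi : i < c'.q)
    (h : c'.Collar X i u v) (hX : 0 ≤ X) :
    ∃ j < c.q, (X + 1) * (c'.b i - c'.a i) ≤ X * (c.b j - c.a j) := by
  obtain ⟨k, hk, hki, hmod⟩ := D.exists_ne_mod_eq hi
  have hlt := (c'.lt i hi).le
  have ha := (D.subset_mod U hi (left_mem_Icc.mpr hlt)).1
  have hb := (D.subset_mod U hi (right_mem_Icc.mpr hlt)).2
  have hhull := D.hull_subset_mod U k
  rw [hmod] at hhull
  refine ⟨i % c.q, Nat.mod_lt i c.q_pos, ?_⟩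
  have hout : c.a (i % c.q) ≤ u ∨ v ≤ c.b (i % c.q) := by
    by_contra! hin
    exact h.avoid k hk hki (hhull.trans (Icc_subset_Ioo hin.1 hin.2))
  rw [add_one_mul]
  rcases hout with hu | hv
  · calc _ ≤ X * (c'.b i - c'.a i) + X * (c'.a i - u) := by gcongr; exact h.le_left
      _ = X * (c'.b i - u) := by ring
      _ ≤ _ := by gcongr
  · calc _ ≤ X * (c'.b i - c'.a i) + X * (v - c'.b i) := by gcongr; exact h.le_right
      _ = X * (v - c'.a i) := by ring
      _ ≤ _ := by gcongr

end Nested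

lemma length_le_two (hi : i < c.q) : c.b i - c.a i ≤ 2 := by
  linarith [c.neg_one_le_a hi, c.b_le_one hi]

lemma cycleDistortion_le_exp (hK : 0 ≤ K) (η : ℝ) : cycleDistortion K η ≤ Real.exp (12 * K) := by
  rw [cycleDistortion, mul_comm 12]
  exact Real.exp_le_exp.mpr (mul_le_mul_of_nonneg_left (min_le_left _ _) hK)

lemma length_le_of_nested {T : ℕ → RenCycle f} {M : ℕ}
    (hT : ∀ n, 1 ≤ n → n < M → (T n).Nested (T (n + 1))) (U : UnimodalMap f α K) {τ : ℝ}
    (hτ : τ ∈ Ioc 0 1) (hτE : (1 + τ) ^ α ≤ 1 + 1 / (9 * Real.exp (12 * K) ^ 2))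
    (hX : X = spaceConst (Real.exp (12 * K)) τ) {n : ℕ} (hn : n + 1 < M)
    (hi : i < (T (n + 1)).q) :
    (T (n + 1)).b i - (T (n + 1)).a i ≤ 2 * (X / (X + 1)) ^ n := by
  have hX0 : 0 ≤ X := by rw [hX, spaceConst]; positivity
  induction n generalizing i with
  | zero => simpa using length_le_two hi
  | succ n ih =>
    obtain ⟨u, v, hcollar⟩ := exists_collar U ((hT (n + 2) (by omega) hn).zero_mem_hull U)
      (fun k hk => length_le_two hk) (cycleDistortion_le_exp U.nonneg 2) hτ hτE hi
    obtain ⟨j, hj, h⟩ :=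
      (hT (n + 1) (by omega) (by omega)).mul_length_le U hi hcollar (hX ▸ hX0)
    rw [← hX] at h
    calc (T (n + 2)).b i - (T (n + 2)).a i
        ≤ X / (X + 1) * ((T (n + 1)).b j - (T (n + 1)).a j) := by
          rw [div_mul_eq_mul_div, le_div_iff₀ (by linarith)]
          linarith
      _ ≤ X / (X + 1) * (2 * (X / (X + 1)) ^ n) := by
          gcongr
          exact ih (by omega) hj
      _ = 2 * (X / (X + 1)) ^ (n + 1) := by ring

end RenCycle

/-! ### Univalent extensions of zooms -/

lemma exists_norm_sub_lt_of_mem_stadium {ε : ℝ} {z : ℂ} (hz : z ∈ stadium ε) :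
    ∃ x ∈ Icc (-1 : ℝ) 1, ‖z - x‖ < ε := by
  have hne : realSeg.Nonempty := (Set.nonempty_Icc.2 (by norm_num)).image _
  obtain ⟨_, ⟨x, hx, rfl⟩, h⟩ := (infDist_lt_iff hne).1 hz
  exact ⟨x, hx, by rwa [dist_eq_norm] at h⟩

/-- The increasing affine map of `[u, v]` onto `[-1, 1]`. -/
def zoomChart (u v y : ℝ) : ℝ := 2 / (v - u) * y + -(u + v) / (v - u)

/-- The complex affine map inverse to `zoomChart u v`, taking `[-1, 1]` to `[u, v]`. -/
def zoomChartInv (u v : ℝ) (ζ : ℂ) : ℂ := ((v - u) / 2 : ℝ) * ζ + ((u + v) / 2 : ℝ)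

section ZoomChart
variable {u v : ℝ}

lemma isAffine_zoomChart (huv : u < v) : IsAffine (zoomChart u v) :=
  ⟨_, _, div_ne_zero two_ne_zero (sub_ne_zero.mpr huv.ne'), rfl⟩

lemma image_zoomChart (huv : u < v) : zoomChart u v '' Icc u v = Icc (-1) 1 := by
  have h : 0 < v - u := sub_pos.mpr huv
  unfold zoomChart
  rw [Set.image_affine_Icc' (by positivity)]
  congr 1 <;> field_simp <;> ring

lemma zoomChartInv_zoomChart (huv : u < v) (y : ℝ) : zoomChartInv u v (zoomChart u v y) = y := by
  have h : v - u ≠ 0 := sub_ne_zero.mpr huv.ne'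
  unfold zoomChartInv zoomChart
  norm_cast
  field_simp
  ring

lemma injective_zoomChartInv (huv : u < v) : Function.Injective (zoomChartInv u v) := by
  have h : (((v - u) / 2 : ℝ) : ℂ) ≠ 0 := by
    rw [Complex.ofReal_ne_zero]; linarith
  exact fun z w hzw => mul_left_cancel₀ h (add_right_cancel hzw)

lemma differentiable_zoomChartInv (u v : ℝ) : Differentiable ℂ (zoomChartInv u v) := by
  unfold zoomChartInv; fun_prop

lemma exists_zoomChartInv_mem_ball (huv : u < v) {ε : ℝ} {ζ : ℂ} (hζ : ζ ∈ stadium ε) :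
    ∃ y ∈ Icc u v, zoomChartInv u v ζ ∈ ball (y : ℂ) ((v - u) / 2 * ε) := by
  have h : 0 < v - u := sub_pos.mpr huv
  obtain ⟨x, hx, hxζ⟩ := exists_norm_sub_lt_of_mem_stadium hζ
  refine ⟨(v - u) / 2 * x + (u + v) / 2, ⟨by nlinarith [hx.1], by nlinarith [hx.2]⟩, ?_⟩
  have hsub : zoomChartInv u v ζ - (((v - u) / 2 * x + (u + v) / 2 : ℝ) : ℂ) =
      ((v - u) / 2 : ℝ) * (ζ - x) := by
    unfold zoomChartInv; push_cast; ring
  rw [mem_ball, dist_eq_norm, hsub, norm_mul, Complex.norm_real, Real.norm_of_nonneg (by linarith)]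
  gcongr

end ZoomChart

lemma univZoomExt_of_injOn {g : ℝ → ℝ} {Ψ : ℂ → ℂ} {W : Set ℂ} {u v a b ε : ℝ} (huv : u < v)
    (hab : a < b) (himg : g '' Icc u v = Icc a b) (hext : ∀ y ∈ Icc u v, Ψ (y : ℂ) = (g y : ℂ))
    (hd : DifferentiableOn ℂ Ψ W) (hi : InjOn Ψ W)
    (hW : ∀ y ∈ Icc u v, ball (y : ℂ) ((v - u) / 2 * ε) ⊆ W) : UnivZoomExt g (Icc u v) ε := by
  have hmaps : MapsTo (zoomChartInv u v) (stadium ε) W := fun ζ hζ =>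
    let ⟨y, hy, hyζ⟩ := exists_zoomChartInv_mem_ball huv hζ
    hW y hy hyζ
  refine ⟨fun ζ => (2 / (b - a) : ℝ) * Ψ (zoomChartInv u v ζ) + (-(a + b) / (b - a) : ℝ),
    zoomChart u v, zoomChart a b, isAffine_zoomChart huv, image_zoomChart huv,
    isAffine_zoomChart hab, himg ▸ image_zoomChart hab, ?_, ?_, ?_⟩
  · exact ((hd.comp (differentiable_zoomChartInv u v).differentiableOn hmaps).const_mul _).add_const
      _
  · have h : ((2 / (b - a) : ℝ) : ℂ) ≠ 0 :=
      Complex.ofReal_ne_zero.mpr (div_ne_zero two_ne_zero (sub_ne_zero.mpr hab.ne'))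
    exact fun z hz w hw hzw => injective_zoomChartInv huv
      (hi (hmaps hz) (hmaps hw) (mul_left_cancel₀ h (add_right_cancel hzw)))
  · intro y hy
    simp only [zoomChartInv_zoomChart huv, hext y hy]
    simp only [zoomChart, Complex.ofReal_add, Complex.ofReal_mul]

lemma UnivZoomExt.neg {g : ℝ → ℝ} {a b ε : ℝ} (hg : ∀ y, g (-y) = g y)
    (h : UnivZoomExt g (Icc (-b) (-a)) ε) : UnivZoomExt g (Icc a b) ε := by
  obtain ⟨G, A, B, ⟨c, d, hc, rfl⟩, hA, hB, hBg, hdiff, hinj, hG⟩ := h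
  have hneg : (fun y : ℝ => -y) '' Icc a b = Icc (-b) (-a) := by
    rw [Set.image_neg_eq_neg, Set.neg_Icc]
  refine ⟨G, fun y => -c * y + d, B, ⟨-c, d, neg_ne_zero.2 hc, rfl⟩, ?_, hB, ?_, hdiff, hinj, ?_⟩
  · rw [← hA, ← hneg, image_image]
    exact image_congr fun y _ => by ring
  · rw [← hBg, ← hneg, image_image _ (fun y : ℝ => -y)]
    simp only [hg]
  · intro y hy
    simpa [hg] using hG (-y) ⟨neg_le_neg hy.2, neg_le_neg hy.1⟩

lemma image_qmapR_Icc {α t a b : ℝ} (hα : 0 < α) (ht : 0 < t) (ha : 0 ≤ a) (hab : a ≤ b) :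
    qmapR α t '' Icc a b = Icc (qmapR α t b) (qmapR α t a) := by
  have hanti : AntitoneOn (qmapR α t) (Icc a b) := StrictAntiOn.antitoneOn fun x hx y _ hxy =>
    qmapR_lt hα ht (ha.trans hx.1) hxy
  refine Subset.antisymm ?_ (intermediate_value_Icc' hab (continuous_qmapR hα).continuousOn)
  rintro _ ⟨y, hy, rfl⟩
  exact ⟨hanti hy (right_mem_Icc.mpr hab) hy.2, hanti (left_mem_Icc.mpr hab) hy hy.1⟩

/-- The sector of half-angle `π / α` about the positive half-line, cut down to the right half-plane
to keep it away from the branch cut of the power map. -/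
def powerSector (α : ℝ) : Set ℂ := {w | 0 < w.re ∧ α * |w.arg| < Real.pi}

lemma injOn_cpow_powerSector {α : ℝ} (hα : 0 < α) :
    InjOn (fun w : ℂ => w ^ (α : ℂ)) (powerSector α) := by
  have hne : ∀ w ∈ powerSector α, w ≠ 0 := by
    rintro w hw rfl
    simp [powerSector] at hw
  have him : ∀ w ∈ powerSector α,
      -Real.pi < (Complex.log w * α).im ∧ (Complex.log w * α).im < Real.pi := by
    intro w hw
    rw [← abs_lt, Complex.im_mul_ofReal, Complex.log_im, abs_mul, abs_of_pos hα, mul_comm]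
    exact hw.2
  intro z hz w hw hzw
  simp only [Complex.cpow_def_of_ne_zero (hne z hz), Complex.cpow_def_of_ne_zero (hne w hw)] at hzw
  have hlog := Complex.exp_inj_of_neg_pi_lt_of_le_pi (him z hz).1 (him z hz).2.le (him w hw).1
    (him w hw).2.le hzw
  rw [← Complex.exp_log (hne z hz), ← Complex.exp_log (hne w hw),
    mul_right_cancel₀ (Complex.ofReal_ne_zero.2 hα.ne') hlog]

lemma ball_subset_powerSector {α κ y : ℝ} (hα : 0 ≤ α) (hκ : κ ≤ 1 / 2) (hακ : α * κ ≤ 1)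
    (hy : 0 < y) : ball (y : ℂ) (κ * y) ⊆ powerSector α := by
  intro w hw
  obtain ⟨ζ, rfl⟩ : ∃ ζ : ℂ, w = y * (1 + ζ) :=
    ⟨w / y - 1, by rw [add_sub_cancel, mul_div_cancel₀ _ (Complex.ofReal_ne_zero.2 hy.ne')]⟩
  have hζ : ‖ζ‖ < κ := by
    have hsub : (y : ℂ) * (1 + ζ) - y = y * ζ := by ring
    rw [mem_ball, dist_eq_norm, hsub, norm_mul, Complex.norm_real, Real.norm_of_nonneg hy.le,
      mul_comm] at hw
    exact lt_of_mul_lt_mul_right hw hy.le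
  constructor
  · rw [Complex.re_ofReal_mul]
    refine mul_pos hy ?_
    rw [Complex.add_re, Complex.one_re]
    linarith [(abs_le.1 (Complex.abs_re_le_norm ζ)).1]
  · rw [Complex.arg_real_mul _ hy, ← Complex.log_im]
    calc α * |(Complex.log (1 + ζ)).im| ≤ α * ‖Complex.log (1 + ζ)‖ := by
          gcongr; exact Complex.abs_im_le_norm _
      _ ≤ α * (3 / 2 * ‖ζ‖) := by
          gcongr; exact Complex.norm_log_one_add_half_le_self (by linarith)
      _ ≤ 3 / 2 * (α * κ) := by rw [mul_left_comm]; gcongr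
      _ < Real.pi := by linarith [Real.pi_gt_three]

section PowerMap
variable {α t a b ε κ X : ℝ}

lemma univZoomExt_qmapR_of_pos (hα : 0 < α) (ht : 0 < t) (ha : 0 < a) (hab : a < b)
    (hκ : 0 ≤ κ) (hκ2 : κ ≤ 1 / 2) (hακ : α * κ ≤ 1) (hε : (b - a) / 2 * ε ≤ κ * a) :
    UnivZoomExt (qmapR α t) (Icc a b) ε := by
  refine univZoomExt_of_injOn (Ψ := fun w => (-2 * t : ℝ) * w ^ (α : ℂ) + (2 * t - 1 : ℝ))
    (W := powerSector α) hab (qmapR_lt hα ht ha.le hab) (image_qmapR_Icc hα ht ha.le hab.le) ?_ ?_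
    ?_ ?_
  · intro y hy
    rw [qmapR_of_nonneg (ha.le.trans hy.1)]
    push_cast
    rw [Complex.ofReal_cpow (ha.le.trans hy.1)]
  · intro w hw
    exact (((differentiableAt_id.cpow_const (Complex.mem_slitPlane_iff.2 (.inl hw.1))).const_mul
      _).add_const _).differentiableWithinAt
  · have h : ((-2 * t : ℝ) : ℂ) ≠ 0 := by
      rw [Complex.ofReal_ne_zero]; linarith
    exact fun z hz w hw hzw =>
      injOn_cpow_powerSector hα hz hw (mul_left_cancel₀ h (add_right_cancel hzw))
  · intro y hy
    refine (ball_subset_ball (hε.trans ?_)).trans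
      (ball_subset_powerSector hα.le hκ2 hακ (ha.trans_le hy.1))
    gcongr
    exact hy.1

lemma univZoomExt_qmapR (hα : 0 < α) (ht : 0 < t) (hab : a < b) (hX : 0 ≤ X)
    (h : b - a ≤ X * a ∨ b - a ≤ X * -b) (hκ : 0 ≤ κ) (hκ2 : κ ≤ 1 / 2) (hακ : α * κ ≤ 1)
    (hε : 0 ≤ ε) (hεX : X * ε ≤ 2 * κ) : UnivZoomExt (qmapR α t) (Icc a b) ε := by
  have hpos : ∀ z, b - a ≤ X * z → 0 < z := fun z hz =>
    pos_of_mul_pos_right ((sub_pos.mpr hab).trans_le hz) hX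
  have hle : ∀ z, b - a ≤ X * z → (b - a) / 2 * ε ≤ κ * z := fun z hz =>
    calc (b - a) / 2 * ε ≤ X * z / 2 * ε := by gcongr
      _ = X * ε * z / 2 := by ring
      _ ≤ 2 * κ * z / 2 := by have := hpos z hz; gcongr
      _ = κ * z := by ring
  rcases h with h | h
  · exact univZoomExt_qmapR_of_pos hα ht (hpos _ h) hab hκ hκ2 hακ (hle _ h)
  · refine UnivZoomExt.neg (qmapR_neg α t) <|
      univZoomExt_qmapR_of_pos hα ht (hpos _ h) (neg_lt_neg hab) hκ hκ2 hακ ?_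
    rw [neg_sub_neg]
    exact hle _ h

lemma exists_univZoomExt_qmapR (β : ℝ) (hX : 0 < X) : ∃ ε > 0, ∀ α t a b : ℝ, 0 < α → α ≤ β →
    0 < t → a < b → b - a ≤ X * a ∨ b - a ≤ X * -b → UnivZoomExt (qmapR α t) (Icc a b) ε := by
  refine ⟨2 * (1 / (2 + |β|)) / X, by positivity, fun α t a b hα hαβ ht hab h => ?_⟩
  refine univZoomExt_qmapR hα ht hab hX.le h (by positivity) ?_ ?_ (by positivity)
    (mul_div_cancel₀ _ hX.ne').le
  · exact one_div_le_one_div_of_le two_pos (by linarith [abs_nonneg β])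
  · rw [mul_one_div, div_le_one (by positivity)]
    linarith [le_abs_self β]

end PowerMap

namespace UnivalentExtension
variable {φ : ℝ → ℝ} {Φ : ℂ → ℂ} {V : Set ℂ} {r C m u v a b ε : ℝ}

lemma image_Icc (H : UnivalentExtension φ Φ V r C) (hu : u ∈ Icc (-1 : ℝ) 1)
    (hv : v ∈ Icc (-1 : ℝ) 1) : φ '' Icc u v = Icc (φ u) (φ v) := by
  have hsub : Icc u v ⊆ Icc (-1 : ℝ) 1 := Icc_subset_Icc hu.1 hv.2
  refine Subset.antisymm ?_ fun y hy => ?_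
  · rintro _ ⟨x, hx, rfl⟩
    exact ⟨H.strictMonoOn.monotoneOn hu (hsub hx) hx.1, H.strictMonoOn.monotoneOn (hsub hx) hv hx.2⟩
  · obtain ⟨x, hx, rfl⟩ : y ∈ φ '' Icc (-1) 1 := by
      rw [H.image_eq]
      exact Icc_subset_Icc (H.map_mem_Icc hu).1 (H.map_mem_Icc hv).2 hy
    exact ⟨x, ⟨(H.strictMonoOn.le_iff_le hu hx).1 hy.1, (H.strictMonoOn.le_iff_le hx hv).1 hy.2⟩,
      rfl⟩

lemma exists_inter_preimage_Icc_eq (H : UnivalentExtension φ Φ V r C) (ha : a ∈ Icc (-1 : ℝ) 1)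
    (hb : b ∈ Icc (-1 : ℝ) 1) : ∃ u ∈ Icc (-1 : ℝ) 1, ∃ v ∈ Icc (-1 : ℝ) 1,
      φ u = a ∧ φ v = b ∧ Icc (-1) 1 ∩ φ ⁻¹' Icc a b = Icc u v := by
  obtain ⟨u, hu, rfl⟩ : a ∈ φ '' Icc (-1) 1 := by rwa [H.image_eq]
  obtain ⟨v, hv, rfl⟩ : b ∈ φ '' Icc (-1) 1 := by rwa [H.image_eq]
  refine ⟨u, hu, v, hv, rfl, rfl, ?_⟩
  rw [← H.image_Icc hu hv]
  exact (inter_comm _ _).trans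
    (H.strictMonoOn.injOn.preimage_image_inter (Icc_subset_Icc hu.1 hv.2))

lemma univZoomExt (H : UnivalentExtension φ Φ V r C) (hm : 0 < m)
    (hlow : ∀ x ∈ Icc (-1 : ℝ) 1, ∀ y ∈ Icc (-1 : ℝ) 1, x < y → m * (y - x) ≤ φ y - φ x)
    (hε : 0 ≤ ε) (ha : -1 ≤ a) (hab : a < b) (hb : b ≤ 1) (hlen : (b - a) * ε ≤ 2 * m * r) :
    UnivZoomExt φ (Icc (-1) 1 ∩ φ ⁻¹' Icc a b) ε := by
  obtain ⟨u, hu, v, hv, rfl, rfl, hsrc⟩ :=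
    H.exists_inter_preimage_Icc_eq ⟨ha, hab.le.trans hb⟩ ⟨ha.trans hab.le, hb⟩
  have huv : u < v := (H.strictMonoOn.lt_iff_lt hu hv).1 hab
  have hsub : Icc u v ⊆ Icc (-1) 1 := Icc_subset_Icc hu.1 hv.2
  rw [hsrc]
  refine univZoomExt_of_injOn huv hab (H.image_Icc hu hv) (fun y hy => H.eq_ofReal y (hsub hy))
    H.differentiableOn H.injOn fun y hy => (ball_subset_ball ?_).trans (H.ball_subset y (hsub hy))
  have hlow_uv := hlow u hu v hv huv
  exact le_of_mul_le_mul_left (by nlinarith : m * ((v - u) / 2 * ε) ≤ m * r) hm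

end UnivalentExtension

/-! ### Choice of constants -/

lemma exists_one_add_rpow_le (β : ℝ) {E : ℝ} (hE : 0 < E) :
    ∃ τ ∈ Ioc (0 : ℝ) 1, ∀ α ≤ β, (1 + τ) ^ α ≤ 1 + 1 / (9 * E ^ 2) := by
  have hcont : ContinuousAt (fun τ : ℝ => (1 + τ) ^ β) 0 :=
    (continuousAt_const.add continuousAt_id).rpow_const (Or.inl (by simp))
  have hzero : (1 + 0 : ℝ) ^ β < 1 + 1 / (9 * E ^ 2) := by
    rw [add_zero, Real.one_rpow]
    exact lt_add_of_pos_right _ (by positivity)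
  obtain ⟨ρ, hρ, hτ⟩ := Metric.eventually_nhds_iff.1 (hcont.eventually (gt_mem_nhds hzero))
  have hmin : 0 < min 1 (ρ / 2) := by positivity
  refine ⟨min 1 (ρ / 2), ⟨hmin, min_le_left _ _⟩, fun α hα => ?_⟩
  refine (Real.rpow_le_rpow_of_exponent_le (by linarith) hα).trans (hτ ?_).le
  rw [Real.dist_eq, sub_zero, abs_of_pos hmin]
  linarith [min_le_right 1 (ρ / 2)]

lemma exists_cycleDistortion_le (K : ℝ) {E : ℝ} (hE : 1 < E) :
    ∃ η > 0, cycleDistortion K η ≤ E := by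
  have hcont : ContinuousAt (cycleDistortion K) 0 := by
    unfold cycleDistortion; fun_prop
  have hzero : cycleDistortion K 0 < E := by simpa [cycleDistortion] using hE
  obtain ⟨ρ, hρ, hη⟩ := Metric.eventually_nhds_iff.1 (hcont.eventually (gt_mem_nhds hzero))
  refine ⟨ρ / 2, half_pos hρ, (hη ?_).le⟩
  rw [Real.dist_eq, sub_zero, abs_of_pos (half_pos hρ)]
  exact half_lt_self hρ

lemma exists_ball_subset_of_realSeg_subset {V : Set ℂ} (hV : IsOpen V) (hseg : realSeg ⊆ V)
    (C : ℝ) : ∃ r > 0, C * r ≤ 1 / 4 ∧ ∀ x ∈ Icc (-1 : ℝ) 1, ball (x : ℂ) r ⊆ V := by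
  obtain ⟨r₀, hr₀, hthick⟩ :=
    (isCompact_Icc.image Complex.continuous_ofReal).exists_thickening_subset_open hV hseg
  refine ⟨min r₀ (1 / (4 * (|C| + 1))), by positivity, ?_, fun x hx => ?_⟩
  · calc C * min r₀ (1 / (4 * (|C| + 1))) ≤ (|C| + 1) * (1 / (4 * (|C| + 1))) := by
          gcongr
          · linarith [le_abs_self C]
          · exact min_le_right _ _
      _ = 1 / 4 := by field_simp
  · exact (ball_subset_ball (min_le_left _ _)).trans <|
      (ball_subset_thickening (mem_image_of_mem _ hx) _).trans hthick

lemma C3Bound.abs_sub_le {φ : ℝ → ℝ} {C : ℝ} (hC : C3Bound φ C)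
    (hφ : DifferentiableOn ℝ φ (Icc (-1) 1)) :
    ∀ x ∈ Icc (-1 : ℝ) 1, ∀ y ∈ Icc (-1 : ℝ) 1, |φ x - φ y| ≤ C * |x - y| := fun x hx y hy =>
  Convex.norm_image_sub_le_of_norm_derivWithin_le hφ
    (fun z hz => by simpa [iteratedDerivWithin_one] using hC 1 (by norm_num) z hz)
    (convex_Icc _ _) hy hx

lemma UnimodalPair.univalentExtension {φ : ℝ → ℝ} {Φ : ℂ → ℂ} {V : Set ℂ} {r C t : ℝ}
    (h : UnimodalPair φ t) (hC : C3Bound φ C) (hr : 0 < r) (hCr : C * r ≤ 1 / 4)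
    (hball : ∀ x ∈ Icc (-1 : ℝ) 1, ball (x : ℂ) r ⊆ V) (hd : DifferentiableOn ℂ Φ V)
    (hi : InjOn Φ V) (hext : ∀ x ∈ Icc (-1 : ℝ) 1, Φ (x : ℂ) = (φ x : ℂ)) :
    UnivalentExtension φ Φ V r C :=
  let ⟨_, hneg, hone, hmono, hdiff, himg⟩ := h
  ⟨hr, hCr, hball, hd, hi, hext, hneg, hone, hmono, himg,
    hC.abs_sub_le (hdiff.differentiableOn one_ne_zero)⟩

namespace RenCycle

lemma ne_zero_of_comp_qmapR {φ : ℝ → ℝ} {α t : ℝ} (c : RenCycle fun x => φ (qmapR α t x)) :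
    t ≠ 0 := by
  rintro rfl
  have hab := c.lt 0 (zero_lt_one.trans c.one_lt)
  exact hab.ne <| c.maps_inj 0 c.one_lt (left_mem_Icc.mpr hab.le) (right_mem_Icc.mpr hab.le)
    (by simp [qmapR])

lemma exists_length_le (K β : ℝ) {η : ℝ} (hη : 0 < η) :
    ∃ N, 1 ≤ N ∧ ∀ (f : ℝ → ℝ) (α : ℝ) (T : ℕ → RenCycle f) (M : ℕ), UnimodalMap f α K → α ≤ β →
      (∀ n, 1 ≤ n → n < M → (T n).Nested (T (n + 1))) →
      ∀ n, N ≤ n → n < M → ∀ i < (T n).q, (T n).b i - (T n).a i ≤ η := by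
  obtain ⟨τ, hτ, hτE⟩ := exists_one_add_rpow_le β (Real.exp_pos (12 * K))
  set X := spaceConst (Real.exp (12 * K)) τ with hX
  have hX0 : 0 ≤ X := by rw [hX, spaceConst]; positivity
  have hratio : X / (X + 1) < 1 := by rw [div_lt_one (by positivity)]; linarith
  obtain ⟨N, hN⟩ := exists_pow_lt_of_lt_one (half_pos hη) hratio
  refine ⟨N + 1, by omega, fun f α T M U hαβ hT n hn hnM i hi => ?_⟩
  obtain ⟨n, rfl⟩ := Nat.exists_eq_add_of_le' (le_of_add_le_right hn)
  calc (T (n + 1)).b i - (T (n + 1)).a i ≤ 2 * (X / (X + 1)) ^ n :=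
        length_le_of_nested hT U hτ (hτE α hαβ) hX hnM hi
    _ ≤ 2 * (X / (X + 1)) ^ N := by
        gcongr 2 * ?_
        exact pow_le_pow_of_le_one (by positivity) hratio.le (by omega)
    _ ≤ η := by linarith

lemma exists_le_mul_left_or_le_mul_right (β : ℝ) {E : ℝ} (hE : 0 < E) :
    ∃ X > 0, ∀ (f : ℝ → ℝ) (α K η : ℝ) (c c' : RenCycle f), UnimodalMap f α K → α ≤ β →
      c.Nested c' → (∀ i < c.q, c.b i - c.a i ≤ η) → cycleDistortion K η ≤ E →
      ∀ i, i + 1 < c.q → c.b i - c.a i ≤ X * c.a i ∨ c.b i - c.a i ≤ X * -c.b i := by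
  obtain ⟨τ, hτ, hτE⟩ := exists_one_add_rpow_le β hE
  have hX : 0 < spaceConst E τ := by have := hτ.1; rw [spaceConst]; positivity
  refine ⟨spaceConst E τ, hX, fun f α K η c c' U hαβ D hη hKη i hi => ?_⟩
  obtain ⟨u, v, hcollar⟩ := exists_collar U (D.zero_mem_hull U) hη hKη hτ (hτE α hαβ)
    (Nat.lt_of_succ_lt hi)
  exact hcollar.le_mul_left_or_le_mul_right hX.le hi

end RenCycle

theorem stmt10_general (β : ℝ) :
    ∃ ε > 0, ∀ (C : ℝ) (V : Set ℂ), IsOpen V → realSeg ⊆ V →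
      ∃ N : ℕ, 1 ≤ N ∧
        ∀ (α t : ℝ) (φ : ℝ → ℝ) (Φ : ℂ → ℂ) (M : ℕ)
          (T : ℕ → RenCycle (fun x => φ (qmapR α t x))),
          1 < α → α ≤ β → UnimodalPair φ t → C3Bound φ C →
          DifferentiableOn ℂ Φ V → InjOn Φ V → (∀ x ∈ Icc (-1 : ℝ) 1, Φ (x : ℂ) = (φ x : ℂ)) →
          (∀ n, 1 ≤ n → n < M → (T n).Nested (T (n + 1))) →
          ∀ n, N ≤ n → n < M →
            UnivZoomExt φ (Icc (-1) 1 ∩ φ ⁻¹' Icc ((T n).a 0) ((T n).b 0)) ε ∧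
            ∀ k, k + 1 < (T n).q →
              UnivZoomExt (qmapR α t) (Icc ((T n).a k) ((T n).b k)) ε ∧
              UnivZoomExt φ (Icc (-1) 1 ∩ φ ⁻¹' Icc ((T n).a (k + 1)) ((T n).b (k + 1))) ε := by
  obtain ⟨X, hX, hspace⟩ := RenCycle.exists_le_mul_left_or_le_mul_right β two_pos
  obtain ⟨ε, hε, hpower⟩ := exists_univZoomExt_qmapR β hX
  refine ⟨ε, hε, fun C V hV hseg => ?_⟩
  obtain ⟨r, hr, hCr, hball⟩ := exists_ball_subset_of_realSeg_subset hV hseg C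
  set m := (derivStep r)^[⌈16 / r⌉₊] 1
  have hm : 0 < m := iterate_derivStep_pos hr _
  obtain ⟨η, hη, hdist⟩ := exists_cycleDistortion_le (distortionConst m C) one_lt_two
  obtain ⟨N, hN, hshort⟩ := RenCycle.exists_length_le (distortionConst m C) β
    (lt_min hη (show 0 < 2 * m * r / ε by positivity))
  refine ⟨N, hN, fun α t φ Φ M T hα hαβ hφ hC hd hi hext hT n hn hnM => ?_⟩
  have ht : 0 < t := hφ.1.1.lt_of_ne' (T n).ne_zero_of_comp_qmapR
  have H := hφ.univalentExtension hC hr hCr hball hd hi hext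
  have U := (H.c3Bounds hC).unimodalMap hα ⟨ht, hφ.1.2⟩ H.map_neg_one H.map_one
  have hlen := hshort _ α T M U hαβ hT n hn hnM
  have hdiffeo : ∀ k < (T n).q,
      UnivZoomExt φ (Icc (-1) 1 ∩ φ ⁻¹' Icc ((T n).a k) ((T n).b k)) ε := fun k hk =>
    H.univZoomExt hm (fun x hx y hy hxy => (H.c3Bounds hC).mul_sub_le hx hy hxy) hε.le
      ((T n).neg_one_le_a hk) ((T n).lt k hk) ((T n).b_le_one hk)
      ((le_div_iff₀ hε).mp ((hlen k hk).trans (min_le_right _ _)))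
  refine ⟨hdiffeo 0 (T n).q_pos, fun k hk => ⟨?_, hdiffeo (k + 1) hk⟩⟩
  exact hpower α t _ _ (zero_lt_one.trans hα) hαβ ht ((T n).lt k (Nat.lt_of_succ_lt hk)) <|
    hspace _ α _ η (T n) (T (n + 1)) U hαβ (hT n (hN.trans hn) hnM)
      (fun i hi => (hlen i hi).trans (min_le_left _ _)) hdist k hk

/-- **Common domains of univalent extension for the zoomed maps (Theorem 4.3).**
Let `B > 0`, `α > 1`, `C > 0`.  There exist `δ > 0` and `ε > 0` such that for each open
`V ⊇ [-1,1]` there is `N ≥ 1` with: if `(φ, t)` is a unimodal pair, `M`-times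
renormalizable with combinatorics bounded by `B` (witnessed by the tower `T` of cycles
`I^n` of `f = φ ∘ q_t`) for some `M > N`, of critical order `α'` with `|α - α'| < δ`, if
`φ` extends to a univalent map `Φ` on `V` real on the real line, and
`|φ|_{C³([-1,1])} ≤ C`, then for all `N ≤ n < M` the zoomed maps
`φ₀ⁿ = Z_{φ⁻¹(I₁ⁿ)}(φ)`, `q_jⁿ = Z_{I_jⁿ}(q_t)` and `φ_jⁿ = Z_{φ⁻¹(I_{j+1}ⁿ)}(φ)`,
`j = 1, …, q_n - 1`, have univalent extensions to the `ε`-stadium `D_ε`. -/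
theorem stmt10 (B α C : ℝ) (hB : 0 < B) (hα : 1 < α) (hC : 0 < C) :
    ∃ δ > 0, ∃ ε > 0, ∀ V : Set ℂ, IsOpen V → realSeg ⊆ V →
      ∃ N : ℕ, 1 ≤ N ∧
        ∀ (α' t : ℝ) (φ : ℝ → ℝ) (Φ : ℂ → ℂ) (M : ℕ)
          (T : ℕ → RenCycle (fun x => φ (qmapR α' t x))),
          1 < α' → |α - α'| < δ →
          UnimodalPair φ t → C3Bound φ C →
          DifferentiableOn ℂ Φ V → Set.InjOn Φ V →
          (∀ x ∈ Set.Icc (-1 : ℝ) 1, Φ ((x : ℝ) : ℂ) = ((φ x : ℝ) : ℂ)) →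
          (∀ x : ℝ, ((x : ℝ) : ℂ) ∈ V → (Φ ((x : ℝ) : ℂ)).im = 0) →
          IsRenTower (fun x => φ (qmapR α' t x)) B M T →
          N < M →
          ∀ n, N ≤ n → n < M →
            UnivZoomExt φ
              (Set.Icc (-1 : ℝ) 1 ∩ φ ⁻¹' Set.Icc ((T n).a 0) ((T n).b 0)) ε ∧
            ∀ k, k + 1 < (T n).q →
              UnivZoomExt (qmapR α' t) (Set.Icc ((T n).a k) ((T n).b k)) ε ∧
              UnivZoomExt φ
                (Set.Icc (-1 : ℝ) 1 ∩ φ ⁻¹' Set.Icc ((T n).a (k + 1)) ((T n).b (k + 1))) ε := by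
  obtain ⟨ε, hε, h⟩ := stmt10_general (α + 1)
  exact ⟨1, one_pos, ε, hε, fun V hV hseg => (h C V hV hseg).imp fun N hN => ⟨hN.1,
    fun α' t φ Φ M T hα' hαα' hφ hC3 hd hi hext _ hT _ => hN.2 α' t φ Φ M T hα'
      (by linarith [neg_lt_of_abs_lt hαα']) hφ hC3 hd hi hext
      fun n hn hnM => ⟨(hT n hn hnM).1, (hT n hn hnM).2.1, (hT n hn hnM).2.2.2⟩⟩⟩
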